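/- arXiv:0707.1256 — 4 statements merged into one kernel-verified Lean document; each statement's English description precedes it below -/
import Mathlib

section
/- Let f : ℝ → ℝ be smooth. The map C([0,2π],ℝ) → M₂(ℝ), u ↦ Φ_{f'∘u}(2π), is infinitely Fréchet differentiable, and its Fréchet derivative at u is the continuous linear map v ↦ Φ(2π)·∫₀^{2π} f''(u(t))·v(t)·Φ(t)⁻¹·N₀·Φ(t) dt, where Φ = Φ_{f'∘u}. -/
open Real Set Matrix

attribute [local instance] Matrix.normedAddCommGroup Matrix.normedSpace

noncomputable section

/-- The matrix `N₀ = [[0,0],[1,0]]`. -/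
def N0 : Matrix (Fin 2) (Fin 2) ℝ := !![0, 0; 1, 0]

/-- Clamping map `ℝ → [0, 2π]`; it is the identity on `[0, 2π]`. -/
def clamp (t : ℝ) : Icc (0:ℝ) (2 * π) := Set.projIcc 0 (2 * π) (by positivity) t

/-- The compact interval. -/
abbrev II : Type := Icc (0:ℝ) (2 * π)

lemma clamp_cont : Continuous clamp := continuous_projIcc (h := by positivity)

lemma clamp_of_mem {t : ℝ} (ht : t ∈ Icc (0:ℝ) (2 * π)) : clamp t = ⟨t, ht⟩ :=
  Set.projIcc_of_mem _ ht

lemma comp_clamp_cont (y : C(II, ℝ)) : Continuous (fun s : ℝ => y (clamp s)) :=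
  y.continuous.comp clamp_cont

/-- Primitive, as a continuous function. -/
def Jfun (y : C(II, ℝ)) : C(II, ℝ) where
  toFun t := ∫ s in (0:ℝ)..(t:ℝ), y (clamp s)
  continuous_toFun := by
    have : Continuous (fun t : ℝ => ∫ s in (0:ℝ)..t, y (clamp s)) :=
      intervalIntegral.continuous_primitive
        (fun a b => (comp_clamp_cont y).intervalIntegrable a b) 0
    exact this.comp continuous_subtype_val

/-- Volterra operator. -/
def Jop : C(II, ℝ) →L[ℝ] C(II, ℝ) :=
  LinearMap.mkContinuous
    { toFun := Jfun
      map_add' := by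
        intro x y
        ext t
        simp only [Jfun, ContinuousMap.coe_mk, ContinuousMap.add_apply]
        exact intervalIntegral.integral_add
          ((comp_clamp_cont x).intervalIntegrable _ _) ((comp_clamp_cont y).intervalIntegrable _ _)
      map_smul' := by
        intro c y
        ext t
        simp [Jfun] } (2 * π) (by
    intro y
    refine (ContinuousMap.norm_le _ (by positivity)).2 fun t => ?_
    have h := intervalIntegral.norm_integral_le_of_norm_le_const (a := 0) (b := (t:ℝ))
      (f := fun s => y (clamp s)) (C := ‖y‖) (fun s _ => y.norm_coe_le_norm _)
    have ht := t.2
    refine h.trans ?_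
    rw [sub_zero, abs_of_nonneg ht.1, mul_comm]
    exact mul_le_mul_of_nonneg_right ht.2 (norm_nonneg _))

lemma Jop_apply (y : C(II, ℝ)) (t : II) : Jop y t = ∫ s in (0:ℝ)..(t:ℝ), y (clamp s) := rfl

/-- multiplication operator -/
def Mu : C(II, ℝ) →L[ℝ] (C(II, ℝ) →L[ℝ] C(II, ℝ)) := ContinuousLinearMap.mul ℝ C(II, ℝ)

lemma Mu_apply (q y : C(II, ℝ)) : Mu q y = q * y := rfl

/-- exponential weight -/
def wexp (l : ℝ) : C(II, ℝ) where
  toFun t := Real.exp (l * t)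
  continuous_toFun := by fun_prop

lemma wexp_mul (l : ℝ) : wexp l * wexp (-l) = 1 := by
  ext t
  simp [wexp, ← Real.exp_add]

lemma conj_norm (l : ℝ) (hl : 0 < l) : ‖Mu (wexp (-l)) * Jop * Mu (wexp l)‖ ≤ 1 / l := by
  refine ContinuousLinearMap.opNorm_le_bound _ (by positivity) fun y => ?_
  refine (ContinuousMap.norm_le _ (by positivity)).2 fun t => ?_
  have ht := t.2
  change ‖Real.exp (-l * t) * ∫ s in (0:ℝ)..(t:ℝ), (wexp l * y) (clamp s)‖ ≤ _
  have h1 : ‖∫ s in (0:ℝ)..(t:ℝ), (wexp l * y) (clamp s)‖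
      ≤ ∫ s in (0:ℝ)..(t:ℝ), Real.exp (l * s) * ‖y‖ := by
    refine intervalIntegral.norm_integral_le_of_norm_le ht.1 ?_
      (Continuous.intervalIntegrable (by fun_prop) _ _)
    refine Filter.Eventually.of_forall fun s hs => ?_
    rw [clamp_of_mem ⟨hs.1.le, hs.2.trans ht.2⟩]
    rw [ContinuousMap.mul_apply, norm_mul]
    refine mul_le_mul ?_ (y.norm_coe_le_norm _) (norm_nonneg _) (Real.exp_pos _).le
    simp [wexp]
  have h2 : ∫ s in (0:ℝ)..(t:ℝ), Real.exp (l * s) * ‖y‖ = (Real.exp (l * t) - 1) / l * ‖y‖ := by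
    rw [intervalIntegral.integral_mul_const, intervalIntegral.integral_comp_mul_left (fun x => Real.exp x) hl.ne', integral_exp]
    rw [smul_eq_mul, mul_zero, Real.exp_zero]; ring
  rw [norm_mul, Real.norm_of_nonneg (Real.exp_pos _).le]
  calc _ ≤ Real.exp (-l * t) * ((Real.exp (l * t) - 1) / l * ‖y‖) := by
        rw [← h2]; gcongr
    _ = (1 - Real.exp (-l * t)) * (1 / l * ‖y‖) := by
        have : Real.exp (-l * t) * Real.exp (l * t) = 1 := by simp [← Real.exp_add]
        linear_combination (1 / l * ‖y‖) * this
    _ ≤ 1 * (1 / l * ‖y‖) := by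
        gcongr
        linarith [Real.exp_pos (-l * t)]
    _ = _ := one_mul _

/-- `K q = Jop ∘ Jop ∘ (mul q)`. -/
def KK : C(II, ℝ) →L[ℝ] (C(II, ℝ) →L[ℝ] C(II, ℝ)) :=
  (ContinuousLinearMap.compL ℝ C(II, ℝ) C(II, ℝ) C(II, ℝ) (Jop * Jop)).comp Mu

lemma KK_eq (q : C(II, ℝ)) : KK q = Jop * Jop * Mu q := rfl

lemma KK_apply (q y : C(II, ℝ)) : KK q y = Jop (Jop (q * y)) := rfl

lemma Mu_mul (p q : C(II, ℝ)) : Mu p * Mu q = Mu (p * q) := by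
  ext1 y; simp [Mu_apply, mul_assoc]

lemma isUnit_KK (q : C(II, ℝ)) : IsUnit (1 - KK q) := by
  set l : ℝ := ‖q‖ + 1 with hl
  have hl0 : 0 < l := by positivity
  set P := Mu (wexp (-l)) * Jop * Mu (wexp l) with hP
  have h1 : Mu (wexp l) * Mu (wexp (-l)) = 1 := by
    rw [Mu_mul, wexp_mul]; ext1 y; simp [Mu_apply]
  have h2 : Mu (wexp (-l)) * Mu (wexp l) = 1 := by
    rw [Mu_mul, mul_comm (wexp (-l)), wexp_mul]; ext1 y; simp [Mu_apply]
  have h3 : Mu (wexp (-l)) * Mu q = Mu q * Mu (wexp (-l)) := by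
    rw [Mu_mul, Mu_mul, mul_comm (wexp (-l))]
  have hn : ‖P * P * Mu q‖ < 1 := by
    have hp := conj_norm l hl0
    have hq : ‖Mu q‖ ≤ ‖q‖ := ContinuousLinearMap.opNorm_mul_apply_le ℝ _ q
    calc ‖P * P * Mu q‖ ≤ ‖P‖ * ‖P‖ * ‖Mu q‖ :=
        (norm_mul_le (P * P) (Mu q)).trans (mul_le_mul_of_nonneg_right (norm_mul_le P P) (ContinuousLinearMap.opNorm_nonneg (Mu q)))
      _ ≤ (1 / l) * (1 / l) * ‖q‖ := by gcongr
      _ < 1 := by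
        rw [one_div, ← mul_inv, inv_mul_lt_iff₀ (by positivity)]
        nlinarith [norm_nonneg q]
  have hJ : Jop = Mu (wexp l) * P * Mu (wexp (-l)) := by
    calc Jop = (Mu (wexp l) * Mu (wexp (-l))) * Jop * (Mu (wexp l) * Mu (wexp (-l))) := by
          rw [h1]; simp
      _ = _ := by rw [hP]; noncomm_ring
  have hK : 1 - KK q = Mu (wexp l) * (1 - P * P * Mu q) * Mu (wexp (-l)) := by
    have : KK q = Mu (wexp l) * (P * P * Mu q) * Mu (wexp (-l)) := by
      calc KK q = Mu (wexp l) * P * (Mu (wexp (-l)) * Mu (wexp l)) * P * (Mu (wexp (-l)) * Mu q) := by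
            rw [KK_eq]; conv_lhs => rw [hJ]
            noncomm_ring
        _ = _ := by rw [h2, h3]; noncomm_ring
    rw [this, mul_sub, sub_mul, mul_one, h1]
  have hu := isUnit_one_sub_of_norm_lt_one (R := C(II, ℝ) →L[ℝ] C(II, ℝ)) (x := P * P * Mu q) hn
  rw [hK]
  exact ((isUnit_iff_exists.2 ⟨_, h1, h2⟩).mul hu).mul
    (isUnit_iff_exists.2 ⟨_, h2, h1⟩)

/-- Nemytskii operator. -/
def Nem (g : ℝ → ℝ) (hg : Continuous g) (u : C(II, ℝ)) : C(II, ℝ) := (ContinuousMap.mk g hg).comp u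

lemma Nem_hasFDerivAt (g g' : ℝ → ℝ) (hg : Continuous g) (hg' : Continuous g')
    (h : ∀ x, HasDerivAt g (g' x) x) (u : C(II, ℝ)) :
    HasFDerivAt (Nem g hg) (Mu (Nem g' hg' u)) u := by
  rw [hasFDerivAt_iff_isLittleO, Asymptotics.isLittleO_iff]
  intro ε hε
  have hc : Continuous (Nem g' hg') := ContinuousMap.continuous_postcomp _
  obtain ⟨δ, hδ, H⟩ := Metric.continuous_iff.1 hc u ε hε
  filter_upwards [Metric.ball_mem_nhds u hδ] with w hw
  refine (ContinuousMap.norm_le _ (by positivity)).2 fun t => ?_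
  have hwt : |w t - u t| ≤ ‖w - u‖ := (w - u).norm_coe_le_norm t
  have hwd : ‖w - u‖ < δ := by rwa [← dist_eq_norm]
  have key : ∀ x ∈ Set.uIcc (u t) (w t), ‖g' x - g' (u t)‖ ≤ ε := by
    intro x hx
    have hx1 : |x - u t| ≤ |w t - u t| := Set.abs_sub_left_of_mem_uIcc hx
    have h1 := H (u + ContinuousMap.const _ (x - u t)) (by
      rw [dist_eq_norm, add_sub_cancel_left]
      refine lt_of_le_of_lt ?_ hwd
      refine (ContinuousMap.norm_le _ (norm_nonneg _)).2 fun s => ?_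
      exact hx1.trans hwt)
    have h2 := (ContinuousMap.dist_apply_le_dist (f := Nem g' hg' (u + ContinuousMap.const _ (x - u t)))
      (g := Nem g' hg' u) t).trans h1.le
    simpa [Nem, Real.dist_eq] using h2
  have mv := Convex.norm_image_sub_le_of_norm_hasDerivWithin_le
    (f := fun x => g x - g' (u t) * x) (f' := fun x => g' x - g' (u t)) (C := ε)
    (s := Set.uIcc (u t) (w t)) (x := u t) (y := w t)
    (fun x _ => by
      have := (h x).sub ((hasDerivAt_id x).const_mul (g' (u t)))
      rw [mul_one] at this
      exact this.hasDerivWithinAt)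
    key (convex_uIcc _ _) Set.left_mem_uIcc Set.right_mem_uIcc
  have e : (Nem g hg w - Nem g hg u - Mu (Nem g' hg' u) (w - u)) t
      = (g (w t) - g' (u t) * w t) - (g (u t) - g' (u t) * u t) := by
    simp [Nem, Mu_apply]; ring
  rw [e]
  exact mv.trans (mul_le_mul_of_nonneg_left hwt hε.le)

lemma Nem_contDiff_nat (n : ℕ) : ∀ (g : ℝ → ℝ) (hg : ContDiff ℝ (⊤ : ℕ∞) g),
    ContDiff ℝ n (Nem g hg.continuous) := by
  induction n with
  | zero =>
    intro g hg
    exact contDiff_zero.2 (ContinuousMap.continuous_postcomp _)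
  | succ n ih =>
    intro g hg
    have hg' : ContDiff ℝ (⊤ : ℕ∞) (deriv g) := (contDiff_infty_iff_deriv.1 hg).2
    have hd : Differentiable ℝ g := (contDiff_infty_iff_deriv.1 hg).1
    push_cast
    rw [contDiff_succ_iff_hasFDerivAt]
    refine ⟨fun u => Mu (Nem (deriv g) hg'.continuous u), ?_, fun u =>
      Nem_hasFDerivAt g (deriv g) _ _ (fun x => (hd x).hasDerivAt) u⟩
    exact (ContinuousLinearMap.contDiff (𝕜 := ℝ) (E := C(II, ℝ)) (F := C(II, ℝ) →L[ℝ] C(II, ℝ)) Mu).comp (ih (deriv g) hg')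

lemma Nem_contDiff (g : ℝ → ℝ) (hg : ContDiff ℝ (⊤ : ℕ∞) g) :
    ContDiff ℝ (⊤ : ℕ∞) (Nem g hg.continuous) :=
  contDiff_infty.2 fun n => Nem_contDiff_nat n g hg

lemma ftc (F : ℝ → ℝ) (G : C(II, ℝ))
    (h : ∀ t ∈ Icc (0:ℝ) (2 * π), HasDerivWithinAt F (G (clamp t)) (Icc 0 (2 * π)) t) (t : II) :
    F t = F 0 + Jop G t := by
  have ht := t.2
  have hsub : Icc (0:ℝ) t ⊆ Icc 0 (2 * π) := Icc_subset_Icc_right ht.2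
  rw [Jop_apply, intervalIntegral.integral_eq_sub_of_hasDerivAt_of_le ht.1 (f := F)]
  · ring
  · exact fun s hs => ((h s (hsub hs)).mono hsub).continuousWithinAt
  · intro s hs
    exact (h s ⟨hs.1.le, hs.2.le.trans ht.2⟩).hasDerivAt
      (Icc_mem_nhds hs.1 (hs.2.trans_le ht.2))
  · exact (comp_clamp_cont G).intervalIntegrable _ _

lemma prim_deriv (y : C(II, ℝ)) (t : ℝ) :
    HasDerivAt (fun t : ℝ => ∫ s in (0:ℝ)..t, y (clamp s)) (y (clamp t)) t :=
  intervalIntegral.integral_hasDerivAt_right ((comp_clamp_cont y).intervalIntegrable _ _)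
    ((comp_clamp_cont y).stronglyMeasurableAtFilter _ _) (comp_clamp_cont y).continuousAt

lemma prodRule (c d : ℝ) (X Y p r : C(II, ℝ)) (hX : X = c • 1 + Jop p) (hY : Y = d • 1 + Jop r) :
    X * Y = (c * d) • 1 + Jop (p * Y + X * r) := by
  have hXt : ∀ t (ht : t ∈ Icc (0:ℝ) (2 * π)), X (clamp t) = c + ∫ s in (0:ℝ)..t, p (clamp s) := by
    intro t ht
    rw [clamp_of_mem ht, hX]; simp [Jop_apply]
  have hYt : ∀ t (ht : t ∈ Icc (0:ℝ) (2 * π)), Y (clamp t) = d + ∫ s in (0:ℝ)..t, r (clamp s) := by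
    intro t ht
    rw [clamp_of_mem ht, hY]; simp [Jop_apply]
  ext t
  have := ftc (fun t => (c + ∫ s in (0:ℝ)..t, p (clamp s)) * (d + ∫ s in (0:ℝ)..t, r (clamp s)))
    (p * Y + X * r) (by
      intro t ht
      have := ((prim_deriv p t).const_add c).mul ((prim_deriv r t).const_add d)
      simp only [ContinuousMap.add_apply, ContinuousMap.mul_apply]
      rw [hXt t ht, hYt t ht]
      exact this.hasDerivWithinAt) t
  have hc : clamp (t:ℝ) = t := clamp_of_mem t.2
  have h1 := hXt t t.2
  have h2 := hYt t t.2
  rw [hc] at h1 h2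
  simp only [intervalIntegral.integral_same, add_zero] at this
  rw [ContinuousMap.mul_apply, h1, h2, this]
  simp

lemma variation (a0 b0 a1 b1 q y z k : C(II, ℝ))
    (ha0 : a0 = (1:ℝ) • 1 + Jop b0) (hb0 : b0 = (0:ℝ) • 1 + Jop (q * a0))
    (ha1 : a1 = (0:ℝ) • 1 + Jop b1) (hb1 : b1 = (1:ℝ) • 1 + Jop (q * a1))
    (hy : y = Jop z) (hz : z = Jop (q * y + k)) :
    a0 * b1 - a1 * b0 = 1 ∧
    y = a0 * Jop (-(a1 * k)) + a1 * Jop (a0 * k) ∧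
    z = b0 * Jop (-(a1 * k)) + b1 * Jop (a0 * k) := by
  have hy' : y = (0:ℝ) • 1 + Jop z := by rw [zero_smul, zero_add]; exact hy
  have hz' : z = (0:ℝ) • 1 + Jop (q * y + k) := by rw [zero_smul, zero_add]; exact hz
  have hdet : a0 * b1 - a1 * b0 = 1 := by
    rw [prodRule 1 1 a0 b1 _ _ ha0 hb1, prodRule 0 0 a1 b0 _ _ ha1 hb0, add_sub_add_comm, ← map_sub,
      show b0 * b1 + a0 * (q * a1) - (b1 * b0 + a1 * (q * a0)) = 0 by ring]
    simp
  have h1 : Jop (-(a1 * k)) = b1 * y - a1 * z := by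
    rw [prodRule 1 0 b1 y _ _ hb1 hy', prodRule 0 0 a1 z _ _ ha1 hz', add_sub_add_comm, ← map_sub,
      show q * a1 * y + b1 * z - (b1 * z + a1 * (q * y + k)) = -(a1 * k) by ring]
    simp
  have h2 : Jop (a0 * k) = a0 * z - b0 * y := by
    rw [prodRule 1 0 a0 z _ _ ha0 hz', prodRule 0 0 b0 y _ _ hb0 hy', add_sub_add_comm, ← map_sub,
      show b0 * z + a0 * (q * y + k) - (q * a0 * y + b0 * z) = a0 * k by ring]
    simp
  refine ⟨hdet, ?_, ?_⟩
  · rw [h1, h2]; linear_combination (-y) * hdet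
  · rw [h1, h2]; linear_combination (-z) * hdet

lemma smooth_pair (α β : ℝ) (q a b : C(II, ℝ) → C(II, ℝ)) (hq : ContDiff ℝ (⊤ : ℕ∞) q)
    (ha : ∀ u, a u = α • 1 + Jop (b u)) (hb : ∀ u, b u = β • 1 + Jop (q u * a u)) :
    ContDiff ℝ (⊤ : ℕ∞) a ∧ ContDiff ℝ (⊤ : ℕ∞) b := by
  have hJ : ContDiff ℝ (⊤ : ℕ∞) (fun y => Jop y) :=
    ContinuousLinearMap.contDiff (𝕜 := ℝ) (E := C(II, ℝ)) (F := C(II, ℝ)) Jop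
  have hK0 : ContDiff ℝ (⊤ : ℕ∞) (fun p => KK p) :=
    ContinuousLinearMap.contDiff (𝕜 := ℝ) (E := C(II, ℝ)) (F := C(II, ℝ) →L[ℝ] C(II, ℝ)) KK
  have hK : ContDiff ℝ (⊤ : ℕ∞) (fun u => KK (q u)) := hK0.comp hq
  have hI : ContDiff ℝ (⊤ : ℕ∞) (fun u => Ring.inverse (1 - KK (q u))) := by
    rw [contDiff_iff_contDiffAt]
    intro u
    obtain ⟨w, hw⟩ := isUnit_KK (q u)
    have h1 := contDiffAt_ringInverse ℝ (n := (⊤ : ℕ∞)) (R := C(II, ℝ) →L[ℝ] C(II, ℝ)) w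
    rw [hw] at h1
    exact ContDiffAt.comp u h1 (contDiff_const.sub hK).contDiffAt
  have hae : a = fun u => Ring.inverse (1 - KK (q u)) (α • 1 + β • Jop 1) := by
    funext u
    have h1 : (1 - KK (q u)) (a u) = α • 1 + β • Jop 1 := by
      change a u - KK (q u) (a u) = _
      rw [KK_apply]
      have : Jop (q u * a u) = b u - β • 1 := by rw [eq_sub_iff_add_eq, add_comm]; exact (hb u).symm
      rw [this, map_sub, map_smul]
      have := ha u
      rw [this]; abel
    rw [← h1]
    have h2 := Ring.inverse_mul_cancel _ (isUnit_KK (q u))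
    exact (congrArg (fun A : C(II, ℝ) →L[ℝ] C(II, ℝ) => A (a u)) h2).symm
  have hA : ContDiff ℝ (⊤ : ℕ∞) a := by
    rw [hae]
    exact ContDiff.clm_apply hI contDiff_const
  refine ⟨hA, ?_⟩
  have : b = fun u => β • 1 + Jop (q u * a u) := funext hb
  rw [this]
  exact contDiff_const.add (hJ.comp (hq.mul hA))

lemma deriv_pair (α β : ℝ) (q a b : C(II, ℝ) → C(II, ℝ)) (u : C(II, ℝ))
    (q' a' b' : C(II, ℝ) →L[ℝ] C(II, ℝ))
    (hq : HasFDerivAt q q' u) (hA : HasFDerivAt a a' u) (hB : HasFDerivAt b b' u)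
    (ha : ∀ u, a u = α • 1 + Jop (b u)) (hb : ∀ u, b u = β • 1 + Jop (q u * a u))
    (v : C(II, ℝ)) :
    a' v = Jop (b' v) ∧ b' v = Jop (q u * a' v + q' v * a u) := by
  have hJ : ∀ y, HasFDerivAt (fun y => Jop y) Jop y := fun y =>
    ContinuousLinearMap.hasFDerivAt (𝕜 := ℝ) (E := C(II, ℝ)) (F := C(II, ℝ)) Jop
  constructor
  · have h1 : HasFDerivAt a (Jop.comp b') u := by
      have : a = fun u => α • 1 + Jop (b u) := funext ha
      rw [this]
      exact ((hJ (b u)).comp u hB).const_add _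
    rw [hA.unique h1]; rfl
  · have h1 : HasFDerivAt b (Jop.comp (q u • a' + a u • q')) u := by
      have : b = fun u => β • 1 + Jop (q u * a u) := funext hb
      rw [this]
      exact ((hJ (q u * a u)).comp u (hq.mul hA)).const_add _
    rw [hB.unique h1]
    change Jop (q u * a' v + a u * q' v) = _
    rw [mul_comm (a u)]

/-- Proposition 3.1(a). For smooth `f`, the matrix-level nonlinear
monodromy map `u ↦ Φ_{f'∘u}(2π)` on `C([0,2π],ℝ)` is smooth (infinitely Fréchet
differentiable), with Fréchet derivative at `u` given by
`v ↦ Φ(2π)·∫₀^{2π} f''(u(t))·v(t)·Φ(t)⁻¹·N₀·Φ(t) dt`, where `Φ = Φ_{f'∘u}`. -/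
theorem stmt_6 (f : ℝ → ℝ) (hf : ContDiff ℝ (⊤ : ℕ∞) f)
    -- `Φ u` is the fundamental matrix of the potential `f' ∘ u`:
    (Φ : C(Icc (0:ℝ) (2 * π), ℝ) → ℝ → Matrix (Fin 2) (Fin 2) ℝ)
    (hΦ0 : ∀ u, Φ u 0 = 1)
    (hΦ : ∀ u, ∀ t ∈ Icc (0:ℝ) (2 * π), ∀ i j,
      HasDerivWithinAt (fun s => Φ u s i j)
        ((!![0, 1; deriv f (u (clamp t)), 0] * Φ u t) i j) (Icc 0 (2 * π)) t) :
    ContDiff ℝ (⊤ : ℕ∞) (fun u : C(Icc (0:ℝ) (2 * π), ℝ) => Φ u (2 * π)) ∧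
    ∀ u : C(Icc (0:ℝ) (2 * π), ℝ),
      ∃ L : C(Icc (0:ℝ) (2 * π), ℝ) →L[ℝ] Matrix (Fin 2) (Fin 2) ℝ,
        HasFDerivAt (fun u' => Φ u' (2 * π)) L u ∧
        ∀ v : C(Icc (0:ℝ) (2 * π), ℝ),
          L v = Φ u (2 * π) *
            Matrix.of (fun i j : Fin 2 =>
              ∫ t in (0:ℝ)..(2 * π),
                deriv (deriv f) (u (clamp t)) * v (clamp t) *
                  (((Φ u t)⁻¹ * N0 * Φ u t) i j)) := by
  have hf1 : ContDiff ℝ (⊤ : ℕ∞) (deriv f) := (contDiff_infty_iff_deriv.1 hf).2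
  have hf2 : ContDiff ℝ (⊤ : ℕ∞) (deriv (deriv f)) := (contDiff_infty_iff_deriv.1 hf1).2
  have hd1 : Differentiable ℝ (deriv f) := (contDiff_infty_iff_deriv.1 hf1).1
  set q := Nem (deriv f) hf1.continuous with hqdef
  have hq : ContDiff ℝ (⊤ : ℕ∞) q := Nem_contDiff _ hf1
  -- entries as continuous functions
  have hcont : ∀ u i j, Continuous (fun t : II => Φ u t i j) := fun u i j => by
    have : ContinuousOn (fun s => Φ u s i j) (Icc 0 (2 * π)) :=
      fun t ht => (hΦ u t ht i j).continuousWithinAt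
    exact continuousOn_iff_continuous_domRestrict.1 this
  let e : Fin 2 → Fin 2 → C(II, ℝ) → C(II, ℝ) := fun i j u => ⟨fun t => Φ u t i j, hcont u i j⟩
  have he : ∀ i j u (t : ℝ) (ht : t ∈ Icc (0:ℝ) (2 * π)), e i j u (clamp t) = Φ u t i j := by
    intro i j u t ht
    rw [clamp_of_mem ht]; rfl
  have hE0 : ∀ j u, e 0 j u = ((1 : Matrix (Fin 2) (Fin 2) ℝ) 0 j) • 1 + Jop (e 1 j u) := by
    intro j u
    ext t
    have := ftc (fun s => Φ u s 0 j) (e 1 j u) (by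
      intro t ht
      rw [he 1 j u t ht]
      simpa [Matrix.mul_apply, Fin.sum_univ_two] using hΦ u t ht 0 j) t
    rw [hΦ0] at this
    simp only [ContinuousMap.add_apply, ContinuousMap.smul_apply, ContinuousMap.one_apply,
      smul_eq_mul, mul_one]
    exact this
  have hE1 : ∀ j u, e 1 j u = ((1 : Matrix (Fin 2) (Fin 2) ℝ) 1 j) • 1 + Jop (q u * e 0 j u) := by
    intro j u
    ext t
    have := ftc (fun s => Φ u s 1 j) (q u * e 0 j u) (by
      intro t ht
      rw [ContinuousMap.mul_apply, he 0 j u t ht]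
      change HasDerivWithinAt _ (deriv f (u (clamp t)) * Φ u t 0 j) _ _
      simpa [Matrix.mul_apply, Fin.sum_univ_two] using hΦ u t ht 1 j) t
    rw [hΦ0] at this
    simp only [ContinuousMap.add_apply, ContinuousMap.smul_apply, ContinuousMap.one_apply,
      smul_eq_mul, mul_one]
    exact this
  have hsm : ∀ i j, ContDiff ℝ (⊤ : ℕ∞) (e i j) := by
    intro i j
    have := smooth_pair _ _ q (e 0 j) (e 1 j) hq (hE0 j) (hE1 j)
    fin_cases i
    · exact this.1
    · exact this.2
  let T : II := ⟨2 * π, by constructor <;> [positivity; exact le_rfl]⟩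
  let ev : C(II, ℝ) →L[ℝ] ℝ := ContinuousMap.evalCLM ℝ T
  have hev : ∀ i j u, Φ u (2 * π) i j = ev (e i j u) := fun _ _ _ => rfl
  have hC : ContDiff ℝ (⊤ : ℕ∞) (fun u : C(Icc (0:ℝ) (2 * π), ℝ) => Φ u (2 * π)) := by
    refine contDiff_pi.2 fun i => contDiff_pi.2 fun j => ?_
    exact (ContinuousLinearMap.contDiff (𝕜 := ℝ) (E := C(II, ℝ)) (F := ℝ) ev).comp (hsm i j)
  refine ⟨hC, fun u => ?_⟩
  have hL := ((hC.differentiable (by simp)) u).hasFDerivAt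
  refine ⟨_, hL, fun v => ?_⟩
  set L := fderiv ℝ (fun u' => Φ u' (2 * π)) u
  have hD : ∀ i j, HasFDerivAt (e i j) (fderiv ℝ (e i j) u) u := fun i j =>
    (((hsm i j).differentiable (by simp)) u).hasFDerivAt
  have hLe : ∀ i j, L v i j = fderiv ℝ (e i j) u v T := by
    intro i j
    have h1 := hasFDerivAt_pi'.1 (hasFDerivAt_pi'.1 hL i) j
    have h2 : HasFDerivAt (fun u => Φ u (2 * π) i j) (ev.comp (fderiv ℝ (e i j) u)) u :=
      HasFDerivAt.comp u (ContinuousLinearMap.hasFDerivAt (𝕜 := ℝ) (E := C(II, ℝ)) (F := ℝ) ev) (hD i j)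
    exact congrArg (fun A : C(II, ℝ) →L[ℝ] ℝ => A v) (h1.unique h2)
  have hq' := Nem_hasFDerivAt (deriv f) (deriv (deriv f)) hf1.continuous hf2.continuous
    (fun x => (hd1 x).hasDerivAt) u
  set h : C(II, ℝ) := Nem (deriv (deriv f)) hf2.continuous u * v with hh
  have hvar : ∀ j, _ := fun j =>
    have := deriv_pair _ _ q (e 0 j) (e 1 j) u _ _ _ hq' (hD 0 j) (hD 1 j) (hE0 j) (hE1 j) v
    variation (e 0 0 u) (e 1 0 u) (e 0 1 u) (e 1 1 u) (q u) (fderiv ℝ (e 0 j) u v)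
      (fderiv ℝ (e 1 j) u v) (h * e 0 j u) (by simpa using hE0 0 u) (by simpa using hE1 0 u)
      (by simpa using hE0 1 u) (by simpa using hE1 1 u) this.1 this.2
  have hdet : ∀ t ∈ Icc (0:ℝ) (2 * π), (Φ u t).det = 1 := by
    intro t ht
    have := congrArg (fun g : C(II, ℝ) => g (clamp t)) (hvar 0).1
    simp only [ContinuousMap.sub_apply, ContinuousMap.mul_apply, he _ _ u t ht,
      ContinuousMap.one_apply] at this
    rw [Matrix.det_fin_two, this]
  have hinv : ∀ t ∈ Icc (0:ℝ) (2 * π), ∀ j, ((Φ u t)⁻¹ * N0 * Φ u t) 0 j = - (Φ u t 0 1 * Φ u t 0 j)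
      ∧ ((Φ u t)⁻¹ * N0 * Φ u t) 1 j = Φ u t 0 0 * Φ u t 0 j := by
    intro t ht j
    rw [Matrix.inv_def, hdet t ht, Matrix.adjugate_fin_two]
    simp [N0, Matrix.mul_apply, Fin.sum_univ_two]
  have hint0 : ∀ j, (∫ t in (0:ℝ)..(2 * π), deriv (deriv f) (u (clamp t)) * v (clamp t) *
      (((Φ u t)⁻¹ * N0 * Φ u t) 0 j)) = Jop (-(e 0 1 u * (h * e 0 j u))) T := by
    intro j
    rw [Jop_apply]
    refine intervalIntegral.integral_congr fun t ht => ?_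
    rw [uIcc_of_le (by positivity)] at ht
    simp only [(hinv t ht j).1, ContinuousMap.neg_apply, ContinuousMap.mul_apply, he _ _ u t ht, hh]
    simp only [Nem, ContinuousMap.comp_apply, ContinuousMap.coe_mk]
    ring
  have hint1 : ∀ j, (∫ t in (0:ℝ)..(2 * π), deriv (deriv f) (u (clamp t)) * v (clamp t) *
      (((Φ u t)⁻¹ * N0 * Φ u t) 1 j)) = Jop (e 0 0 u * (h * e 0 j u)) T := by
    intro j
    rw [Jop_apply]
    refine intervalIntegral.integral_congr fun t ht => ?_
    rw [uIcc_of_le (by positivity)] at ht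
    simp only [(hinv t ht j).2, ContinuousMap.mul_apply, he _ _ u t ht, hh]
    simp only [Nem, ContinuousMap.comp_apply, ContinuousMap.coe_mk]
    ring
  ext i j
  refine (hLe i j).trans ?_
  rw [Matrix.mul_apply, Fin.sum_univ_two, Matrix.of_apply, Matrix.of_apply, hint0, hint1]
  have h0 := congrArg (fun g : C(II, ℝ) => g T) (hvar j).2.1
  have h1 := congrArg (fun g : C(II, ℝ) => g T) (hvar j).2.2
  fin_cases i
  · exact h0
  · exact h1
end
end

section
/- Let f : ℝ → ℝ be a smooth function with nowhere flat derivative f'. For every E > 0 there exists ε > 0 with the following property: for every continuous u : [0,2π] → ℝ with sup|u| < E, every closed interval I ⊆ (0,2π) of length less than ε such that f''(u(t)) ≠ 0 for all t ∈ I, and all bumps ℓ₁, ℓ₂, ℓ₃ with pairwise disjoint supports contained in I, the three matrices ∫₀^{2π} f''(u(t))·ℓᵢ(t)·Φ(t)⁻¹·N₀·Φ(t) dt, i = 1,2,3, where Φ = Φ_{f'∘u}, are linearly independent in M₂(ℝ). -/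
open Real Set Matrix

/-- A smooth function is nowhere flat if some derivative of order `r' ≤ r` (for a
uniform `r`) is nonzero at every point. -/
def NowhereFlat (g : ℝ → ℝ) : Prop :=
  ∃ r : ℕ, 0 < r ∧ ∀ x : ℝ, ∃ r' : ℕ, 0 < r' ∧ r' ≤ r ∧ iteratedDeriv r' g x ≠ 0

/-- A bump: a smooth nonnegative function, not identically zero, whose support is a
closed subinterval of `I`. -/
def IsBump (ℓ : ℝ → ℝ) (I : Set ℝ) : Prop :=
  ContDiff ℝ (⊤ : ℕ∞) ℓ ∧ (∀ x, 0 ≤ ℓ x) ∧ ℓ ≠ 0 ∧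
    ∃ a b : ℝ, a ≤ b ∧ Icc a b ⊆ I ∧ tsupport ℓ = Icc a b

lemma aux_no_zero (K : ℝ) (hK : 0 < K) (s t : ℝ) (hst : s < t) (hlen : K * (t - s) ^ 2 < 1)
    (y z q : ℝ → ℝ)
    (hy : ∀ x ∈ Icc s t, HasDerivWithinAt y (z x) (Icc s t) x)
    (hz : ∀ x ∈ Icc s t, HasDerivWithinAt z (q x * y x) (Icc s t) x)
    (hq : ∀ x ∈ Icc s t, |q x| ≤ K) (hys : y s = 0) (hzs : z s = 1) : y t ≠ 0 := by
  intro hyt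
  have hyc : ContinuousOn y (Icc s t) := fun x hx => (hy x hx).continuousWithinAt
  have hs : s ∈ Icc s t := ⟨le_rfl, hst.le⟩
  obtain ⟨ξ, hξ, hzξ⟩ : ∃ ξ ∈ Ioo s t, z ξ = 0 := by
    refine exists_hasDerivAt_eq_zero hst hyc (by rw [hys, hyt]) ?_
    intro x hx
    exact (hy x (Ioo_subset_Icc_self hx)).hasDerivAt (Icc_mem_nhds hx.1 hx.2)
  obtain ⟨x0, hx0, hmax⟩ := isCompact_Icc.exists_isMaxOn ⟨s, hs⟩ hyc.abs
  set m := |y x0| with hm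
  have hm0 : 0 ≤ m := abs_nonneg _
  have hym : ∀ x ∈ Icc s t, |y x| ≤ m := fun x hx => hmax hx
  have hd : ∀ x ∈ Icc s t, ∀ x' ∈ Icc s t, |x - x'| ≤ t - s := by
    intro x hx x' hx'
    rw [abs_le]; constructor <;> linarith [hx.1, hx.2, hx'.1, hx'.2]
  have hzb : ∀ x ∈ Icc s t, |z x| ≤ K * m * (t - s) := by
    intro x hx
    have h := (convex_Icc s t).norm_image_sub_le_of_norm_hasDerivWithin_le (C := K * m) hz
      (fun x hx => by
        rw [Real.norm_eq_abs, abs_mul]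
        exact mul_le_mul (hq x hx) (hym x hx) (abs_nonneg _) hK.le)
      (Ioo_subset_Icc_self hξ) hx
    rw [hzξ, sub_zero, Real.norm_eq_abs, Real.norm_eq_abs] at h
    exact h.trans (mul_le_mul_of_nonneg_left (hd _ hx _ (Ioo_subset_Icc_self hξ)) (by positivity))
  have hyb : ∀ x ∈ Icc s t, |y x| ≤ K * m * (t - s) * (t - s) := by
    intro x hx
    have h := (convex_Icc s t).norm_image_sub_le_of_norm_hasDerivWithin_le hy
      (fun x hx => by rw [Real.norm_eq_abs]; exact hzb x hx) hs hx
    rw [hys, sub_zero, Real.norm_eq_abs, Real.norm_eq_abs] at h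
    have : 0 ≤ K * m * (t - s) := by have := sub_pos.2 hst; positivity
    exact h.trans (mul_le_mul_of_nonneg_left (hd _ hx _ hs) this)
  have h1 := hyb x0 hx0
  have hm1 : m = 0 := by
    by_contra hne
    have : 0 < m := lt_of_le_of_ne hm0 (Ne.symm hne)
    nlinarith
  have h2 := hzb s hs
  rw [hm1, hzs] at h2
  norm_num at h2

lemma aux_zero (L : ℝ) (ℓ h : ℝ → ℝ) (a b : ℝ) (ha : 0 < a) (hb : b < L) (hL : 0 < L)
    (hℓ : IsBump ℓ (Icc a b)) (hh : ContinuousOn h (Icc 0 L))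
    (h0 : ∫ t in (0:ℝ)..L, ℓ t * h t = 0) : ∃ t ∈ tsupport ℓ, h t = 0 := by
  obtain ⟨hs, hnn, hne, c, d, hcd, hsub, hsupp⟩ := hℓ
  by_contra hcon
  push Not at hcon
  rw [hsupp] at hcon
  have hsub' : Icc c d ⊆ Icc 0 L := hsub.trans (Icc_subset_Icc ha.le hb.le)
  obtain ⟨x0, hx0⟩ : ∃ x, ℓ x ≠ 0 := Function.ne_iff.1 hne
  have hx0s : x0 ∈ Icc c d := hsupp ▸ subset_tsupport ℓ hx0
  have hx0p : 0 < ℓ x0 := lt_of_le_of_ne (hnn x0) (Ne.symm hx0)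
  have hz : ∀ x, x ∉ Icc c d → ℓ x = 0 := fun x hx =>
    image_eq_zero_of_notMem_tsupport (by rwa [hsupp])
  have key : ∀ k : ℝ → ℝ, ContinuousOn k (Icc 0 L) → (∀ x ∈ Icc c d, k x ≠ 0) → 0 < k x0 →
      0 < ∫ t in (0:ℝ)..L, ℓ t * k t := by
    intro k hk hk0 hkp
    have hpos : ∀ x ∈ Icc c d, 0 < k x := by
      intro x hx
      by_contra hneg
      push Not at hneg
      obtain ⟨w, hw, hw0⟩ := (isPreconnected_Icc (a := c) (b := d)).intermediate_value hx hx0s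
        (hk.mono hsub') ⟨hneg, hkp.le⟩
      exact hk0 w hw hw0
    refine intervalIntegral.integral_pos hL (hs.continuous.continuousOn.mul hk) ?_
      ⟨x0, hsub' hx0s, mul_pos hx0p hkp⟩
    intro x _
    by_cases hx : x ∈ Icc c d
    · exact mul_nonneg (hnn x) (hpos x hx).le
    · simp [hz x hx]
  rcases lt_or_gt_of_ne (hcon x0 hx0s) with hlt | hgt
  · have := key (fun t => - h t) hh.neg (fun x hx => neg_ne_zero.2 (hcon x hx)) (by simpa using hlt)
    simp only [mul_neg, intervalIntegral.integral_neg, h0] at this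
    simp at this
  · have := key h hh hcon hgt
    linarith

lemma aux_vand (p q : Fin 3 → ℝ) (v : Fin 3 → ℝ) (hv : v ≠ 0)
    (h : ∀ i, v 0 * (p i) ^ 2 + v 1 * (p i * q i) + v 2 * (q i) ^ 2 = 0) :
    (p 0 * q 1 - q 0 * p 1) = 0 ∨ (p 0 * q 2 - q 0 * p 2) = 0 ∨ (p 1 * q 2 - q 1 * p 2) = 0 := by
  have hd : (Matrix.of fun i : Fin 3 => ![(p i) ^ 2, p i * q i, (q i) ^ 2]).det = 0 := by
    refine Matrix.exists_mulVec_eq_zero_iff.1 ⟨v, hv, ?_⟩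
    ext i
    have := h i
    simp [Matrix.mulVec, dotProduct, Fin.sum_univ_three]
    linarith
  have : (p 0 * q 1 - q 0 * p 1) * ((p 0 * q 2 - q 0 * p 2) * (p 1 * q 2 - q 1 * p 2)) = 0 := by
    rw [← hd, Matrix.det_fin_three]
    simp
    ring
  simpa only [mul_eq_zero] using this

/-- Proposition 3.2. For `f` smooth with nowhere flat `f'` and any
bound `E` there is `ε > 0` such that for any continuous `u` with `sup|u| < E`, any
closed interval `I ⊆ (0,2π)` of length `< ε` on which `f''∘u` does not vanish, and any
three bumps with pairwise disjoint supports in `I`, the matrices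
`∫₀^{2π} f''(u(t))·ℓᵢ(t)·Φ(t)⁻¹·N₀·Φ(t) dt` are linearly independent. -/
theorem stmt_9 (f : ℝ → ℝ) (hf : ContDiff ℝ (⊤ : ℕ∞) f) (hnf : NowhereFlat (deriv f))
    (E : ℝ) (hE : 0 < E) :
    ∃ ε > 0, ∀ u : ℝ → ℝ, ContinuousOn u (Icc 0 (2 * π)) →
      (∀ t ∈ Icc (0:ℝ) (2 * π), |u t| < E) →
      ∀ a b : ℝ, 0 < a → a ≤ b → b < 2 * π → b - a < ε →
      (∀ t ∈ Icc a b, deriv (deriv f) (u t) ≠ 0) →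
      ∀ ℓ₁ ℓ₂ ℓ₃ : ℝ → ℝ,
        IsBump ℓ₁ (Icc a b) → IsBump ℓ₂ (Icc a b) → IsBump ℓ₃ (Icc a b) →
        Disjoint (tsupport ℓ₁) (tsupport ℓ₂) →
        Disjoint (tsupport ℓ₁) (tsupport ℓ₃) →
        Disjoint (tsupport ℓ₂) (tsupport ℓ₃) →
        -- `Φ` the fundamental matrix of the potential `f' ∘ u` on `[0,2π]`:
        ∀ Φ : ℝ → Matrix (Fin 2) (Fin 2) ℝ,
          Φ 0 = 1 →
          (∀ t ∈ Icc (0:ℝ) (2 * π), ∀ i j, HasDerivWithinAt (fun s => Φ s i j)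
            ((!![0, 1; deriv f (u t), 0] * Φ t) i j) (Icc 0 (2 * π)) t) →
          LinearIndependent ℝ
            ![Matrix.of fun i j : Fin 2 => ∫ t in (0:ℝ)..(2 * π),
                deriv (deriv f) (u t) * ℓ₁ t * (((Φ t)⁻¹ * N0 * Φ t) i j),
              Matrix.of fun i j : Fin 2 => ∫ t in (0:ℝ)..(2 * π),
                deriv (deriv f) (u t) * ℓ₂ t * (((Φ t)⁻¹ * N0 * Φ t) i j),
              Matrix.of fun i j : Fin 2 => ∫ t in (0:ℝ)..(2 * π),
                deriv (deriv f) (u t) * ℓ₃ t * (((Φ t)⁻¹ * N0 * Φ t) i j)] := by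
  have hf' : ContDiff ℝ (⊤ : ℕ∞) (deriv f) := by
    exact ((contDiff_infty_iff_deriv (𝕜 := ℝ)).1 hf).2
  have hf'' : ContDiff ℝ (⊤ : ℕ∞) (deriv (deriv f)) := by
    exact ((contDiff_infty_iff_deriv (𝕜 := ℝ)).1 hf').2
  obtain ⟨K0, hK0⟩ := (isCompact_Icc (a := -E) (b := E)).exists_bound_of_continuousOn
    hf'.continuous.continuousOn
  set K := |K0| + 1 with hKdef
  have hK : 0 < K := by positivity
  have hKb : ∀ x ∈ Icc (-E) E, |deriv f x| ≤ K := fun x hx =>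
    (hK0 x hx).trans ((le_abs_self _).trans (by linarith))
  refine ⟨1 / (K + 1), by positivity, ?_⟩
  intro u hu huE a b ha hab hb hlen hnz ℓ₁ ℓ₂ ℓ₃ h1 h2 h3 d12 d13 d23 Φ hΦ0 hΦ
  have hpi : (0:ℝ) < 2 * π := by positivity
  have D00 : ∀ t ∈ Icc (0:ℝ) (2 * π), HasDerivWithinAt (fun s => Φ s 0 0) (Φ t 1 0)
      (Icc 0 (2 * π)) t := fun t ht => by
    simpa [Matrix.mul_apply, Fin.sum_univ_two] using hΦ t ht 0 0
  have D01 : ∀ t ∈ Icc (0:ℝ) (2 * π), HasDerivWithinAt (fun s => Φ s 0 1) (Φ t 1 1)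
      (Icc 0 (2 * π)) t := fun t ht => by
    simpa [Matrix.mul_apply, Fin.sum_univ_two] using hΦ t ht 0 1
  have D10 : ∀ t ∈ Icc (0:ℝ) (2 * π), HasDerivWithinAt (fun s => Φ s 1 0)
      (deriv f (u t) * Φ t 0 0) (Icc 0 (2 * π)) t := fun t ht => by
    simpa [Matrix.mul_apply, Fin.sum_univ_two] using hΦ t ht 1 0
  have D11 : ∀ t ∈ Icc (0:ℝ) (2 * π), HasDerivWithinAt (fun s => Φ s 1 1)
      (deriv f (u t) * Φ t 0 1) (Icc 0 (2 * π)) t := fun t ht => by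
    simpa [Matrix.mul_apply, Fin.sum_univ_two] using hΦ t ht 1 1
  have hdet : ∀ t ∈ Icc (0:ℝ) (2 * π), Φ t 0 0 * Φ t 1 1 - Φ t 0 1 * Φ t 1 0 = 1 := by
    intro t ht
    have h := (convex_Icc (0:ℝ) (2 * π)).norm_image_sub_le_of_norm_hasDerivWithin_le (C := 0)
      (fun x hx => ((D00 x hx).mul (D11 x hx)).sub ((D01 x hx).mul (D10 x hx)))
      (fun x hx => by
        rw [norm_le_zero_iff]
        ring) ⟨le_rfl, hpi.le⟩ ht
    rw [zero_mul, norm_le_zero_iff] at h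
    simp [hΦ0] at h
    linarith
  -- conjugated matrix
  have hconj : ∀ t ∈ Icc (0:ℝ) (2 * π), (Φ t)⁻¹ * N0 * Φ t =
      !![-(Φ t 0 0 * Φ t 0 1), -(Φ t 0 1)^2; (Φ t 0 0)^2, Φ t 0 0 * Φ t 0 1] := by
    intro t ht
    have hd : (Φ t).det = 1 := by rw [Matrix.det_fin_two]; exact hdet t ht
    rw [Matrix.inv_def, hd, Matrix.adjugate_fin_two]
    ext i j
    fin_cases i <;> fin_cases j <;>
      simp [N0, Matrix.mul_apply, Fin.sum_univ_two] <;> ring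
  have C0 : ContinuousOn (fun t => Φ t 0 0) (Icc 0 (2 * π)) :=
    fun t ht => (D00 t ht).continuousWithinAt
  have C1 : ContinuousOn (fun t => Φ t 0 1) (Icc 0 (2 * π)) :=
    fun t ht => (D01 t ht).continuousWithinAt
  have Cg : ContinuousOn (fun t => deriv (deriv f) (u t)) (Icc 0 (2 * π)) :=
    hf''.continuous.comp_continuousOn hu
  -- no two conjugate points in `I`
  have hW : ∀ s ∈ Icc a b, ∀ t ∈ Icc a b, s < t → Φ s 0 0 * Φ t 0 1 - Φ s 0 1 * Φ t 0 0 ≠ 0 := by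
    intro s hs t ht hst
    have hsub : Icc s t ⊆ Icc 0 (2 * π) :=
      Icc_subset_Icc (ha.le.trans hs.1) (ht.2.trans hb.le)
    refine aux_no_zero K hK s t hst ?_ (fun x => Φ s 0 0 * Φ x 0 1 - Φ s 0 1 * Φ x 0 0)
      (fun x => Φ s 0 0 * Φ x 1 1 - Φ s 0 1 * Φ x 1 0) (fun x => deriv f (u x)) ?_ ?_ ?_ ?_ ?_
    · have h1 : t - s < 1 / (K + 1) := by linarith [hs.1, ht.2]
      rw [lt_div_iff₀ (by positivity)] at h1
      have h0 : 0 < t - s := sub_pos.2 hst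
      nlinarith [mul_pos hK h0]
    · intro x hx
      exact (((D01 x (hsub hx)).const_mul _).sub ((D00 x (hsub hx)).const_mul _)).mono hsub
    · intro x hx
      refine ((((D11 x (hsub hx)).const_mul (Φ s 0 0)).sub
        ((D10 x (hsub hx)).const_mul (Φ s 0 1))).mono hsub).congr_deriv ?_
      ring
    · intro x hx
      exact hKb _ (abs_le.1 (huE x (hsub hx)).le)
    · ring
    · exact hdet s (hsub ⟨le_rfl, hst.le⟩)
  have hW' : ∀ s ∈ Icc a b, ∀ t ∈ Icc a b, s ≠ t →
      Φ s 0 0 * Φ t 0 1 - Φ s 0 1 * Φ t 0 0 ≠ 0 := by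
    intro s hs t ht hst
    rcases lt_or_gt_of_ne hst with h | h
    · exact hW s hs t ht h
    · intro h0
      exact hW t ht s hs h (by linarith)
  have hII : ∀ ℓ, IsBump ℓ (Icc a b) → tsupport ℓ ⊆ Icc a b := by
    rintro ℓ ⟨-, -, -, c, d, -, hcd, hs⟩
    rwa [hs]
  -- the integrals
  have hint : ∀ (ℓ : ℝ → ℝ) (i j : Fin 2), (∫ t in (0:ℝ)..(2 * π),
      deriv (deriv f) (u t) * ℓ t * (((Φ t)⁻¹ * N0 * Φ t) i j)) = ∫ t in (0:ℝ)..(2 * π),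
      deriv (deriv f) (u t) * ℓ t * ((!![-(Φ t 0 0 * Φ t 0 1), -(Φ t 0 1)^2;
        (Φ t 0 0)^2, Φ t 0 0 * Φ t 0 1] : Matrix (Fin 2) (Fin 2) ℝ) i j) := by
    intro ℓ i j
    refine intervalIntegral.integral_congr ?_
    intro t ht
    rw [uIcc_of_le hpi.le] at ht
    simp only [hconj t ht]
  let L : Fin 3 → ℝ → ℝ := ![ℓ₁, ℓ₂, ℓ₃]
  have hL : ∀ i, IsBump (L i) (Icc a b) := by
    intro i; fin_cases i
    exacts [h1, h2, h3]
  let Q : Fin 3 → ℝ → ℝ := ![fun t => (Φ t 0 0)^2, fun t => Φ t 0 0 * Φ t 0 1,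
    fun t => (Φ t 0 1)^2]
  have hQ : ∀ k, ContinuousOn (Q k) (Icc 0 (2 * π)) := by
    intro k; fin_cases k
    exacts [C0.pow 2, C0.mul C1, C1.pow 2]
  let M : Matrix (Fin 3) (Fin 3) ℝ := Matrix.of fun i k => ∫ t in (0:ℝ)..(2 * π),
    deriv (deriv f) (u t) * L i t * Q k t
  have hMdet : M.det ≠ 0 := by
    intro hM
    obtain ⟨v, hv, hMv⟩ := Matrix.exists_mulVec_eq_zero_iff.2 hM
    have hz : ∀ i, ∃ t ∈ tsupport (L i), v 0 * (Φ t 0 0)^2 + v 1 * (Φ t 0 0 * Φ t 0 1)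
        + v 2 * (Φ t 0 1)^2 = 0 := by
      intro i
      have hCk : ∀ k, ContinuousOn (fun t => deriv (deriv f) (u t) * L i t * Q k t)
        (uIcc 0 (2 * π)) := by
        intro k
        rw [uIcc_of_le hpi.le]
        exact (Cg.mul (hL i).1.continuous.continuousOn).mul (hQ k)
      have hIk := fun k => (hCk k).intervalIntegrable (μ := MeasureTheory.volume)
      obtain ⟨t, ht, h0⟩ := aux_zero (2 * π) (L i) (fun t => deriv (deriv f) (u t) *
        (v 0 * (Φ t 0 0)^2 + v 1 * (Φ t 0 0 * Φ t 0 1) + v 2 * (Φ t 0 1)^2)) a b ha hb hpi (hL i)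
        (Cg.mul (((continuousOn_const.mul (C0.pow 2)).add
          (continuousOn_const.mul (C0.mul C1))).add (continuousOn_const.mul (C1.pow 2)))) (by
          have := congrFun hMv i
          simp only [Matrix.mulVec, dotProduct, Fin.sum_univ_three, M, Matrix.of_apply,
            Pi.zero_apply] at this
          rw [← intervalIntegral.integral_mul_const, ← intervalIntegral.integral_mul_const,
            ← intervalIntegral.integral_mul_const,
            ← intervalIntegral.integral_add ((hIk 0).mul_const _) ((hIk 1).mul_const _),
            ← intervalIntegral.integral_add (((hIk 0).mul_const _).add ((hIk 1).mul_const _))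
              ((hIk 2).mul_const _)] at this
          rw [← this]
          congr 1
          ext t
          simp [Q]
          ring)
      refine ⟨t, ht, ?_⟩
      exact (mul_eq_zero.1 h0).resolve_left (hnz t (hII _ (hL i) ht))
    choose T hT hT0 using hz
    have hTI : ∀ i, T i ∈ Icc a b := fun i => hII _ (hL i) (hT i)
    rcases aux_vand (fun i => Φ (T i) 0 0) (fun i => Φ (T i) 0 1) v hv hT0 with h | h | h
    · exact hW' _ (hTI 0) _ (hTI 1) (d12.ne_of_mem (hT 0) (hT 1)) h
    · exact hW' _ (hTI 0) _ (hTI 2) (d13.ne_of_mem (hT 0) (hT 2)) h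
    · exact hW' _ (hTI 1) _ (hTI 2) (d23.ne_of_mem (hT 1) (hT 2)) h
  simp only [hint]
  rw [Fintype.linearIndependent_iff]
  intro g hg
  have hgM : g ᵥ* M = 0 := by
    have e00 := congrFun (congrFun hg 1) 0
    have e11 := congrFun (congrFun hg 1) 1
    have e01 := congrFun (congrFun hg 0) 1
    simp [Fin.sum_univ_three] at e00 e11 e01
    ext k
    fin_cases k
    · simpa [Matrix.vecMul, dotProduct, Fin.sum_univ_three, M, L, Q] using e00
    · simpa [Matrix.vecMul, dotProduct, Fin.sum_univ_three, M, L, Q] using e11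
    · simp [Matrix.vecMul, dotProduct, Fin.sum_univ_three, M, L, Q]
      linarith
  have hg0 : g = 0 := by
    by_contra hne
    exact hMdet (Matrix.exists_vecMul_eq_zero_iff.1 ⟨g, hne, hgM⟩)
  intro i
  rw [hg0]; rfl
end

section
/- Let f : ℝ → ℝ be a smooth function such that f' is surjective and nowhere flat. Then for every A ∈ SL(2,ℝ) and every α > 0 for which the first row of A satisfies (A₁₁, A₁₂) = r·(cos α, sin α) for some r > 0, there exists a nonconstant smooth 2π-periodic function u : ℝ → ℝ with Φ_{f'∘u}(2π) = A and θ_{f'∘u}(2π) = α. -/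
open Real Set Matrix

/-- `Φ` is the fundamental matrix of the potential `q`: `Φ(0) = I` and
`Φ' = [[0,1],[q,0]]·Φ`. -/
def IsFundMatrix (q : ℝ → ℝ) (Φ : ℝ → Matrix (Fin 2) (Fin 2) ℝ) : Prop :=
  Φ 0 = 1 ∧
    ∀ t : ℝ, ∀ i j, HasDerivAt (fun s => Φ s i j) ((!![0, 1; q t, 0] * Φ t) i j) t

/-- `θ` is the continuous argument lift on `[0,2π]` of the first row of `Φ`. -/
def IsArgLift (Φ : ℝ → Matrix (Fin 2) (Fin 2) ℝ) (θ : ℝ → ℝ) : Prop :=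
  ContinuousOn θ (Icc 0 (2 * π)) ∧ θ 0 = 0 ∧
    ∀ t ∈ Icc (0:ℝ) (2 * π),
      Φ t 0 0 = Real.sqrt ((Φ t 0 0) ^ 2 + (Φ t 0 1) ^ 2) * Real.cos (θ t) ∧
      Φ t 0 1 = Real.sqrt ((Φ t 0 0) ^ 2 + (Φ t 0 1) ^ 2) * Real.sin (θ t)


def IsSol (q y z : ℝ → ℝ) : Prop :=
  ∀ t, HasDerivAt y (z t) t ∧ HasDerivAt z (q t * y t) t

lemma angle_ode (q : ℝ → ℝ) (hq : Continuous q) (Q : ℝ) (hQ : ∀ t, |q t| ≤ Q) (t0 x0 : ℝ) :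
    ∃ φ : ℝ → ℝ, φ t0 = x0 ∧
      ∀ t, HasDerivAt φ (q t * cos (φ t) ^ 2 - sin (φ t) ^ 2) t := by
  have hQ0 : 0 ≤ Q := (abs_nonneg _).trans (hQ 0)
  set v : ℝ → ℝ → ℝ := fun t x => q t * cos x ^ 2 - sin x ^ 2 with hv
  set K : NNReal := ⟨Q + 1, by positivity⟩ with hK
  have hlip : ∀ t, LipschitzWith K (v t) := by
    intro t
    have hd : ∀ x, HasDerivAt (v t) (-((q t + 1) * sin (2 * x))) x := by
      intro x
      have h1 := (((hasDerivAt_cos x).pow 2).const_mul (q t)).sub ((hasDerivAt_sin x).pow 2)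
      refine h1.congr_deriv ?_
      rw [sin_two_mul]; push_cast; ring
    refine lipschitzWith_of_nnnorm_deriv_le (fun x => (hd x).differentiableAt) ?_
    intro x
    rw [(hd x).deriv]
    rw [← NNReal.coe_le_coe, coe_nnnorm, norm_neg, norm_mul, Real.norm_eq_abs, Real.norm_eq_abs]
    have h2 : |q t + 1| ≤ Q + 1 := (abs_add_le _ _).trans (by simpa using hQ t)
    have h3 := abs_sin_le_one (2 * x)
    calc |q t + 1| * |sin (2 * x)| ≤ (Q + 1) * 1 := by gcongr
      _ = Q + 1 := by ring
  have hbd : ∀ t x, ‖v t x‖ ≤ K := by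
    intro t x
    have h2 := abs_le.1 (hQ t)
    have h3 := sin_sq_add_cos_sq x
    have : |v t x| ≤ Q + 1 := by
      rw [abs_le, hv]
      constructor <;> nlinarith [sq_nonneg (sin x), sq_nonneg (cos x)]
    exact this
  have hex : ∀ n : ℕ, ∃ f : ℝ → ℝ, f t0 = x0 ∧
      ∀ t ∈ Ioo (t0 - (n+1)) (t0 + (n+1)), HasDerivAt f (v t (f t)) t := by
    intro n
    have hp : IsPicardLindelof v (tmin := t0 - (n+1)) (tmax := t0 + (n+1))
        ⟨t0, by constructor <;> linarith [n.cast_nonneg (α := ℝ)]⟩ x0 (K * (n+1)) 0 K K := by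
      constructor
      · intro t _; exact (hlip t).lipschitzOnWith
      · intro x _; exact Continuous.continuousOn (by fun_prop)
      · intro t _ x _; exact hbd t x
      · simp
    obtain ⟨f, hf0, hf⟩ := hp.exists_eq_forall_mem_Icc_hasDerivWithinAt₀
    refine ⟨f, hf0, fun t ht => ?_⟩
    exact (hf t (Ioo_subset_Icc_self ht)).hasDerivAt (Icc_mem_nhds ht.1 ht.2)
  choose f hf0 hf using hex
  have hagree : ∀ n m : ℕ, n ≤ m → ∀ t ∈ Ioo (t0 - (n+1)) (t0 + (n+1)), f n t = f m t := by
    intro n m hnm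
    have hnm' : (n:ℝ) ≤ m := by exact_mod_cast hnm
    have := ODE_solution_unique_of_mem_Ioo (v := v) (s := fun _ => univ) (K := K)
      (f := f n) (g := f m) (a := t0 - (n+1)) (b := t0 + (n+1)) (t₀ := t0)
      (fun t _ => (hlip t).lipschitzOnWith)
      (by constructor <;> linarith [n.cast_nonneg (α := ℝ)])
      (fun t ht => ⟨hf n t ht, trivial⟩)
      (fun t ht => ⟨hf m t ⟨by linarith [ht.1], by linarith [ht.2]⟩, trivial⟩)
      (by rw [hf0, hf0])
    exact this
  refine ⟨fun t => f ⌈|t - t0|⌉₊ t, by simp [hf0], fun t => ?_⟩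
  set m := ⌈|t - t0|⌉₊ with hm
  have hmem : t ∈ Ioo (t0 - (m+1)) (t0 + (m+1)) := by
    have := abs_le.1 (Nat.le_ceil |t - t0|)
    constructor <;> linarith [this.1, this.2]
  have hev : (fun s => f ⌈|s - t0|⌉₊ s) =ᶠ[nhds t] f (m+1) := by
    filter_upwards [Ioo_mem_nhds hmem.1 hmem.2] with s hs
    apply hagree
    · apply Nat.ceil_le.2
      push_cast
      rw [abs_le]; constructor <;> linarith [hs.1, hs.2]
    · have := abs_le.1 (Nat.le_ceil |s - t0|)
      constructor <;> linarith [this.1, this.2]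
  have h1 := hf (m+1) t ⟨by push_cast; linarith [hmem.1], by push_cast; linarith [hmem.2]⟩
  refine (h1.congr_of_eventuallyEq hev).congr_deriv ?_
  rw [← hagree m (m+1) (by omega) t hmem]

lemma sol_basic (q : ℝ → ℝ) (hq : Continuous q) (Q : ℝ) (hQ : ∀ t, |q t| ≤ Q) (t0 x0 : ℝ) :
    ∃ y z : ℝ → ℝ, IsSol q y z ∧ y t0 = cos x0 ∧ z t0 = sin x0 := by
  obtain ⟨φ, h0, hφ⟩ := angle_ode q hq Q hQ t0 x0
  have hφc : Continuous φ := continuous_iff_continuousAt.2 fun t => (hφ t).continuousAt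
  set ρ : ℝ → ℝ := fun t => exp (∫ s in t0..t, (1 + q s) * (sin (φ s) * cos (φ s))) with hρ
  have hρd : ∀ t, HasDerivAt ρ (ρ t * ((1 + q t) * (sin (φ t) * cos (φ t)))) t := by
    intro t
    have hc : Continuous fun s => (1 + q s) * (sin (φ s) * cos (φ s)) := by fun_prop
    exact (intervalIntegral.integral_hasDerivAt_right (hc.intervalIntegrable _ _)
      (hc.stronglyMeasurableAtFilter _ _) hc.continuousAt).exp
  refine ⟨fun t => ρ t * cos (φ t), fun t => ρ t * sin (φ t), fun t => ⟨?_, ?_⟩, ?_, ?_⟩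
  · refine ((hρd t).mul (hφ t).cos).congr_deriv ?_
    have := sin_sq_add_cos_sq (φ t)
    have h2 : sin (φ t) ^ 2 = 1 - cos (φ t) ^ 2 := by linarith
    linear_combination (ρ t * sin (φ t) ) * this
  · refine ((hρd t).mul (hφ t).sin).congr_deriv ?_
    have := sin_sq_add_cos_sq (φ t)
    linear_combination (ρ t * cos (φ t) * q t) * this
  · simp [hρ, h0]
  · simp [hρ, h0]

lemma IsSol.comb {q y z y' z' : ℝ → ℝ} (h : IsSol q y z) (h' : IsSol q y' z') (a b : ℝ) :
    IsSol q (fun t => a * y t + b * y' t) (fun t => a * z t + b * z' t) := fun t =>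
  ⟨((h t).1.const_mul a).add ((h' t).1.const_mul b),
    (((h t).2.const_mul a).add ((h' t).2.const_mul b)).congr_deriv (by ring)⟩

lemma sol_exists (q : ℝ → ℝ) (hq : Continuous q) (Q : ℝ) (hQ : ∀ t, |q t| ≤ Q) (t0 a b : ℝ) :
    ∃ y z : ℝ → ℝ, IsSol q y z ∧ y t0 = a ∧ z t0 = b := by
  obtain ⟨y, z, h, h1, h2⟩ := sol_basic q hq Q hQ t0 0
  obtain ⟨y', z', h', h1', h2'⟩ := sol_basic q hq Q hQ t0 (π/2)
  exact ⟨_, _, h.comb h' a b, by simp [h1, h1'], by simp [h2, h2']⟩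

lemma mono_aux {F F' : ℝ → ℝ} {a b : ℝ} (hF : ∀ t, HasDerivAt F (F' t) t)
    (h : ∀ t ∈ Icc a b, 0 ≤ F' t) : MonotoneOn F (Icc a b) := by
  apply monotoneOn_of_deriv_nonneg (convex_Icc a b)
  · exact fun t _ => (hF t).continuousAt.continuousWithinAt
  · exact fun t _ => (hF t).differentiableAt.differentiableWithinAt
  · intro t ht
    rw [(hF t).deriv]
    exact h t (interior_subset ht)

lemma wronsk_const {q q' y z y' z' : ℝ → ℝ} {a b : ℝ} (h : IsSol q y z) (h' : IsSol q' y' z')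
    (hq : ∀ t ∈ Icc a b, q t = q' t) (t : ℝ) (ht : t ∈ Icc a b) :
    y t * z' t - z t * y' t = y a * z' a - z a * y' a := by
  have hd : ∀ t, HasDerivAt (fun t => y t * z' t - z t * y' t) ((q' t - q t) * (y t * y' t)) t :=
    fun t => (((h t).1.mul (h' t).2).sub ((h t).2.mul (h' t).1)).congr_deriv (by ring)
  refine constant_of_has_deriv_right_zero (f := fun t => y t * z' t - z t * y' t)
    (fun t _ => (hd t).continuousAt.continuousWithinAt) ?_ t ht
  intro t ht
  have := (hd t).hasDerivWithinAt (s := Ici t)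
  rwa [hq t (Ico_subset_Icc_self ht), sub_self, zero_mul] at this

lemma wronsk_const' {q y z y' z' : ℝ → ℝ} (h : IsSol q y z) (h' : IsSol q y' z') (s t : ℝ) :
    y t * z' t - z t * y' t = y s * z' s - z s * y' s := by
  rcases le_total s t with hst | hst
  · exact wronsk_const h h' (fun _ _ => rfl) t ⟨hst, le_rfl⟩
  · exact (wronsk_const h h' (fun _ _ => rfl) s ⟨hst, le_rfl⟩).symm

lemma sol_unique {q q' e1 f1 e2 f2 y z : ℝ → ℝ} {a b : ℝ} (h1 : IsSol q e1 f1)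
    (h2 : IsSol q e2 f2) (hW : e1 a * f2 a - f1 a * e2 a ≠ 0) (hy : IsSol q' y z)
    (hq : ∀ t ∈ Icc a b, q' t = q t) (hya : y a = e1 a) (hza : z a = f1 a)
    (t : ℝ) (ht : t ∈ Icc a b) : y t = e1 t ∧ z t = f1 t := by
  have w1 := wronsk_const hy h1 hq t ht
  have w2 := wronsk_const hy h2 hq t ht
  have w3 := wronsk_const h1 h2 (fun _ _ => rfl) t ht
  rw [hya, hza] at w1 w2
  have w1' : y t * f1 t - z t * e1 t = 0 := by rw [w1]; ring
  rw [← w3] at w2 hW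
  constructor
  · apply mul_right_cancel₀ hW
    linear_combination e1 t * w2 - e2 t * w1'
  · apply mul_right_cancel₀ hW
    linear_combination f1 t * w2 - f2 t * w1'

lemma near_lemma {qs q v1 w1 v2 w2 y z : ℝ → ℝ} {a b K η : ℝ} (hqs : Continuous qs)
    (hq : Continuous q) (h1 : IsSol qs v1 w1) (h2 : IsSol qs v2 w2)
    (hW : v1 b * w2 b - w1 b * v2 b = 1) (hK : ∀ t ∈ Icc a b, v1 t ^ 2 + v2 t ^ 2 ≤ K)
    (hy : IsSol q y z) (hη : ∫ s in a..b, |q s - qs s| ≤ η) (hKη : K * η ≤ 1) (hab : a ≤ b)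
    (hN : (w2 b * y b - v2 b * z b) ^ 2 + (v1 b * z b - w1 b * y b) ^ 2 = 1)
    (t : ℝ) (ht : t ∈ Icc a b) :
    |(w2 t * y t - v2 t * z t) - (w2 b * y b - v2 b * z b)| ≤ 2 * K * η ∧
    |(v1 t * z t - w1 t * y t) - (v1 b * z b - w1 b * y b)| ≤ 2 * K * η := by
  have hb : b ∈ Icc a b := ⟨hab, le_rfl⟩
  have hK0 : 0 ≤ K := (by positivity : (0:ℝ) ≤ v1 b ^ 2 + v2 b ^ 2).trans (hK b hb)
  set p : ℝ → ℝ := fun t => w2 t * y t - v2 t * z t with hp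
  set r : ℝ → ℝ := fun t => v1 t * z t - w1 t * y t with hr
  set δ : ℝ → ℝ := fun t => q t - qs t with hδ
  set I : ℝ → ℝ := fun t => ∫ s in a..t, |δ s| with hI
  have hW' : ∀ t, v1 t * w2 t - w1 t * v2 t = 1 := fun t => by
    rw [wronsk_const' h1 h2 b t, hW]
  have hyv : ∀ t, y t = v1 t * p t + v2 t * r t := fun t => by
    simp only [hp, hr]; linear_combination (- y t) * hW' t
  have hpd : ∀ t, HasDerivAt p (-δ t * (v2 t * y t)) t := fun t =>
    (((h2 t).2.mul (hy t).1).sub ((h2 t).1.mul (hy t).2)).congr_deriv (by simp only [hδ]; ring)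
  have hrd : ∀ t, HasDerivAt r (δ t * (v1 t * y t)) t := fun t =>
    (((h1 t).1.mul (hy t).2).sub ((h1 t).2.mul (hy t).1)).congr_deriv (by simp only [hδ]; ring)
  have hId : ∀ t, HasDerivAt I (|δ t|) t := by
    intro t
    have hc : Continuous fun s => |δ s| := by fun_prop
    exact (intervalIntegral.integral_hasDerivAt_right (hc.intervalIntegrable _ _)
      (hc.stronglyMeasurableAtFilter _ _) hc.continuousAt)
  have hImono : MonotoneOn I (Icc a b) := mono_aux hId (fun t _ => abs_nonneg _)
  have hIa : I a = 0 := by simp [hI]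
  have hIb : ∀ t ∈ Icc a b, I b - I t ≤ η ∧ 0 ≤ I b - I t := fun t ht => by
    have h3 := hImono ⟨le_rfl, hab⟩ ht ht.1
    have h4 := hImono ht hb ht.2
    constructor <;> linarith
  set N : ℝ → ℝ := fun t => p t ^ 2 + r t ^ 2 with hNdef
  have hNN : ∀ t, 0 ≤ N t := fun t => by positivity
  have hNd : ∀ t, HasDerivAt N (2 * δ t * (y t * (v1 t * r t - v2 t * p t))) t := fun t =>
    (((hpd t).pow 2).add ((hrd t).pow 2)).congr_deriv (by push_cast; ring)
  have hbd : ∀ t ∈ Icc a b, y t ^ 2 + (v1 t * r t - v2 t * p t) ^ 2 ≤ K * N t := fun t ht => by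
    have : y t ^ 2 + (v1 t * r t - v2 t * p t) ^ 2 = (v1 t ^ 2 + v2 t ^ 2) * N t := by
      rw [hyv t]; simp only [hNdef]; ring
    rw [this]; exact mul_le_mul_of_nonneg_right (hK t ht) (hNN t)
  have hFm : MonotoneOn (fun t => N t * exp (K * I t)) (Icc a b) := by
    refine mono_aux (fun t => (hNd t).mul ((hId t).const_mul K).exp) ?_
    intro t ht
    have h5 := hbd t ht
    have h6 : |2 * δ t * (y t * (v1 t * r t - v2 t * p t))| ≤ |δ t| * (K * N t) := by
      rw [show 2 * δ t * (y t * (v1 t * r t - v2 t * p t)) =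
        δ t * (2 * (y t * (v1 t * r t - v2 t * p t))) by ring, abs_mul]
      gcongr
      rw [abs_le]
      constructor <;> nlinarith [sq_nonneg (y t + (v1 t * r t - v2 t * p t)),
        sq_nonneg (y t - (v1 t * r t - v2 t * p t))]
    have h7 := neg_le_of_abs_le h6
    have h8 : 0 ≤ (2 * δ t * (y t * (v1 t * r t - v2 t * p t)) + |δ t| * (K * N t)) *
      exp (K * I t) := mul_nonneg (by linarith) (exp_pos _).le
    linarith
  have hN4 : ∀ t ∈ Icc a b, N t ≤ 4 := by
    intro t ht
    have h3 := hFm ht hb ht.2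
    simp only at h3
    have hNb : N b = 1 := hN
    rw [hNb, one_mul] at h3
    have h4 : exp (K * I b) = exp (K * (I b - I t)) * exp (K * I t) := by
      rw [← exp_add]; ring_nf
    rw [h4] at h3
    have h5 := le_of_mul_le_mul_right h3 (exp_pos _)
    have h6 : exp (K * (I b - I t)) ≤ exp 1 := by
      apply exp_le_exp.2
      exact (mul_le_mul_of_nonneg_left (hIb t ht).1 hK0).trans hKη
    linarith [exp_one_lt_d9]
  have hv1y : ∀ t ∈ Icc a b, |v1 t * y t| ≤ 2 * K ∧ |v2 t * y t| ≤ 2 * K := by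
    intro t ht
    have h5 := hbd t ht
    have h6 := hN4 t ht
    have h7 := hK t ht
    have h8 : y t ^ 2 ≤ K * 4 := by nlinarith [sq_nonneg (v1 t * r t - v2 t * p t)]
    constructor <;> apply abs_le_of_sq_le_sq _ (by positivity) <;> rw [mul_pow]
    · calc v1 t ^ 2 * y t ^ 2 ≤ K * (K * 4) := by
            gcongr; nlinarith [sq_nonneg (v2 t)]
        _ = _ := by ring
    · calc v2 t ^ 2 * y t ^ 2 ≤ K * (K * 4) := by
            gcongr; nlinarith [sq_nonneg (v1 t)]
        _ = _ := by ring
  have key : ∀ (P x : ℝ → ℝ), (∀ t, HasDerivAt P (δ t * x t) t) →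
      (∀ t ∈ Icc a b, |x t| ≤ 2 * K) → ∀ t ∈ Icc a b, |P t - P b| ≤ 2 * K * η := by
    intro P x hP hx t ht
    have hx' : ∀ t ∈ Icc a b, |δ t * x t| ≤ 2 * K * |δ t| := fun t ht => by
      rw [abs_mul, mul_comm]; gcongr; exact hx t ht
    have m1 : MonotoneOn (fun t => 2 * K * I t - P t) (Icc a b) :=
      mono_aux (fun t => ((hId t).const_mul (2 * K)).sub (hP t))
        (fun t ht => by linarith [(abs_le.1 (hx' t ht)).2])
    have m2 : MonotoneOn (fun t => 2 * K * I t + P t) (Icc a b) :=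
      mono_aux (fun t => ((hId t).const_mul (2 * K)).add (hP t))
        (fun t ht => by linarith [(abs_le.1 (hx' t ht)).1])
    have h3 := m1 ht hb ht.2
    have h4 := m2 ht hb ht.2
    simp only at h3 h4
    have h5 : 2 * K * (I b - I t) ≤ 2 * K * η :=
      mul_le_mul_of_nonneg_left (hIb t ht).1 (by positivity)
    rw [abs_le]; constructor <;> linarith
  refine ⟨key p (fun t => -(v2 t * y t)) (fun t => (hpd t).congr_deriv (by ring))
    (fun t ht => by rw [abs_neg]; exact (hv1y t ht).2) t ht, 
    key r (fun t => (v1 t * y t)) (fun t => (hrd t).congr_deriv (by ring))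
    (fun t ht => (hv1y t ht).1) t ht⟩

lemma hermite (a b e0 d0 e1 d1 : ℝ) (hab : a < b) : ∃ E E1 E2 : ℝ → ℝ,
    (∀ t, HasDerivAt E (E1 t) t) ∧ (∀ t, HasDerivAt E1 (E2 t) t) ∧ Continuous E2 ∧
    E a = e0 ∧ E1 a = d0 ∧ E b = e1 ∧ E1 b = d1 := by
  have hL : b - a ≠ 0 := by linarith
  set A := 3 * (e1 - e0) / (b - a) ^ 2 - (2 * d0 + d1) / (b - a) with hA
  set B := (d0 + d1) / (b - a) ^ 2 - 2 * (e1 - e0) / (b - a) ^ 3 with hB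
  refine ⟨fun t => e0 + d0 * (t - a) + A * (t - a) ^ 2 + B * (t - a) ^ 3,
    fun t => d0 + 2 * A * (t - a) + 3 * B * (t - a) ^ 2,
    fun t => 2 * A + 6 * B * (t - a), fun t => ?_, fun t => ?_, by fun_prop, by simp, by simp, ?_, ?_⟩
  · have h := (hasDerivAt_id t).sub_const a
    refine ((((hasDerivAt_const t e0).add (h.const_mul d0)).add ((h.pow 2).const_mul A)).add
      ((h.pow 3).const_mul B)).congr_deriv ?_
    simp; ring
  · have h := (hasDerivAt_id t).sub_const a
    refine (((hasDerivAt_const t d0).add (h.const_mul (2 * A))).add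
      ((h.pow 2).const_mul (3 * B))).congr_deriv ?_
    simp; ring
  · simp only [hA, hB]; field_simp; ring
  · simp only [hA, hB]; field_simp; ring

lemma ivt_aux (a b : ℝ) (hab : a < b) (H B : ℝ → ℝ) (hH : Continuous H) (hB : Continuous B)
    (hB0 : ∀ t ∈ Ioo a b, 0 < B t) (hBn : ∀ t, 0 ≤ B t) (β : ℝ) (hβ : 0 < β) :
    ∃ M : ℝ, ∫ t in a..b, exp (H t - M * B t) = β := by
  set G : ℝ → ℝ := fun M => ∫ t in a..b, exp (H t - M * B t) with hG
  have hGc : Continuous G := by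
    apply intervalIntegral.continuous_parametric_intervalIntegral_of_continuous'
    simp only [Function.uncurry_def]
    fun_prop
  have hpos : 0 < ∫ t in a..b, B t := by
    apply intervalIntegral.intervalIntegral_pos_of_pos_on (hB.intervalIntegrable _ _) _ hab
    exact hB0
  have hlow : ∀ M, (∫ t in a..b, (1 + H t)) - M * ∫ t in a..b, B t ≤ G M := by
    intro M
    have : (∫ t in a..b, (1 + H t)) - M * ∫ t in a..b, B t =
        ∫ t in a..b, ((1 + H t) - M * B t) := by
      rw [intervalIntegral.integral_sub, intervalIntegral.integral_const_mul]
      · exact Continuous.intervalIntegrable (by fun_prop) _ _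
      · exact Continuous.intervalIntegrable (by fun_prop) _ _
    rw [this]
    apply intervalIntegral.integral_mono_on hab.le
    · exact Continuous.intervalIntegrable (by fun_prop) _ _
    · exact Continuous.intervalIntegrable (by fun_prop) _ _
    · intro t _
      linarith [add_one_le_exp (H t - M * B t)]
  have htend : Filter.Tendsto G Filter.atTop (nhds 0) := by
    have : (0:ℝ) = ∫ t in a..b, (0:ℝ) := by simp
    rw [this]
    apply intervalIntegral.tendsto_integral_filter_of_dominated_convergence (fun t => exp (H t))
    · exact Filter.Eventually.of_forall fun M =>
        (Continuous.aestronglyMeasurable (by fun_prop))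
    · filter_upwards [Filter.eventually_ge_atTop 0] with M hM
      refine Filter.Eventually.of_forall fun t _ => ?_
      rw [Real.norm_eq_abs, abs_exp]
      apply exp_le_exp.2
      nlinarith [hBn t, mul_nonneg hM (hBn t)]
    · exact Continuous.intervalIntegrable (by fun_prop) _ _
    · have : ∀ᵐ t : ℝ, t ≠ b := by
        simp [MeasureTheory.ae_iff, MeasureTheory.measure_singleton]
      filter_upwards [this] with t htb ht
      rw [uIoc_of_le hab.le] at ht
      have hBt := hB0 t ⟨ht.1, lt_of_le_of_ne ht.2 htb⟩
      apply tendsto_exp_atBot.comp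
      have h1 : Filter.Tendsto (fun M : ℝ => M * B t) Filter.atTop Filter.atTop :=
        Filter.tendsto_id.atTop_mul_const hBt
      simpa [sub_eq_add_neg] using
        Filter.tendsto_atBot_add_const_left _ (H t) (Filter.tendsto_neg_atTop_atBot.comp h1)
  obtain ⟨M1, hM1⟩ := (htend.eventually (gt_mem_nhds hβ)).exists
  set M0 := ((∫ t in a..b, (1 + H t)) - β) / ∫ t in a..b, B t with hM0
  have h0 : β ≤ G M0 := by
    have := hlow M0
    rw [hM0, div_mul_cancel₀ _ hpos.ne'] at this
    linarith
  have := intermediate_value_univ M1 M0 hGc ⟨hM1.le, h0⟩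
  exact this

lemma exact_lemma (a b r0 θ0 l0 r1 α l1 : ℝ) (hab : a < b) (hr0 : 0 < r0) (hr1 : 0 < r1)
    (hθ : θ0 < α) : ∃ q v1 w1 v2 w2 : ℝ → ℝ, Continuous q ∧ IsSol q v1 w1 ∧ IsSol q v2 w2 ∧
      v1 a = r0 * cos θ0 ∧ v2 a = r0 * sin θ0 ∧ w1 a = l0 * (r0 * cos θ0) - sin θ0 / r0 ∧
      w2 a = l0 * (r0 * sin θ0) + cos θ0 / r0 ∧
      v1 b = r1 * cos α ∧ v2 b = r1 * sin α ∧ w1 b = l1 * (r1 * cos α) - sin α / r1 ∧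
      w2 b = l1 * (r1 * sin α) + cos α / r1 ∧ 
      ∫ t in a..b, 1 / (v1 t ^ 2 + v2 t ^ 2) = α - θ0 := by
  obtain ⟨H, H1, H2, hH, hH1, hH2, ha0, ha1, hb0, hb1⟩ :=
    hermite a b (-2 * log r0) (-2 * l0) (-2 * log r1) (-2 * l1) hab
  have hHc : Continuous H := continuous_iff_continuousAt.2 fun t => (hH t).continuousAt
  obtain ⟨M, hM⟩ := ivt_aux a b hab H (fun t => ((t - a) * (b - t)) ^ 2) hHc (by fun_prop)
    (fun t ht => by
      have := mul_pos (sub_pos.2 ht.1) (sub_pos.2 ht.2)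
      positivity) (fun t => by positivity) (α - θ0) (by linarith)
  set E : ℝ → ℝ := fun t => H t - M * ((t - a) * (b - t)) ^ 2 with hE
  set E1 : ℝ → ℝ := fun t => H1 t - M * (2 * ((t - a) * (b - t)) * ((b - t) - (t - a))) with hE1
  set E2 : ℝ → ℝ := fun t => H2 t -
    M * (2 * ((b - t) - (t - a)) ^ 2 - 4 * ((t - a) * (b - t))) with hE2
  have hEd : ∀ t, HasDerivAt E (E1 t) t := fun t => by
    have h1 := (hasDerivAt_id t).sub_const a
    have h2 := (hasDerivAt_id t).const_sub b
    refine ((hH t).sub (((h1.mul h2).pow 2).const_mul M)).congr_deriv ?_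
    simp only [hE1, id, Pi.mul_apply, Pi.sub_apply]; push_cast; ring
  have hE1d : ∀ t, HasDerivAt E1 (E2 t) t := fun t => by
    have h1 := (hasDerivAt_id t).sub_const a
    have h2 := (hasDerivAt_id t).const_sub b
    refine ((hH1 t).sub ((((h1.mul h2).const_mul 2).mul (h2.sub h1)).const_mul M)).congr_deriv ?_
    simp only [hE2, id, Pi.mul_apply, Pi.sub_apply]; push_cast; ring
  have hEc : Continuous E := by fun_prop
  have hE1c : Continuous E1 := continuous_iff_continuousAt.2 fun t => (hE1d t).continuousAt
  have hE2c : Continuous E2 := by fun_prop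
  set θ : ℝ → ℝ := fun t => θ0 + ∫ s in a..t, exp (E s) with hθdef
  have hθd : ∀ t, HasDerivAt θ (exp (E t)) t := by
    intro t
    have hc : Continuous fun s => exp (E s) := by fun_prop
    exact (intervalIntegral.integral_hasDerivAt_right (hc.intervalIntegrable _ _)
      (hc.stronglyMeasurableAtFilter _ _) hc.continuousAt).const_add _
  have hθa : θ a = θ0 := by simp [hθdef]
  have hθb : θ b = α := by simp only [hθdef]; rw [hM]; ring
  have hEa : E a = -2 * log r0 := by simp [hE, ha0]
  have hEb : E b = -2 * log r1 := by simp [hE, hb0]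
  have hE1a : E1 a = -2 * l0 := by simp [hE1, ha1]
  have hE1b : E1 b = -2 * l1 := by simp [hE1, hb1]
  have hg : ∀ t, HasDerivAt (fun t => exp (-E t / 2)) (exp (-E t / 2) * (-E1 t / 2)) t := fun t =>
    ((hEd t).neg.div_const 2).exp
  have hk : ∀ t, HasDerivAt (fun t => exp (E t / 2)) (exp (E t / 2) * (E1 t / 2)) t := fun t =>
    ((hEd t).div_const 2).exp
  have hgk : ∀ t, exp (-E t / 2) * exp (E t) = exp (E t / 2) := fun t => by
    rw [← exp_add]; ring_nf
  have hkk : ∀ t, exp (E t / 2) = exp (E t) * exp (-E t / 2) := fun t => by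
    rw [← exp_add]; ring_nf
  have ega : ∀ x r, 0 < r → x = -2 * log r → exp (-x / 2) = r := fun x r hr hx => by
    rw [hx, show -(-2 * log r) / 2 = log r by ring, exp_log hr]
  have eka : ∀ x r, 0 < r → x = -2 * log r → exp (x / 2) = 1 / r := fun x r hr hx => by
    rw [hx, show (-2 * log r) / 2 = -log r by ring, Real.exp_neg, exp_log hr, one_div]
  refine ⟨fun t => -E2 t / 2 + E1 t ^ 2 / 4 - exp (E t) ^ 2,
    fun t => exp (-E t / 2) * cos (θ t),
    fun t => -E1 t / 2 * (exp (-E t / 2) * cos (θ t)) - exp (E t / 2) * sin (θ t),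
    fun t => exp (-E t / 2) * sin (θ t),
    fun t => -E1 t / 2 * (exp (-E t / 2) * sin (θ t)) + exp (E t / 2) * cos (θ t),
    by fun_prop, fun t => ⟨?_, ?_⟩, fun t => ⟨?_, ?_⟩, ?_, ?_, ?_, ?_, ?_, ?_, ?_, ?_, ?_⟩
  · refine ((hg t).mul (hθd t).cos).congr_deriv ?_
    simp only [hkk, Pi.mul_apply, Pi.neg_apply]; ring
  · refine ((((hE1d t).neg.div_const 2).mul ((hg t).mul (hθd t).cos)).sub
      ((hk t).mul (hθd t).sin)).congr_deriv ?_
    simp only [hkk, Pi.mul_apply, Pi.neg_apply]; ring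
  · refine ((hg t).mul (hθd t).sin).congr_deriv ?_
    simp only [hkk, Pi.mul_apply, Pi.neg_apply]; ring
  · refine ((((hE1d t).neg.div_const 2).mul ((hg t).mul (hθd t).sin)).add
      ((hk t).mul (hθd t).cos)).congr_deriv ?_
    simp only [hkk, Pi.mul_apply, Pi.neg_apply]; ring
  · simp only [hθa, ega _ _ hr0 hEa]
  · simp only [hθa, ega _ _ hr0 hEa]
  · simp only [hθa, ega _ _ hr0 hEa, eka _ _ hr0 hEa, hE1a]; ring
  · simp only [hθa, ega _ _ hr0 hEa, eka _ _ hr0 hEa, hE1a]; ring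
  · simp only [hθb, ega _ _ hr1 hEb]
  · simp only [hθb, ega _ _ hr1 hEb]
  · simp only [hθb, ega _ _ hr1 hEb, eka _ _ hr1 hEb, hE1b]; ring
  · simp only [hθb, ega _ _ hr1 hEb, eka _ _ hr1 hEb, hE1b]; ring
  · rw [← hM]
    apply intervalIntegral.integral_congr
    intro t _
    have h1 : (exp (-E t / 2) * cos (θ t)) ^ 2 + (exp (-E t / 2) * sin (θ t)) ^ 2 = exp (-E t) := by
      have : exp (-E t) = exp (-E t / 2) * exp (-E t / 2) := by rw [← exp_add]; ring_nf
      rw [this]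
      linear_combination (exp (-E t / 2) * exp (-E t / 2)) * sin_sq_add_cos_sq (θ t)
    simp only [h1]
    rw [Real.exp_neg, one_div, inv_inv]

lemma polar_row (p11 p12 p21 p22 r θ : ℝ) (hr : 0 < r) (hdet : p11 * p22 - p12 * p21 = 1)
    (h1 : p11 = r * cos θ) (h2 : p12 = r * sin θ) :
    ∃ l, p21 = l * (r * cos θ) - sin θ / r ∧ p22 = l * (r * sin θ) + cos θ / r := by
  subst h1 h2
  have hs := sin_sq_add_cos_sq θ
  refine ⟨(p21 * cos θ + p22 * sin θ) / r, ?_, ?_⟩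
  · field_simp
    linear_combination (-r * p21) * hs - sin θ * hdet
  · field_simp
    linear_combination (-r * p22) * hs + cos θ * hdet

lemma plateau (a b σ : ℝ) (hσ : 0 < σ) : ∃ χ : ℝ → ℝ, ContDiff ℝ (⊤ : ℕ∞) χ ∧
    (∀ t, 0 ≤ χ t ∧ χ t ≤ 1) ∧ (∀ t, t ≤ a ∨ b ≤ t → χ t = 0) ∧
    (∀ t, a + σ ≤ t → t ≤ b - σ → χ t = 1) := by
  refine ⟨fun t => smoothTransition ((t - a) / σ) * smoothTransition ((b - t) / σ),
    ?_, ?_, ?_, ?_⟩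
  · apply ContDiff.mul
    · exact smoothTransition.contDiff.comp (by fun_prop)
    · exact smoothTransition.contDiff.comp (by fun_prop)
  · intro t
    have h1 := smoothTransition.nonneg ((t - a) / σ)
    have h2 := smoothTransition.nonneg ((b - t) / σ)
    have h3 := smoothTransition.le_one ((t - a) / σ)
    have h4 := smoothTransition.le_one ((b - t) / σ)
    exact ⟨mul_nonneg h1 h2, mul_le_one₀ h3 h2 h4⟩
  · rintro t (h | h)
    · simp only
      rw [smoothTransition.zero_of_nonpos, zero_mul]
      exact div_nonpos_of_nonpos_of_nonneg (by linarith) hσ.le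
    · simp only
      rw [smoothTransition.zero_of_nonpos (x := (b - t) / σ), mul_zero]
      exact div_nonpos_of_nonpos_of_nonneg (by linarith) hσ.le
  · intro t h1 h2
    simp only
    rw [smoothTransition.one_of_one_le, smoothTransition.one_of_one_le, one_mul]
    · rw [le_div_iff₀ hσ]; linarith
    · rw [le_div_iff₀ hσ]; linarith

lemma step_approx (g qs : ℝ → ℝ) (hg : Continuous g) (hgs : Function.Surjective g)
    (hqs : Continuous qs) (c0 a b ε : ℝ) (hab : a < b) (hε : 0 < ε)
    (hosc : ∀ t ∈ Icc a b, |qs a - qs t| ≤ ε) :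
    ∃ u : ℝ → ℝ, ContDiff ℝ (⊤ : ℕ∞) u ∧ (∀ t, t ≤ a ∨ b ≤ t → u t = c0) ∧
      (∃ t ∈ Ioo a b, u t ≠ c0) ∧ ∫ t in a..b, |g (u t) - qs t| ≤ 3 * ε * (b - a) := by
  obtain ⟨c, hc0, hc⟩ : ∃ c, c ≠ c0 ∧ |g c - qs a| < ε := by
    obtain ⟨c, hc⟩ := hgs (qs a)
    by_cases h : c = c0
    · have hev : ∀ᶠ x in nhds c, |g x - qs a| < ε := by
        have : Filter.Tendsto (fun x => |g x - qs a|) (nhds c) (nhds |g c - qs a|) :=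
          (by fun_prop : Continuous fun x => |g x - qs a|).continuousAt
        apply this.eventually (gt_mem_nhds _)
        simpa [hc] using hε
      have h2 : ∀ᶠ x in nhdsWithin c {c}ᶜ, |g x - qs a| < ε := hev.filter_mono nhdsWithin_le_nhds
      obtain ⟨x, hx1, hx2⟩ := (h2.and self_mem_nhdsWithin).exists
      exact ⟨x, h ▸ hx2, hx1⟩
    · exact ⟨c, h, by simpa [hc] using hε⟩
  obtain ⟨K1, hK1⟩ := (isCompact_uIcc (a := c0) (b := c)).exists_bound_of_continuousOn
    hg.continuousOn
  obtain ⟨K2, hK2⟩ := (isCompact_Icc (a := a) (b := b)).exists_bound_of_continuousOn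
    hqs.continuousOn
  have hK1' : 0 ≤ K1 := (norm_nonneg _).trans (hK1 c0 left_mem_uIcc)
  have hK2' : 0 ≤ K2 := (norm_nonneg _).trans (hK2 a ⟨le_rfl, hab.le⟩)
  set K := K1 + K2 + 1 with hK
  have hKp : 0 < K := by positivity
  set σ := min ((b - a) / 4) (ε * (b - a) / (2 * K)) with hσdef
  have hba : 0 < b - a := by linarith
  have hσ : 0 < σ := by positivity
  have hσ1 : σ ≤ (b - a) / 4 := min_le_left _ _
  have hσ2 : 2 * K * σ ≤ ε * (b - a) := by
    have := min_le_right ((b - a) / 4) (ε * (b - a) / (2 * K))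
    rw [← hσdef, le_div_iff₀ (by positivity)] at this
    linarith
  obtain ⟨χ, hχ, h01, hz, h1⟩ := plateau a b σ hσ
  have hχc : Continuous χ := hχ.continuous
  refine ⟨fun t => c0 + (c - c0) * χ t, by fun_prop, ?_, ⟨(a + b) / 2, ⟨by linarith, by linarith⟩, ?_⟩, ?_⟩
  · intro t ht; simp [hz t ht]
  · simp only
    rw [h1 _ (by linarith) (by linarith)]; simpa using hc0
  · set F : ℝ → ℝ := fun t => |g (c0 + (c - c0) * χ t) - qs t| with hF
    have hFc : Continuous F := by fun_prop
    have hFi : ∀ x y, IntervalIntegrable F MeasureTheory.volume x y :=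
      fun x y => hFc.intervalIntegrable _ _
    have hFK : ∀ t ∈ Icc a b, F t ≤ K := by
      intro t ht
      have hmem : c0 + (c - c0) * χ t ∈ uIcc c0 c := by
        rw [← segment_eq_uIcc]
        exact ⟨1 - χ t, χ t, by linarith [(h01 t).2], (h01 t).1, by ring, by simp; ring⟩
      have h3 := hK1 _ hmem
      have h4 := hK2 t ht
      rw [Real.norm_eq_abs] at h3 h4
      have := abs_sub (g (c0 + (c - c0) * χ t)) (qs t)
      simp only [hF]; linarith
    have hFm : ∀ t ∈ Icc (a + σ) (b - σ), F t ≤ 2 * ε := by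
      intro t ht
      simp only [hF]
      rw [h1 t ht.1 ht.2]
      have h3 := hosc t ⟨by linarith [ht.1], by linarith [ht.2]⟩
      have h4 : g (c0 + (c - c0) * 1) - qs t = (g c - qs a) + (qs a - qs t) := by
        ring_nf
      rw [h4]
      linarith [abs_add_le (g c - qs a) (qs a - qs t)]
    have bound : ∀ x y k, x ≤ y → (∀ t ∈ Icc x y, F t ≤ k) → ∫ t in x..y, F t ≤ k * (y - x) := by
      intro x y k hxy hk
      have := intervalIntegral.integral_mono_on hxy (hFi x y)
        (continuous_const.intervalIntegrable x y : IntervalIntegrable (fun _ => k) _ _ _) hk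
      rw [intervalIntegral.integral_const, smul_eq_mul] at this
      linarith
    have e1 := bound a (a + σ) K (by linarith) (fun t ht => hFK t ⟨ht.1, by linarith [ht.2]⟩)
    have e2 := bound (a + σ) (b - σ) (2 * ε) (by linarith) hFm
    have e3 := bound (b - σ) b K (by linarith) (fun t ht => hFK t ⟨by linarith [ht.1], ht.2⟩)
    have s1 := intervalIntegral.integral_add_adjacent_intervals (hFi a (a + σ)) (hFi (a + σ) (b - σ))
    have s2 := intervalIntegral.integral_add_adjacent_intervals (hFi a (b - σ)) (hFi (b - σ) b)
    rw [← s2, ← s1]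
    nlinarith

lemma approx_lemma (g qs : ℝ → ℝ) (hg : Continuous g) (hgs : Function.Surjective g)
    (hqs : Continuous qs) (c0 a b η : ℝ) (hab : a < b) (hη : 0 < η) :
    ∃ u : ℝ → ℝ, ContDiff ℝ (⊤ : ℕ∞) u ∧ (∀ t, t ≤ a ∨ b ≤ t → u t = c0) ∧
      (∃ t ∈ Ioo a b, u t ≠ c0) ∧ ∫ t in a..b, |g (u t) - qs t| ≤ η := by
  have hba : 0 < b - a := by linarith
  set ε := η / (3 * (b - a)) with hε
  have hεp : 0 < ε := by positivity
  have huc : UniformContinuousOn qs (Icc a b) :=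
    isCompact_Icc.uniformContinuousOn_of_continuous hqs.continuousOn
  obtain ⟨δ, hδ, hδ'⟩ := Metric.uniformContinuousOn_iff.1 huc ε hεp
  obtain ⟨N, hN⟩ := exists_nat_gt ((b - a) / δ)
  have hNpos : 0 < (N : ℝ) := lt_trans (by positivity) hN
  have hN1 : 1 ≤ N := by exact_mod_cast hNpos
  set h := (b - a) / N with hh
  have hhp : 0 < h := by positivity
  have hhδ : h < δ := by
    rw [hh, div_lt_iff₀ hNpos]; rw [div_lt_iff₀ hδ] at hN; linarith
  have hNh : a + N * h = b := by rw [hh]; field_simp; ring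
  have key : ∀ n : ℕ, n ≤ N → ∃ u : ℝ → ℝ, ContDiff ℝ (⊤ : ℕ∞) u ∧
      (∀ t, t ≤ a ∨ a + n * h ≤ t → u t = c0) ∧
      (1 ≤ n → ∃ t ∈ Ioo a (a + n * h), u t ≠ c0) ∧
      ∫ t in a..(a + n * h), |g (u t) - qs t| ≤ 3 * ε * (n * h) := by
    intro n
    induction n with
    | zero => 
      intro _
      exact ⟨fun _ => c0, contDiff_const, fun _ _ => rfl, by simp, by simp⟩
    | succ n ih =>
      intro hn
      obtain ⟨u, hu, hu0, -, huI⟩ := ih (by omega)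
      have hnN : ((n : ℝ) + 1) ≤ N := by exact_mod_cast hn
      have hnh : 0 ≤ n * h := by positivity
      have hnb : a + n * h + h ≤ b := by nlinarith
      obtain ⟨v, hv, hv0, ⟨t1, ht1, hvt1⟩, hvI⟩ := step_approx g qs hg hgs hqs c0 (a + n * h)
        (a + n * h + h) ε (by linarith) hεp (by
          intro t ht
          have := hδ' (a + n * h) ⟨by linarith, by linarith⟩ t
            ⟨by linarith [ht.1], by linarith [ht.2]⟩ (by
              rw [Real.dist_eq, abs_lt]; constructor <;> linarith [ht.1, ht.2])
          exact this.le)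
      have hsum : a + ((n + 1 : ℕ) : ℝ) * h = a + n * h + h := by push_cast; ring
      rw [hsum]
      have huc := hu.continuous
      have hvc := hv.continuous
      refine ⟨fun t => u t + v t - c0, by fun_prop, ?_, ?_, ?_⟩
      · rintro t (ht | ht)
        · simp [hu0 t (Or.inl ht), hv0 t (Or.inl (by linarith))]
        · simp [hu0 t (Or.inr (by linarith)), hv0 t (Or.inr (by linarith))]
      · intro _
        refine ⟨t1, ⟨by linarith [ht1.1], ht1.2⟩, ?_⟩
        simpa [hu0 t1 (Or.inr ht1.1.le)] using hvt1
      · rw [← intervalIntegral.integral_add_adjacent_intervals (b := a + n * h)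
          (Continuous.intervalIntegrable (by fun_prop) _ _)
          (Continuous.intervalIntegrable (by fun_prop) _ _)]
        have e1 : ∫ t in a..(a + n * h), |g (u t + v t - c0) - qs t| =
            ∫ t in a..(a + n * h), |g (u t) - qs t| := by
          apply intervalIntegral.integral_congr
          intro t ht
          rw [uIcc_of_le (by linarith)] at ht
          simp [hv0 t (Or.inl ht.2)]
        have e2 : ∫ t in (a + n * h)..(a + n * h + h), |g (u t + v t - c0) - qs t| =
            ∫ t in (a + n * h)..(a + n * h + h), |g (v t) - qs t| := by
          apply intervalIntegral.integral_congr
          intro t ht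
          rw [uIcc_of_le (by linarith)] at ht
          simp [hu0 t (Or.inr ht.1)]
        rw [e1, e2]
        push_cast
        nlinarith
  obtain ⟨u, h1, h2, h3, h4⟩ := key N le_rfl
  rw [hNh] at h2 h3 h4
  refine ⟨u, h1, h2, h3 hN1, h4.trans_eq ?_⟩
  rw [hh, hε]; field_simp

lemma rescale {x0 x1 x2 x3 y0 y1 y2 y3 : ℝ → ℝ}
    (hx0 : ∀ t, HasDerivAt x0 (x1 t) t) (hx1 : ∀ t, HasDerivAt x1 (x2 t) t)
    (hx2 : ∀ t, HasDerivAt x2 (x3 t) t) (hy0 : ∀ t, HasDerivAt y0 (y1 t) t)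
    (hy1 : ∀ t, HasDerivAt y1 (y2 t) t) (hy2 : ∀ t, HasDerivAt y2 (y3 t) t)
    (D D1 D2 q : ℝ → ℝ) (hD : ∀ t, D t = x0 t * y1 t - x1 t * y0 t)
    (hD1 : ∀ t, D1 t = x0 t * y2 t - x2 t * y0 t)
    (hD2 : ∀ t, D2 t = x1 t * y2 t - x2 t * y1 t + x0 t * y3 t - x3 t * y0 t)
    (hq : ∀ t, q t = (x2 t * y1 t - x1 t * y2 t) / D t + 3 / 4 * (D1 t / D t) ^ 2
      - D2 t / (2 * D t)) (hpos : ∀ t, 0 < D t) :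
    IsSol q (fun t => x0 t / √(D t)) (fun t => x1 t / √(D t) - x0 t * D1 t / (2 * √(D t) ^ 3)) ∧
    IsSol q (fun t => y0 t / √(D t)) (fun t => y1 t / √(D t) - y0 t * D1 t / (2 * √(D t) ^ 3)) := by
  have hDd : ∀ t, HasDerivAt D (D1 t) t := fun t => by
    have := ((hx0 t).mul (hy1 t)).sub ((hx1 t).mul (hy0 t))
    have e : D = x0 * y1 - x1 * y0 := by ext t; simp [hD]
    rw [e]
    exact this.congr_deriv (by rw [hD1]; ring)
  have hD1d : ∀ t, HasDerivAt D1 (D2 t) t := fun t => by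
    have := ((hx0 t).mul (hy2 t)).sub ((hx2 t).mul (hy0 t))
    have e : D1 = x0 * y2 - x2 * y0 := by ext t; simp [hD1]
    rw [e]
    exact this.congr_deriv (by rw [hD2]; ring)
  have hR : ∀ t, 0 < √(D t) := fun t => sqrt_pos.2 (hpos t)
  have hR2 : ∀ t, D t = √(D t) ^ 2 := fun t => (sq_sqrt (hpos t).le).symm
  have hRd : ∀ t, HasDerivAt (fun t => √(D t)) (D1 t / (2 * √(D t))) t := fun t =>
    (hDd t).sqrt (hpos t).ne'
  constructor
  · intro t
    have hRt := (hR t).ne'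
    have hsq := hR2 t
    have hDt := hD t
    constructor
    · refine ((hx0 t).div (hRd t) hRt).congr_deriv ?_
      field_simp
    · refine (((hx1 t).div (hRd t) hRt).sub (((hx0 t).mul (hD1d t)).div
        (((hRd t).pow 3).const_mul 2) (mul_ne_zero two_ne_zero (pow_ne_zero 3 hRt)))).congr_deriv ?_
      simp only [Pi.mul_apply, Pi.pow_apply, hq]
      have hk : x2 t * D t - x1 t * D1 t = x0 t * (x2 t * y1 t - x1 t * y2 t) := by
        rw [hDt, hD1]; ring
      generalize D2 t = d2 at *
      generalize D1 t = d1 at *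
      generalize √(D t) = R at *
      rw [hsq] at hk ⊢
      field_simp
      push_cast
      linear_combination (16 * R^4) * hk
  · intro t
    have hRt := (hR t).ne'
    have hsq := hR2 t
    have hDt := hD t
    constructor
    · refine ((hy0 t).div (hRd t) hRt).congr_deriv ?_
      field_simp
    · refine (((hy1 t).div (hRd t) hRt).sub (((hy0 t).mul (hD1d t)).div
        (((hRd t).pow 3).const_mul 2) (mul_ne_zero two_ne_zero (pow_ne_zero 3 hRt)))).congr_deriv ?_
      simp only [Pi.mul_apply, Pi.pow_apply, hq]
      have hk : y2 t * D t - y1 t * D1 t = y0 t * (x2 t * y1 t - x1 t * y2 t) := by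
        rw [hDt, hD1]; ring
      generalize D2 t = d2 at *
      generalize D1 t = d1 at *
      generalize √(D t) = R at *
      rw [hsq] at hk ⊢
      field_simp
      push_cast
      linear_combination (16 * R^4) * hk

noncomputable def lb0 (k m1 m2 t : ℝ) : ℝ := m1 * cos (k * t) + m2 * (sin (k * t) / k)
noncomputable def lb1 (k m1 m2 t : ℝ) : ℝ := -(m1 * (k * sin (k * t))) + m2 * cos (k * t)

lemma lb0_d (k m1 m2 t : ℝ) (hk : k ≠ 0) : HasDerivAt (lb0 k m1 m2) (lb1 k m1 m2 t) t := by
  have h := (hasDerivAt_id t).const_mul k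
  refine ((h.cos.const_mul m1).add ((h.sin.div_const k).const_mul m2)).congr_deriv ?_
  simp [lb1]; field_simp

lemma lb1_d (k m1 m2 t : ℝ) (hk : k ≠ 0) : HasDerivAt (lb1 k m1 m2) (-k^2 * lb0 k m1 m2 t) t := by
  have h := (hasDerivAt_id t).const_mul k
  refine (((h.sin.const_mul k).const_mul m1).neg.add (h.cos.const_mul m2)).congr_deriv ?_
  simp [lb0]; field_simp; ring

lemma lb_wronsk (k a b c d t : ℝ) (hk : k ≠ 0) :
    lb0 k a b t * lb1 k c d t - lb1 k a b t * lb0 k c d t = a * d - b * c := by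
  simp only [lb0, lb1]
  have := sin_sq_add_cos_sq (k * t)
  field_simp
  linear_combination (k * (a * d - b * c)) * this

noncomputable def lx0 (k : ℝ) (χ : ℝ → ℝ) (a b m1 m2 t : ℝ) : ℝ := lb0 k a b t + χ t * lb0 k m1 m2 t
noncomputable def lx1 (k : ℝ) (χ χ1 : ℝ → ℝ) (a b m1 m2 t : ℝ) : ℝ :=
  lb1 k a b t + χ1 t * lb0 k m1 m2 t + χ t * lb1 k m1 m2 t
noncomputable def lx2 (k : ℝ) (χ χ1 χ2 : ℝ → ℝ) (a b m1 m2 t : ℝ) : ℝ :=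
  -k^2 * lx0 k χ a b m1 m2 t + χ2 t * lb0 k m1 m2 t + 2 * χ1 t * lb1 k m1 m2 t
noncomputable def lx3 (k : ℝ) (χ χ1 χ2 χ3 : ℝ → ℝ) (a b m1 m2 t : ℝ) : ℝ :=
  -k^2 * lx1 k χ χ1 a b m1 m2 t + χ3 t * lb0 k m1 m2 t + 3 * χ2 t * lb1 k m1 m2 t
    - 2 * k^2 * χ1 t * lb0 k m1 m2 t

lemma lx_d (k : ℝ) (hk : k ≠ 0) (χ χ1 χ2 χ3 : ℝ → ℝ) (h0 : ∀ t, HasDerivAt χ (χ1 t) t)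
    (h1 : ∀ t, HasDerivAt χ1 (χ2 t) t) (h2 : ∀ t, HasDerivAt χ2 (χ3 t) t) (a b m1 m2 : ℝ) :
    (∀ t, HasDerivAt (lx0 k χ a b m1 m2) (lx1 k χ χ1 a b m1 m2 t) t) ∧
    (∀ t, HasDerivAt (lx1 k χ χ1 a b m1 m2) (lx2 k χ χ1 χ2 a b m1 m2 t) t) ∧
    (∀ t, HasDerivAt (lx2 k χ χ1 χ2 a b m1 m2) (lx3 k χ χ1 χ2 χ3 a b m1 m2 t) t) := by
  have e0 : ∀ t, HasDerivAt (lx0 k χ a b m1 m2) (lx1 k χ χ1 a b m1 m2 t) t := fun t =>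
    ((lb0_d k a b t hk).add ((h0 t).mul (lb0_d k m1 m2 t hk))).congr_deriv (by
      simp only [lx1]; ring)
  refine ⟨e0, fun t => ?_, fun t => ?_⟩
  · exact (((lb1_d k a b t hk).add ((h1 t).mul (lb0_d k m1 m2 t hk))).add
      ((h0 t).mul (lb1_d k m1 m2 t hk))).congr_deriv (by simp only [lx2, lx0]; ring)
  · exact ((((e0 t).const_mul (-k^2)).add ((h2 t).mul (lb0_d k m1 m2 t hk))).add
      (((h1 t).const_mul 2).mul (lb1_d k m1 m2 t hk))).congr_deriv (by simp only [lx3]; ring)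

lemma trans_exists (ℓ : ℝ) (hℓ : 0 < ℓ) : ∃ χ χ1 χ2 χ3 : ℝ → ℝ,
    (∀ t, HasDerivAt χ (χ1 t) t) ∧ (∀ t, HasDerivAt χ1 (χ2 t) t) ∧
    (∀ t, HasDerivAt χ2 (χ3 t) t) ∧ ContDiff ℝ (⊤ : ℕ∞) χ ∧ ContDiff ℝ (⊤ : ℕ∞) χ1 ∧
    ContDiff ℝ (⊤ : ℕ∞) χ2 ∧ ContDiff ℝ (⊤ : ℕ∞) χ3 ∧
    (∀ t ≤ 0, χ t = 0 ∧ χ1 t = 0 ∧ χ2 t = 0 ∧ χ3 t = 0) ∧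
    (∀ t, ℓ ≤ t → χ t = 1 ∧ χ1 t = 0 ∧ χ2 t = 0 ∧ χ3 t = 0) := by
  set χ : ℝ → ℝ := fun t => smoothTransition ((t - ℓ/3) / (ℓ/3)) with hχ
  have c0 : ContDiff ℝ (⊤ : ℕ∞) χ := smoothTransition.contDiff.comp (by fun_prop)
  have cd : ∀ f : ℝ → ℝ, ContDiff ℝ (⊤ : ℕ∞) f → ContDiff ℝ (⊤ : ℕ∞) (deriv f) ∧
      ∀ t, HasDerivAt f (deriv f t) t := fun f hf =>
    ⟨((contDiff_infty_iff_deriv.1 hf).2), fun t =>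
      ((contDiff_infty_iff_deriv.1 hf).1 t).hasDerivAt⟩
  have c1 := cd _ c0
  have c2 := cd _ c1.1
  have c3 := cd _ c2.1
  have key : ∀ t c, χ =ᶠ[nhds t] (fun _ => c) →
      χ t = c ∧ deriv χ t = 0 ∧ deriv (deriv χ) t = 0 ∧ deriv (deriv (deriv χ)) t = 0 := by
    intro t c h
    have h1 := h.deriv
    have h2 := h1.deriv
    have h3 := h2.deriv
    refine ⟨h.eq_of_nhds, ?_, ?_, ?_⟩
    · rw [h1.eq_of_nhds]; simp
    · rw [h2.eq_of_nhds]; simp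
    · rw [h3.eq_of_nhds]; simp
  refine ⟨χ, deriv χ, deriv (deriv χ), deriv (deriv (deriv χ)), c1.2, c2.2, c3.2, c0, c1.1, c2.1,
    c3.1, fun t ht => key t 0 ?_, fun t ht => key t 1 ?_⟩
  · filter_upwards [gt_mem_nhds (show t < ℓ / 3 by linarith)] with s hs
    exact smoothTransition.zero_of_nonpos
      (div_nonpos_of_nonpos_of_nonneg (by linarith) (by linarith))
  · filter_upwards [lt_mem_nhds (show 2 * ℓ / 3 < t by linarith)] with s hs
    apply smoothTransition.one_of_one_le
    rw [le_div_iff₀ (by linarith)]; linarith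

lemma lq_free (k x0 x1 x2 x3 y0 y1 y2 y3 : ℝ) (hx2 : x2 = -k^2 * x0) (hx3 : x3 = -k^2 * x1)
    (hy2 : y2 = -k^2 * y0) (hy3 : y3 = -k^2 * y1) (hD : x0 * y1 - x1 * y0 = 1) :
    x0 * y2 - x2 * y0 = 0 ∧ (x2 * y1 - x1 * y2) / (x0 * y1 - x1 * y0)
      + 3 / 4 * ((x0 * y2 - x2 * y0) / (x0 * y1 - x1 * y0)) ^ 2
      - (x1 * y2 - x2 * y1 + x0 * y3 - x3 * y0) / (2 * (x0 * y1 - x1 * y0)) = - k^2 := by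
  have h1 : x0 * y2 - x2 * y0 = 0 := by subst hx2 hy2; ring
  refine ⟨h1, ?_⟩
  have h2 : x1 * y2 - x2 * y1 + x0 * y3 - x3 * y0 = 0 := by subst hx2 hy2 hx3 hy3; ring
  have h3 : x2 * y1 - x1 * y2 = -k^2 := by
    subst hx2 hy2; linear_combination (-k^2) * hD
  rw [h1, h2, h3, hD]; norm_num

lemma lb0_add (k a b c d t : ℝ) : lb0 k a b t + lb0 k c d t = lb0 k (a + c) (b + d) t := by
  simp only [lb0]; ring
lemma lb1_add (k a b c d t : ℝ) : lb1 k a b t + lb1 k c d t = lb1 k (a + c) (b + d) t := by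
  simp only [lb1]; ring

lemma lb0_cd (k a b : ℝ) : ContDiff ℝ (⊤ : ℕ∞) (lb0 k a b) := by
  unfold lb0
  fun_prop
lemma lb1_cd (k a b : ℝ) : ContDiff ℝ (⊤ : ℕ∞) (lb1 k a b) := by
  unfold lb1
  fun_prop

lemma local_lemma (k ℓ ε : ℝ) (hk : 0 < k) (hℓ : 0 < ℓ) (hε : 0 < ε)
    (hcos : ∀ t ∈ Icc 0 ℓ, 1/2 < cos (k * t)^2 + (sin (k * t) / k)^2) :
    ∃ δ > 0, ∀ n1 n2 n3 n4 : ℝ, |n1| < δ → |n2| < δ → |n3| < δ → |n4| < δ →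
      (1 + n1) * (1 + n4) - n2 * n3 = 1 → ∃ q X X' Y Y' : ℝ → ℝ,
      ContDiff ℝ (⊤ : ℕ∞) q ∧ (∀ t, |q t + k^2| < ε) ∧
      (∀ t, t ≤ 0 ∨ ℓ ≤ t → q t = -k^2) ∧ IsSol q X X' ∧ IsSol q Y Y' ∧
      X 0 = 1 ∧ X' 0 = 0 ∧ Y 0 = 0 ∧ Y' 0 = 1 ∧
      X ℓ = lb0 k (1 + n1) n3 ℓ ∧ X' ℓ = lb1 k (1 + n1) n3 ℓ ∧
      Y ℓ = lb0 k n2 (1 + n4) ℓ ∧ Y' ℓ = lb1 k n2 (1 + n4) ℓ ∧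
      (∀ t ∈ Icc 0 ℓ, 1/2 < X t ^ 2 + Y t ^ 2) := by
  obtain ⟨χ, χ1, χ2, χ3, h0, h1, h2, s0, s1, s2, s3, hL, hR⟩ := trans_exists ℓ hℓ
  have k0 := s0.continuous
  have k1 := s1.continuous
  have k2 := s2.continuous
  have k3 := s3.continuous
  have hk0 := hk.ne'
  let x0 : ℝ × ℝ × ℝ × ℝ → ℝ → ℝ := fun n => lx0 k χ 1 0 n.1 n.2.2.1
  let x1 : ℝ × ℝ × ℝ × ℝ → ℝ → ℝ := fun n => lx1 k χ χ1 1 0 n.1 n.2.2.1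
  let x2 : ℝ × ℝ × ℝ × ℝ → ℝ → ℝ := fun n => lx2 k χ χ1 χ2 1 0 n.1 n.2.2.1
  let x3 : ℝ × ℝ × ℝ × ℝ → ℝ → ℝ := fun n => lx3 k χ χ1 χ2 χ3 1 0 n.1 n.2.2.1
  let y0 : ℝ × ℝ × ℝ × ℝ → ℝ → ℝ := fun n => lx0 k χ 0 1 n.2.1 n.2.2.2
  let y1 : ℝ × ℝ × ℝ × ℝ → ℝ → ℝ := fun n => lx1 k χ χ1 0 1 n.2.1 n.2.2.2
  let y2 : ℝ × ℝ × ℝ × ℝ → ℝ → ℝ := fun n => lx2 k χ χ1 χ2 0 1 n.2.1 n.2.2.2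
  let y3 : ℝ × ℝ × ℝ × ℝ → ℝ → ℝ := fun n => lx3 k χ χ1 χ2 χ3 0 1 n.2.1 n.2.2.2
  let D : ℝ × ℝ × ℝ × ℝ → ℝ → ℝ := fun n t => x0 n t * y1 n t - x1 n t * y0 n t
  let D1 : ℝ × ℝ × ℝ × ℝ → ℝ → ℝ := fun n t => x0 n t * y2 n t - x2 n t * y0 n t
  let D2 : ℝ × ℝ × ℝ × ℝ → ℝ → ℝ := fun n t =>
    x1 n t * y2 n t - x2 n t * y1 n t + x0 n t * y3 n t - x3 n t * y0 n t
  let q : ℝ × ℝ × ℝ × ℝ → ℝ → ℝ := fun n t =>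
    (x2 n t * y1 n t - x1 n t * y2 n t) / D n t + 3 / 4 * (D1 n t / D n t) ^ 2
      - D2 n t / (2 * D n t)
  have cx0 : Continuous fun p : (ℝ × ℝ × ℝ × ℝ) × ℝ => x0 p.1 p.2 := by
    simp only [x0, lx0, lb0]; fun_prop
  have cx1 : Continuous fun p : (ℝ × ℝ × ℝ × ℝ) × ℝ => x1 p.1 p.2 := by
    simp only [x1, lx1, lb0, lb1]; fun_prop
  have cx2 : Continuous fun p : (ℝ × ℝ × ℝ × ℝ) × ℝ => x2 p.1 p.2 := by
    simp only [x2, lx2, lx0, lb0, lb1]; fun_prop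
  have cx3 : Continuous fun p : (ℝ × ℝ × ℝ × ℝ) × ℝ => x3 p.1 p.2 := by
    simp only [x3, lx3, lx1, lb0, lb1]; fun_prop
  have cy0 : Continuous fun p : (ℝ × ℝ × ℝ × ℝ) × ℝ => y0 p.1 p.2 := by
    simp only [y0, lx0, lb0]; fun_prop
  have cy1 : Continuous fun p : (ℝ × ℝ × ℝ × ℝ) × ℝ => y1 p.1 p.2 := by
    simp only [y1, lx1, lb0, lb1]; fun_prop
  have cy2 : Continuous fun p : (ℝ × ℝ × ℝ × ℝ) × ℝ => y2 p.1 p.2 := by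
    simp only [y2, lx2, lx0, lb0, lb1]; fun_prop
  have cy3 : Continuous fun p : (ℝ × ℝ × ℝ × ℝ) × ℝ => y3 p.1 p.2 := by
    simp only [y3, lx3, lx1, lb0, lb1]; fun_prop
  have cD : Continuous fun p : (ℝ × ℝ × ℝ × ℝ) × ℝ => D p.1 p.2 :=
    (cx0.mul cy1).sub (cx1.mul cy0)
  have cD1 : Continuous fun p : (ℝ × ℝ × ℝ × ℝ) × ℝ => D1 p.1 p.2 :=
    (cx0.mul cy2).sub (cx2.mul cy0)
  have cD2 : Continuous fun p : (ℝ × ℝ × ℝ × ℝ) × ℝ => D2 p.1 p.2 :=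
    (((cx1.mul cy2).sub (cx2.mul cy1)).add (cx0.mul cy3)).sub (cx3.mul cy0)
  have free : ∀ n t a b c d, x0 n t = lb0 k a b t → x1 n t = lb1 k a b t →
      x2 n t = -k^2 * x0 n t → x3 n t = -k^2 * x1 n t → y0 n t = lb0 k c d t →
      y1 n t = lb1 k c d t → y2 n t = -k^2 * y0 n t → y3 n t = -k^2 * y1 n t →
      a * d - b * c = 1 → D n t = 1 ∧ D1 n t = 0 ∧ q n t = -k^2 := by
    intro n t a b c d e0 e1 e2 e3 g0 g1 g2 g3 hdet
    have hD : x0 n t * y1 n t - x1 n t * y0 n t = 1 := by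
      rw [e0, e1, g0, g1, lb_wronsk k a b c d t hk0, hdet]
    exact ⟨hD, lq_free k _ _ _ _ _ _ _ _ e2 e3 g2 g3 hD⟩
  have z0 : ∀ t, lb0 k 0 0 t = 0 := fun t => by simp [lb0]
  have z1 : ∀ t, lb1 k 0 0 t = 0 := fun t => by simp [lb1]
  have at0 : ∀ t, D 0 t = 1 ∧ D1 0 t = 0 ∧ q 0 t = -k^2 := by
    intro t
    apply free 0 t 1 0 0 1 <;> simp [x0, x1, x2, x3, y0, y1, y2, y3, lx0, lx1, lx2, lx3, z0, z1]
  have atL : ∀ n, ∀ t ≤ 0, D n t = 1 ∧ D1 n t = 0 ∧ q n t = -k^2 := by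
    intro n t ht
    obtain ⟨a0, a1, a2, a3⟩ := hL t ht
    apply free n t 1 0 0 1 <;>
      simp [x0, x1, x2, x3, y0, y1, y2, y3, lx0, lx1, lx2, lx3, a0, a1, a2, a3]
  have atR : ∀ n : ℝ × ℝ × ℝ × ℝ, (1 + n.1) * (1 + n.2.2.2) - n.2.1 * n.2.2.1 = 1 →
      ∀ t, ℓ ≤ t → D n t = 1 ∧ D1 n t = 0 ∧ q n t = -k^2 := by
    intro n hn t ht
    obtain ⟨a0, a1, a2, a3⟩ := hR t ht
    apply free n t (1 + n.1) (0 + n.2.2.1) (0 + n.2.1) (1 + n.2.2.2) <;>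
      first
      | simp [x0, x1, x2, x3, y0, y1, y2, y3, lx0, lx1, lx2, lx3, a0, a1, a2, a3, lb0_add, lb1_add]; done
      | linarith
  have ev : ∀ t ∈ Icc (0:ℝ) ℓ, ∀ᶠ p : (ℝ × ℝ × ℝ × ℝ) × ℝ in nhds (0, t),
      0 < D p.1 p.2 ∧ |q p.1 p.2 + k^2| < ε ∧
        D p.1 p.2 / 2 < x0 p.1 p.2 ^ 2 + y0 p.1 p.2 ^ 2 := by
    intro t ht
    obtain ⟨d0, d1, d2⟩ := at0 t
    have dne : (fun p : (ℝ × ℝ × ℝ × ℝ) × ℝ => D p.1 p.2) (0, t) ≠ 0 := by simp [d0]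
    have dne2 : (fun p : (ℝ × ℝ × ℝ × ℝ) × ℝ => 2 * D p.1 p.2) (0, t) ≠ 0 := by simp [d0]
    have cq : ContinuousAt (fun p : (ℝ × ℝ × ℝ × ℝ) × ℝ => q p.1 p.2) (0, t) :=
      (((((cx2.mul cy1).sub (cx1.mul cy2)).continuousAt).div cD.continuousAt dne).add
        ((((cD1.continuousAt).div cD.continuousAt dne).pow 2).const_mul (3/4))).sub
        (cD2.continuousAt.div (cD.continuousAt.const_mul 2) dne2)
    have e1 : ∀ᶠ p : (ℝ × ℝ × ℝ × ℝ) × ℝ in nhds (0, t), 0 < D p.1 p.2 :=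
      cD.continuousAt.eventually (lt_mem_nhds (by simp [d0]))
    have e2 : ∀ᶠ p : (ℝ × ℝ × ℝ × ℝ) × ℝ in nhds (0, t), |q p.1 p.2 + k^2| < ε :=
      ((cq.add continuousAt_const).abs).eventually (gt_mem_nhds (by simp [d2, hε]))
    have e3 : ∀ᶠ p : (ℝ × ℝ × ℝ × ℝ) × ℝ in nhds (0, t),
        0 < x0 p.1 p.2 ^ 2 + y0 p.1 p.2 ^ 2 - D p.1 p.2 / 2 := by
      refine ((((cx0.pow 2).add (cy0.pow 2)).sub (cD.div_const 2)).continuousAt).eventually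
        (lt_mem_nhds ?_)
      have := hcos t ht
      have hx : x0 0 t = cos (k * t) := by simp [x0, lx0, lb0]
      have hy : y0 0 t = sin (k * t) / k := by simp [y0, lx0, lb0]
      show 0 < x0 0 t ^ 2 + y0 0 t ^ 2 - D 0 t / 2
      rw [hx, hy, d0]; linarith
    filter_upwards [e1, e2, e3] with p p1 p2 p3
    exact ⟨p1, p2, by linarith⟩
  obtain ⟨δ, hδ, H⟩ := Metric.eventually_nhds_iff.1
    ((isCompact_Icc).eventually_forall_of_forall_eventually
      (P := fun n t => 0 < D n t ∧ |q n t + k^2| < ε ∧ D n t / 2 < x0 n t ^ 2 + y0 n t ^ 2) ev)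
  refine ⟨δ, hδ, fun n1 n2 n3 n4 m1 m2 m3 m4 hdet => ?_⟩
  have hn : dist ((n1, n2, n3, n4) : ℝ × ℝ × ℝ × ℝ) 0 < δ := by
    simp [Prod.norm_def, m1, m2, m3, m4]
  have Hn := H hn
  clear H
  set n : ℝ × ℝ × ℝ × ℝ := (n1, n2, n3, n4) with hndef
  have hRn := atR n hdet
  have hLn := atL n
  have hpos : ∀ t, 0 < D n t := by
    intro t
    rcases le_total t 0 with h | h
    · rw [(hLn t h).1]; exact one_pos
    rcases le_total ℓ t with h' | h'
    · rw [(hRn t h').1]; exact one_pos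
    exact (Hn t ⟨h, h'⟩).1
  obtain ⟨dx0, dx1, dx2⟩ := lx_d k hk0 χ χ1 χ2 χ3 h0 h1 h2 1 0 n1 n3
  obtain ⟨dy0, dy1, dy2⟩ := lx_d k hk0 χ χ1 χ2 χ3 h0 h1 h2 0 1 n2 n4
  obtain ⟨S1, S2⟩ := rescale (x0 := x0 n) (x1 := x1 n) (x2 := x2 n) (x3 := x3 n) (y0 := y0 n)
    (y1 := y1 n) (y2 := y2 n) (y3 := y3 n) dx0 dx1 dx2 dy0 dy1 dy2
    (D n) (D1 n) (D2 n) (q n) (fun _ => rfl) (fun _ => rfl) (fun _ => rfl) (fun _ => rfl) hpos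
  have bb : ∀ a b, ContDiff ℝ (⊤ : ℕ∞) (lb0 k a b) := lb0_cd k
  have bb1 : ∀ a b, ContDiff ℝ (⊤ : ℕ∞) (lb1 k a b) := lb1_cd k
  have gx0 : ∀ a b c d, ContDiff ℝ (⊤ : ℕ∞) (lx0 k χ a b c d) := fun a b c d =>
    (bb a b).add (s0.mul (bb c d))
  have gx1 : ∀ a b c d, ContDiff ℝ (⊤ : ℕ∞) (lx1 k χ χ1 a b c d) := fun a b c d =>
    ((bb1 a b).add (s1.mul (bb c d))).add (s0.mul (bb1 c d))
  have gx2 : ∀ a b c d, ContDiff ℝ (⊤ : ℕ∞) (lx2 k χ χ1 χ2 a b c d) := fun a b c d =>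
    ((contDiff_const.mul (gx0 a b c d)).add (s2.mul (bb c d))).add
      ((contDiff_const.mul s1).mul (bb1 c d))
  have gx3 : ∀ a b c d, ContDiff ℝ (⊤ : ℕ∞) (lx3 k χ χ1 χ2 χ3 a b c d) := fun a b c d =>
    (((contDiff_const.mul (gx1 a b c d)).add (s3.mul (bb c d))).add
      ((contDiff_const.mul s2).mul (bb1 c d))).sub ((contDiff_const.mul s1).mul (bb c d))
  have gD : ContDiff ℝ (⊤ : ℕ∞) (D n) :=
    ((gx0 _ _ _ _).mul (gx1 _ _ _ _)).sub ((gx1 _ _ _ _).mul (gx0 _ _ _ _))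
  have gD1 : ContDiff ℝ (⊤ : ℕ∞) (D1 n) :=
    ((gx0 _ _ _ _).mul (gx2 _ _ _ _)).sub ((gx2 _ _ _ _).mul (gx0 _ _ _ _))
  have gD2 : ContDiff ℝ (⊤ : ℕ∞) (D2 n) :=
    ((((gx1 _ _ _ _).mul (gx2 _ _ _ _)).sub ((gx2 _ _ _ _).mul (gx1 _ _ _ _))).add
      ((gx0 _ _ _ _).mul (gx3 _ _ _ _))).sub ((gx3 _ _ _ _).mul (gx0 _ _ _ _))
  have gq : ContDiff ℝ (⊤ : ℕ∞) (q n) :=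
    (((((gx2 _ _ _ _).mul (gx1 _ _ _ _)).sub ((gx1 _ _ _ _).mul (gx2 _ _ _ _))).div gD
      (fun t => (hpos t).ne')).add (contDiff_const.mul ((gD1.div gD
      (fun t => (hpos t).ne')).pow 2))).sub (gD2.div (contDiff_const.mul gD)
      (fun t => mul_ne_zero two_ne_zero (hpos t).ne'))
  obtain ⟨l0, l1, l2⟩ := hLn 0 le_rfl
  obtain ⟨r0, r1, r2⟩ := hRn ℓ le_rfl
  obtain ⟨a0, a1, a2, a3⟩ := hL 0 le_rfl
  obtain ⟨b0, b1, b2, b3⟩ := hR ℓ le_rfl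
  refine ⟨q n, _, _, _, _, gq, ?_, ?_, S1, S2, ?_, ?_, ?_, ?_, ?_, ?_, ?_, ?_, ?_⟩
  · intro t
    rcases le_total t 0 with h | h
    · rw [(hLn t h).2.2]; simpa using hε
    rcases le_total ℓ t with h' | h'
    · rw [(hRn t h').2.2]; simpa using hε
    exact (Hn t ⟨h, h'⟩).2.1
  · rintro t (h | h)
    · exact (hLn t h).2.2
    · exact (hRn t h).2.2
  · simp [l0, x0, lx0, a0, lb0]
  · simp [l0, l1, x0, x1, lx0, lx1, a0, a1, lb0, lb1]
  · simp [l0, y0, lx0, a0, lb0]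
  · simp [l0, l1, y0, y1, lx0, lx1, a0, a1, lb0, lb1]
  · simp [r0, x0, lx0, b0, lb0_add, n]
  · simp [r0, r1, x1, lx1, b0, b1, lb1_add, n]
  · simp [r0, y0, lx0, b0, lb0_add, n]
  · simp [r0, r1, y1, lx1, b0, b1, lb1_add, n]
  · intro t ht
    have h := (Hn t ht).2.2
    have hp := hpos t
    simp only [div_pow, sq_sqrt hp.le]
    rw [← add_div, lt_div_iff₀ hp]; linarith

lemma reg_value (g : ℝ → ℝ) (hg : ContDiff ℝ (⊤ : ℕ∞) g) (hs : Function.Surjective g) :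
    ∃ k c0 ε : ℝ, ∃ ginv : ℝ → ℝ, 1 < k ∧ k < 2 ∧ 0 < ε ∧ ginv (-k^2) = c0 ∧ g c0 = -k^2 ∧
      ∀ p, |p + k^2| < ε → ContDiffAt ℝ (⊤ : ℕ∞) ginv p ∧ g (ginv p) = p := by
  have gd := (contDiff_infty_iff_deriv.1 hg).1
  have gd' := (contDiff_infty_iff_deriv.1 hg).2.continuous
  set s : Set ℝ := {x | deriv g x = 0} with hsdef
  have hS : MeasureTheory.volume (g '' s) = 0 := by
    refine MeasureTheory.addHaar_image_eq_zero_of_det_fderivWithin_eq_zero MeasureTheory.volume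
      (f' := fun x => ContinuousLinearMap.toSpanSingleton ℝ (deriv g x)) ?_ ?_
    · intro x _
      exact (gd x).hasDerivAt.hasDerivWithinAt.hasFDerivWithinAt
    · intro x hx
      have : deriv g x = 0 := hx
      simp only [this, ContinuousLinearMap.toSpanSingleton_zero]
      simp [ContinuousLinearMap.det]
  obtain ⟨p, hp, hps⟩ : ∃ p ∈ Ioo (-2:ℝ) (-1), p ∉ g '' s := by
    by_contra! h
    have : MeasureTheory.volume (Ioo (-2:ℝ) (-1)) ≤ MeasureTheory.volume (g '' s) :=
      MeasureTheory.measure_mono h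
    rw [hS, Real.volume_Ioo] at this
    norm_num at this
  obtain ⟨c0, hc0⟩ := hs p
  have hne : deriv g c0 ≠ 0 := fun h => hps ⟨c0, h, hc0⟩
  have hk2 : √(-p) ^ 2 = -p := sq_sqrt (by linarith [hp.2])
  have hF : HasFDerivAt g ((ContinuousLinearEquiv.unitsEquivAut ℝ (Units.mk0 _ hne) : ℝ ≃L[ℝ] ℝ) : ℝ →L[ℝ] ℝ) c0 :=
    (gd c0).hasDerivAt.hasFDerivAt_equiv hne
  let e0 := hg.contDiffAt.toOpenPartialHomeomorph g hF (by simp)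
  have m0 : c0 ∈ e0.source := hg.contDiffAt.mem_toOpenPartialHomeomorph_source hF (by simp)
  have c0e : ∀ x, e0 x = g x := fun x => rfl
  have hop : IsOpen {x | deriv g x ≠ 0} := isOpen_ne_fun gd' continuous_const
  let e := e0.restrOpen _ hop
  have me : c0 ∈ e.source := by
    rw [OpenPartialHomeomorph.restrOpen_source]; exact ⟨m0, hne⟩
  have ce : ∀ x, e x = g x := fun x => rfl
  have mt : p ∈ e.target := by
    rw [← hc0, ← ce]; exact e.map_source me
  obtain ⟨ε, hε, hb⟩ := Metric.isOpen_iff.1 e.open_target p mt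
  refine ⟨√(-p), c0, ε, e.symm, ?_, ?_, hε, ?_, ?_, ?_⟩
  · rw [lt_sqrt (by norm_num)]; linarith [hp.2]
  · rw [sqrt_lt' (by norm_num)]; linarith [hp.1]
  · rw [hk2, neg_neg, ← hc0, ← ce]; exact e.left_inv me
  · rw [hk2, neg_neg, hc0]
  · intro y hy
    have hy' : y ∈ e.target := hb (by
      rw [Metric.mem_ball, Real.dist_eq]; rw [hk2] at hy; simpa [sub_eq_add_neg] using hy)
    have hsrc := e.map_target hy'
    rw [OpenPartialHomeomorph.restrOpen_source] at hsrc
    refine ⟨e.contDiffAt_symm_deriv hsrc.2 hy' (gd _).hasDerivAt hg.contDiffAt, ?_⟩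
    rw [← ce]; exact e.right_inv hy'

lemma per_ext (φ : ℝ → ℝ) (hφ : ContDiff ℝ (⊤ : ℕ∞) φ) (T : ℝ) (hT : 0 < T)
    (h0 : ∀ t, t ≤ 0 ∨ T ≤ t → φ t = 0) : ∃ w : ℝ → ℝ, ContDiff ℝ (⊤ : ℕ∞) w ∧
      Function.Periodic w T ∧ ∀ t ∈ Icc 0 T, w t = φ t := by
  refine ⟨fun t => φ (t - T * ⌊t / T⌋), ?_, ?_, ?_⟩
  · rw [contDiff_iff_contDiffAt]
    intro t0
    set n : ℤ := ⌊t0 / T⌋ with hn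
    have h1 : T * n ≤ t0 := by
      have := Int.floor_le (t0 / T); rw [le_div_iff₀ hT] at this; linarith
    have h2 : t0 < T * (n + 1) := by
      have := Int.lt_floor_add_one (t0 / T); rw [div_lt_iff₀ hT] at this; linarith
    have hs : ContDiffAt ℝ (⊤ : ℕ∞) (fun s => φ (s - T * n) + φ (s - T * (n - 1))) t0 := by
      apply ContDiff.contDiffAt
      exact (hφ.comp (contDiff_id.sub contDiff_const)).add
        (hφ.comp (contDiff_id.sub contDiff_const))
    refine hs.congr_of_eventuallyEq ?_
    filter_upwards [lt_mem_nhds (show T * (n - 1) < t0 by nlinarith), gt_mem_nhds h2] with s a b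
    rcases le_or_gt (T * n) s with c | c
    · have : ⌊s / T⌋ = n := by
        rw [Int.floor_eq_iff, le_div_iff₀ hT, div_lt_iff₀ hT]; constructor <;> linarith
      rw [this, h0 (s - T * (n - 1)) (Or.inr (by linarith))]; simp
    · have : ⌊s / T⌋ = n - 1 := by
        rw [Int.floor_eq_iff, le_div_iff₀ hT, div_lt_iff₀ hT]; push_cast
        constructor <;> linarith
      rw [this, h0 (s - T * n) (Or.inl (by linarith))]; simp
  · intro t
    have : (t + T) / T = t / T + 1 := by field_simp
    simp only [this, Int.floor_add_one]; push_cast; ring_nf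
  · intro t ht
    rcases ht.2.lt_or_eq with h | h
    · have : ⌊t / T⌋ = 0 := by
        rw [Int.floor_eq_iff, le_div_iff₀ hT, div_lt_iff₀ hT]; push_cast
        constructor <;> linarith [ht.1]
      simp [this]
    · subst h
      simp [div_self hT.ne', h0 t (Or.inr le_rfl), h0 0 (Or.inl le_rfl)]

lemma arg_lift {q v1 w1 v2 w2 : ℝ → ℝ} (h1 : IsSol q v1 w1) (h2 : IsSol q v2 w2)
    (i1 : v1 0 = 1) (i2 : w1 0 = 0) (i3 : v2 0 = 0) (i4 : w2 0 = 1) :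
    (∀ t, 0 < v1 t ^ 2 + v2 t ^ 2) ∧
    Continuous (fun t => ∫ s in (0:ℝ)..t, 1 / (v1 s ^ 2 + v2 s ^ 2)) ∧
    ∀ t, v1 t = √(v1 t ^ 2 + v2 t ^ 2) * cos (∫ s in (0:ℝ)..t, 1 / (v1 s ^ 2 + v2 s ^ 2)) ∧
      v2 t = √(v1 t ^ 2 + v2 t ^ 2) * sin (∫ s in (0:ℝ)..t, 1 / (v1 s ^ 2 + v2 s ^ 2)) := by
  have W : ∀ t, v1 t * w2 t - w1 t * v2 t = 1 := fun t => by
    rw [wronsk_const' h1 h2 0 t, i1, i2, i3, i4]; norm_num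
  have hN : ∀ t, 0 < v1 t ^ 2 + v2 t ^ 2 := by
    intro t
    by_contra! h
    have a : v1 t = 0 := by nlinarith [sq_nonneg (v1 t), sq_nonneg (v2 t)]
    have b : v2 t = 0 := by nlinarith [sq_nonneg (v1 t), sq_nonneg (v2 t)]
    have := W t
    rw [a, b] at this; norm_num at this
  have c1 : Continuous v1 := continuous_iff_continuousAt.2 fun t => (h1 t).1.continuousAt
  have c2 : Continuous v2 := continuous_iff_continuousAt.2 fun t => (h2 t).1.continuousAt
  have cI : Continuous (fun t => 1 / (v1 t ^ 2 + v2 t ^ 2)) :=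
    continuous_const.div (by fun_prop) (fun t => (hN t).ne')
  set θ : ℝ → ℝ := fun t => ∫ s in (0:ℝ)..t, 1 / (v1 s ^ 2 + v2 s ^ 2) with hθ
  have dθ : ∀ t, HasDerivAt θ (1 / (v1 t ^ 2 + v2 t ^ 2)) t := fun t =>
    (cI.integral_hasStrictDerivAt 0 t).hasDerivAt
  have hθ0 : θ 0 = 0 := by simp [hθ]
  have dR : ∀ t, HasDerivAt (fun t => √(v1 t ^ 2 + v2 t ^ 2))
      ((v1 t * w1 t + v2 t * w2 t) / √(v1 t ^ 2 + v2 t ^ 2)) t := fun t => by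
    refine ((((h1 t).1.pow 2).add ((h2 t).1.pow 2)).sqrt (hN t).ne').congr_deriv ?_
    have := (sqrt_pos.2 (hN t)).ne'
    simp only [Pi.add_apply, Pi.pow_apply]
    field_simp
    push_cast; ring
  have hR : ∀ t, √(v1 t ^ 2 + v2 t ^ 2) ≠ 0 := fun t => (sqrt_pos.2 (hN t)).ne'
  have key : ∀ a b : ℝ, ∀ t, (a * (v1 t * cos (θ t) + v2 t * sin (θ t)) +
      b * (v2 t * cos (θ t) - v1 t * sin (θ t))) / √(v1 t ^ 2 + v2 t ^ 2) = a := by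
    intro a b t
    have d : ∀ t, HasDerivAt (fun t => (a * (v1 t * cos (θ t) + v2 t * sin (θ t)) +
      b * (v2 t * cos (θ t) - v1 t * sin (θ t))) / √(v1 t ^ 2 + v2 t ^ 2)) 0 t := by
      intro t
      have e1 := (((h1 t).1.mul (dθ t).cos).add ((h2 t).1.mul (dθ t).sin)).const_mul a
      have e2 := (((h2 t).1.mul (dθ t).cos).sub ((h1 t).1.mul (dθ t).sin)).const_mul b
      refine ((e1.add e2).div (dR t) (hR t)).congr_deriv ?_
      have hW := W t
      have hsq := sq_sqrt (hN t).le
      have hr := hR t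
      simp only [Pi.add_apply, Pi.mul_apply, Pi.sub_apply]
      rw [div_eq_zero_iff]; left
      generalize √(v1 t ^ 2 + v2 t ^ 2) = R at *
      rw [← hsq]
      field_simp
      have hw1 : w1 t * R ^ 2 = (v1 t * w1 t + v2 t * w2 t) * v1 t - v2 t := by
        rw [hsq]; linear_combination (-v2 t) * hW
      have hw2 : w2 t * R ^ 2 = (v1 t * w1 t + v2 t * w2 t) * v2 t + v1 t := by
        rw [hsq]; linear_combination (v1 t) * hW
      linear_combination (a * cos (θ t) - b * sin (θ t)) * hw1 + (a * sin (θ t) + b * cos (θ t)) * hw2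
    have := is_const_of_deriv_eq_zero (fun t => (d t).differentiableAt) (fun t => (d t).deriv) t 0
    simp only [hθ0, i1, i3] at this
    rw [this]; simp
  refine ⟨hN, continuous_iff_continuousAt.2 fun t => (dθ t).continuousAt, fun t => ?_⟩
  have k1 := key 1 0 t
  have k2 := key 0 1 t
  rw [div_eq_iff (hR t)] at k1 k2
  have cs := sin_sq_add_cos_sq (θ t)
  constructor
  · linear_combination (cos (θ t)) * k1 - sin (θ t) * k2 - v1 t * cs
  · linear_combination (sin (θ t)) * k1 + cos (θ t) * k2 - v2 t * cs

lemma bdd_of_const_outside (h : ℝ → ℝ) (hc : Continuous h) (a b c : ℝ)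
    (ho : ∀ t, t ≤ a ∨ b ≤ t → h t = c) : ∃ Q, ∀ t, |h t| ≤ Q := by
  obtain ⟨Q, hQ⟩ := isCompact_Icc.exists_bound_of_continuousOn (s := Icc a b) hc.continuousOn
  refine ⟨max Q |c|, fun t => ?_⟩
  rcases le_total t a with h1 | h1
  · rw [ho t (Or.inl h1)]; exact le_max_right _ _
  rcases le_total b t with h2 | h2
  · rw [ho t (Or.inr h2)]; exact le_max_right _ _
  · exact (hQ t ⟨h1, h2⟩).trans (le_max_left _ _)

lemma recip_bound (v1 v2 n1 n2 n3 n4 e : ℝ) (hv : 0 < v1^2 + v2^2) (he : e ≤ 1/16)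
    (h1 : |n1| ≤ e) (h2 : |n2| ≤ e) (h3 : |n3| ≤ e) (h4 : |n4| ≤ e) :
    0 < (v1 * (1 + n1) + v2 * n3)^2 + (v1 * n2 + v2 * (1 + n4))^2 ∧
    |1 / ((v1 * (1 + n1) + v2 * n3)^2 + (v1 * n2 + v2 * (1 + n4))^2) - 1 / (v1^2 + v2^2)|
      ≤ 16 * e * (1 / (v1^2 + v2^2)) := by
  have he0 : 0 ≤ e := (abs_nonneg _).trans h1
  have sq1 : ∀ n : ℝ, |n| ≤ e → n^2 ≤ e^2 := fun n hn => by
    rw [← sq_abs n]; exact pow_le_pow_left₀ (abs_nonneg _) hn 2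
  have q1 := sq1 _ h1
  have q2 := sq1 _ h2
  have q3 := sq1 _ h3
  have q4 := sq1 _ h4
  set N := v1^2 + v2^2 with hN
  set M := (v1 * (1 + n1) + v2 * n3)^2 + (v1 * n2 + v2 * (1 + n4))^2 with hM
  have ex : M - N = 2 * (v1 * (v1 * n1 + v2 * n3) + v2 * (v1 * n2 + v2 * n4)) +
      ((v1 * n1 + v2 * n3)^2 + (v1 * n2 + v2 * n4)^2) := by rw [hM, hN]; ring
  have b1 : (v1 * n1 + v2 * n3)^2 ≤ N * (2 * e^2) := by
    have : (v1 * n1 + v2 * n3)^2 ≤ N * (n1^2 + n3^2) := by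
      rw [hN]; nlinarith [sq_nonneg (v1 * n3 - v2 * n1)]
    exact this.trans (mul_le_mul_of_nonneg_left (by linarith) hv.le)
  have b2 : (v1 * n2 + v2 * n4)^2 ≤ N * (2 * e^2) := by
    have : (v1 * n2 + v2 * n4)^2 ≤ N * (n2^2 + n4^2) := by
      rw [hN]; nlinarith [sq_nonneg (v1 * n4 - v2 * n2)]
    exact this.trans (mul_le_mul_of_nonneg_left (by linarith) hv.le)
  have b3 : |v1 * (v1 * n1 + v2 * n3) + v2 * (v1 * n2 + v2 * n4)| ≤ 2 * e * N := by
    apply abs_le_of_sq_le_sq _ (by positivity)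
    have : (v1 * (v1 * n1 + v2 * n3) + v2 * (v1 * n2 + v2 * n4))^2 ≤
        N * ((v1 * n1 + v2 * n3)^2 + (v1 * n2 + v2 * n4)^2) := by
      rw [hN]; nlinarith [sq_nonneg (v1 * (v1 * n2 + v2 * n4) - v2 * (v1 * n1 + v2 * n3))]
    calc _ ≤ _ := this
      _ ≤ N * (N * (2 * e^2) + N * (2 * e^2)) := mul_le_mul_of_nonneg_left (by linarith) hv.le
      _ = _ := by ring
  have ee : N * e^2 ≤ N * e := mul_le_mul_of_nonneg_left (by nlinarith) hv.le
  have bd : |M - N| ≤ 8 * e * N := by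
    rw [ex]
    rw [abs_le] at b3 ⊢
    have p1 := sq_nonneg (v1 * n1 + v2 * n3)
    have p2 := sq_nonneg (v1 * n2 + v2 * n4)
    constructor <;> nlinarith
  have eN : e * N ≤ 1/16 * N := mul_le_mul_of_nonneg_right he hv.le
  have hMN : N / 2 ≤ M := by
    rw [abs_le] at bd; linarith [bd.1]
  have hMp : 0 < M := by linarith
  refine ⟨hMp, ?_⟩
  rw [div_sub_div _ _ hMp.ne' hv.ne', abs_div, abs_of_pos (mul_pos hMp hv), div_le_iff₀ (mul_pos hMp hv)]
  have : 16 * e * (1 / N) * (M * N) = 16 * e * M := by field_simp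
  rw [this, show 1 * N - M * 1 = -(M - N) by ring, abs_neg]
  refine bd.trans ?_
  have := mul_le_mul_of_nonneg_left hMN he0
  linarith

lemma seg_lemma (g : ℝ → ℝ) (hg : Continuous g) (hgs : Function.Surjective g)
    (c0 a b r0 θ0 l0 r1 α l1 δ : ℝ) (hab : a < b) (hr0 : 0 < r0) (hr1 : 0 < r1) (hθ : θ0 < α)
    (hδ : 0 < δ) : ∃ u y1 z1 y2 z2 : ℝ → ℝ, ∃ n1 n2 n3 n4 : ℝ,
      ContDiff ℝ (⊤ : ℕ∞) u ∧ (∀ t, t ≤ a ∨ b ≤ t → u t = c0) ∧ (∃ t ∈ Ioo a b, u t ≠ c0) ∧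
      IsSol (fun t => g (u t)) y1 z1 ∧ IsSol (fun t => g (u t)) y2 z2 ∧
      y1 b = r1 * cos α ∧ y2 b = r1 * sin α ∧
      z1 b = l1 * (r1 * cos α) - sin α / r1 ∧ z2 b = l1 * (r1 * sin α) + cos α / r1 ∧
      |n1| < δ ∧ |n2| < δ ∧ |n3| < δ ∧ |n4| < δ ∧ (1 + n1) * (1 + n4) - n2 * n3 = 1 ∧
      y1 a = r0 * cos θ0 * (1 + n1) + r0 * sin θ0 * n3 ∧
      y2 a = r0 * cos θ0 * n2 + r0 * sin θ0 * (1 + n4) ∧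
      z1 a = (l0 * (r0 * cos θ0) - sin θ0 / r0) * (1 + n1) +
        (l0 * (r0 * sin θ0) + cos θ0 / r0) * n3 ∧
      z2 a = (l0 * (r0 * cos θ0) - sin θ0 / r0) * n2 +
        (l0 * (r0 * sin θ0) + cos θ0 / r0) * (1 + n4) ∧
      |(∫ t in a..b, 1 / (y1 t ^ 2 + y2 t ^ 2)) - (α - θ0)| ≤ 1 := by
  obtain ⟨qs, v1, w1, v2, w2, hqs, h1, h2, va1, va2, wa1, wa2, vb1, vb2, wb1, wb2, hI⟩ :=
    exact_lemma a b r0 θ0 l0 r1 α l1 hab hr0 hr1 hθ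
  have c1 : Continuous v1 := continuous_iff_continuousAt.2 fun t => (h1 t).1.continuousAt
  have c2 : Continuous v2 := continuous_iff_continuousAt.2 fun t => (h2 t).1.continuousAt
  have Wb : v1 b * w2 b - w1 b * v2 b = 1 := by
    rw [vb1, vb2, wb1, wb2]
    field_simp
    linear_combination sin_sq_add_cos_sq α
  have W : ∀ t, v1 t * w2 t - w1 t * v2 t = 1 := fun t => by
    rw [wronsk_const' h1 h2 b t, Wb]
  have hN : ∀ t, 0 < v1 t ^ 2 + v2 t ^ 2 := by
    intro t
    by_contra! h
    have a : v1 t = 0 := by nlinarith [sq_nonneg (v1 t), sq_nonneg (v2 t)]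
    have b : v2 t = 0 := by nlinarith [sq_nonneg (v1 t), sq_nonneg (v2 t)]
    have := W t
    rw [a, b] at this; norm_num at this
  obtain ⟨K0, hK0⟩ := isCompact_Icc.exists_bound_of_continuousOn (s := Icc a b)
    (f := fun t => v1 t ^ 2 + v2 t ^ 2) (by fun_prop)
  set K := |K0| + 1 with hKdef
  have hKp : 0 < K := by positivity
  have hK : ∀ t ∈ Icc a b, v1 t ^ 2 + v2 t ^ 2 ≤ K := fun t ht =>
    (le_abs_self _).trans ((hK0 t ht).trans ((le_abs_self _).trans (by rw [hKdef]; linarith)))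
  have hαθ : 0 < α - θ0 := by linarith
  set e := min (δ / 2) (1 / (16 * (α - θ0) + 16)) with he
  have hep : 0 < e := lt_min (by linarith) (by positivity)
  have heδ : e < δ := (min_le_left _ _).trans_lt (by linarith)
  have he2 : e * (16 * (α - θ0) + 16) ≤ 1 := by
    rw [← le_div_iff₀ (by positivity)]; exact min_le_right _ _
  have he16 : e ≤ 1/16 := by nlinarith
  have heα : 16 * e * (α - θ0) ≤ 1 := by nlinarith
  obtain ⟨u, hu, huo, hune, hui⟩ := approx_lemma g qs hg hgs hqs c0 a b (e / (2 * K)) hab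
    (by positivity)
  have hq : Continuous (fun t => g (u t)) := hg.comp hu.continuous
  obtain ⟨Q, hQ⟩ := bdd_of_const_outside (fun t => g (u t)) hq a b (g c0)
    (fun t ht => by simp [huo t ht])
  obtain ⟨y1, z1, s1, yb1, zb1⟩ := sol_exists (fun t => g (u t)) hq Q hQ b (v1 b) (w1 b)
  obtain ⟨y2, z2, s2, yb2, zb2⟩ := sol_exists (fun t => g (u t)) hq Q hQ b (v2 b) (w2 b)
  have hKη : K * (e / (2 * K)) ≤ 1 := by field_simp; linarith
  have hKe : 2 * K * (e / (2 * K)) = e := by field_simp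
  have N1 := near_lemma hqs hq h1 h2 Wb hK s1 hui hKη hab.le (by
    rw [yb1, zb1]
    linear_combination (v1 b * w2 b - w1 b * v2 b + 1) * Wb)
  have N2 := near_lemma hqs hq h1 h2 Wb hK s2 hui hKη hab.le (by
    rw [yb2, zb2]
    linear_combination (v1 b * w2 b - w1 b * v2 b + 1) * Wb)
  rw [hKe] at N1 N2
  have m1 : w2 b * y1 b - v2 b * z1 b = 1 := by rw [yb1, zb1]; linarith
  have m3 : v1 b * z1 b - w1 b * y1 b = 0 := by rw [yb1, zb1]; ring
  have m2 : w2 b * y2 b - v2 b * z2 b = 0 := by rw [yb2, zb2]; ring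
  have m4 : v1 b * z2 b - w1 b * y2 b = 1 := by rw [yb2, zb2]; linarith
  rw [m1, m3] at N1
  rw [m2, m4] at N2
  have cy1 : Continuous y1 := continuous_iff_continuousAt.2 fun t => (s1 t).1.continuousAt
  have cy2 : Continuous y2 := continuous_iff_continuousAt.2 fun t => (s2 t).1.continuousAt
  have ry1 : ∀ t, y1 t = v1 t * (1 + (w2 t * y1 t - v2 t * z1 t - 1)) +
      v2 t * (v1 t * z1 t - w1 t * y1 t - 0) := fun t => by linear_combination (-y1 t) * W t
  have ry2 : ∀ t, y2 t = v1 t * (w2 t * y2 t - v2 t * z2 t - 0) +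
      v2 t * (1 + (v1 t * z2 t - w1 t * y2 t - 1)) := fun t => by linear_combination (-y2 t) * W t
  have rz1 : ∀ t, z1 t = w1 t * (1 + (w2 t * y1 t - v2 t * z1 t - 1)) +
      w2 t * (v1 t * z1 t - w1 t * y1 t - 0) := fun t => by linear_combination (-z1 t) * W t
  have rz2 : ∀ t, z2 t = w1 t * (w2 t * y2 t - v2 t * z2 t - 0) +
      w2 t * (1 + (v1 t * z2 t - w1 t * y2 t - 1)) := fun t => by linear_combination (-z2 t) * W t
  have Wy : ∀ t, y1 t * z2 t - z1 t * y2 t = 1 := fun t => by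
    rw [wronsk_const' s1 s2 b t, yb1, zb1, yb2, zb2, Wb]
  have rb : ∀ t ∈ Icc a b, 0 < y1 t ^ 2 + y2 t ^ 2 ∧
      |1 / (y1 t ^ 2 + y2 t ^ 2) - 1 / (v1 t ^ 2 + v2 t ^ 2)| ≤
        16 * e * (1 / (v1 t ^ 2 + v2 t ^ 2)) := by
    intro t ht
    have := recip_bound (v1 t) (v2 t) _ _ _ _ e (hN t) he16 (N1 t ht).1 (N2 t ht).1
      (N1 t ht).2 (N2 t ht).2
    rw [← ry1 t, ← ry2 t] at this
    exact this
  have ma : a ∈ Icc a b := left_mem_Icc.2 hab.le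
  refine ⟨u, y1, z1, y2, z2, w2 a * y1 a - v2 a * z1 a - 1, w2 a * y2 a - v2 a * z2 a - 0,
    v1 a * z1 a - w1 a * y1 a - 0, v1 a * z2 a - w1 a * y2 a - 1, hu, huo, hune, s1, s2,
    by rw [yb1, vb1], by rw [yb2, vb2], by rw [zb1, wb1], by rw [zb2, wb2],
    (N1 a ma).1.trans_lt heδ, (N2 a ma).1.trans_lt heδ, (N1 a ma).2.trans_lt heδ,
    (N2 a ma).2.trans_lt heδ, ?_, ?_, ?_, ?_, ?_, ?_⟩
  · linear_combination (y1 a * z2 a - z1 a * y2 a) * W a + Wy a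
  · rw [← va1, ← va2]; exact ry1 a
  · rw [← va1, ← va2]; exact ry2 a
  · rw [← wa1, ← wa2]; exact rz1 a
  · rw [← wa1, ← wa2]; exact rz2 a
  · have iv : IntervalIntegrable (fun t => 1 / (v1 t ^ 2 + v2 t ^ 2)) MeasureTheory.volume a b :=
      (continuous_const.div (by fun_prop) (fun t => (hN t).ne')).intervalIntegrable _ _
    have iy : IntervalIntegrable (fun t => 1 / (y1 t ^ 2 + y2 t ^ 2)) MeasureTheory.volume a b := by
      apply ContinuousOn.intervalIntegrable
      rw [uIcc_of_le hab.le]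
      exact continuousOn_const.div (by fun_prop) (fun t ht => (rb t ht).1.ne')
    rw [← hI, ← intervalIntegral.integral_sub iy iv]
    have := intervalIntegral.norm_integral_le_of_norm_le (μ := MeasureTheory.volume) hab.le
      (f := fun t => 1 / (y1 t ^ 2 + y2 t ^ 2) - 1 / (v1 t ^ 2 + v2 t ^ 2))
      (g := fun t => 16 * e * (1 / (v1 t ^ 2 + v2 t ^ 2)))
      (Filter.Eventually.of_forall fun t ht => (rb t ⟨ht.1.le, ht.2⟩).2) (iv.const_mul _)
    rw [intervalIntegral.integral_const_mul, hI] at this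
    exact this.trans heα

/-- Proposition 3.6, matrix–winding form. For `f` smooth with `f'`
surjective and nowhere flat, every element of `G₀` — encoded by a matrix `A ∈ SL(2,ℝ)`
and a winding `α > 0` compatible with the first row of `A` — is the lifted monodromy of
`f' ∘ u` for some nonconstant smooth `2π`-periodic `u`. -/
theorem stmt_13 (f : ℝ → ℝ) (hf : ContDiff ℝ (⊤ : ℕ∞) f)
    (hsurj : Function.Surjective (deriv f)) (hnf : NowhereFlat (deriv f))
    (A : Matrix (Fin 2) (Fin 2) ℝ) (hA : A.det = 1)
    (α : ℝ) (hα : 0 < α)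
    (hrow : ∃ r : ℝ, 0 < r ∧ A 0 0 = r * Real.cos α ∧ A 0 1 = r * Real.sin α) :
    ∃ u : ℝ → ℝ, ContDiff ℝ (⊤ : ℕ∞) u ∧ Function.Periodic u (2 * π) ∧
      (¬ ∃ c : ℝ, u = fun _ => c) ∧
      ∃ Φ : ℝ → Matrix (Fin 2) (Fin 2) ℝ, ∃ θ : ℝ → ℝ,
        IsFundMatrix (fun t => deriv f (u t)) Φ ∧ IsArgLift Φ θ ∧
        Φ (2 * π) = A ∧ θ (2 * π) = α := by
  set g := deriv f with hgdef
  have hg : ContDiff ℝ (⊤ : ℕ∞) g := (contDiff_infty_iff_deriv.1 hf).2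
  obtain ⟨r1, hr1, hA1, hA2⟩ := hrow
  have hdet : A 0 0 * A 1 1 - A 0 1 * A 1 0 = 1 := by rw [← Matrix.det_fin_two, hA]
  obtain ⟨k, c0, ε, ginv, hk1, hk2, hε, hgi, hgc, hinv⟩ := reg_value g hg hsurj
  have hk0 : 0 < k := by linarith
  set ℓ := min (1/4) (α / 2) with hℓ
  have hℓp : 0 < ℓ := lt_min (by norm_num) (by linarith)
  have hℓ1 : ℓ ≤ 1/4 := min_le_left _ _
  have hℓ2 : ℓ ≤ α / 2 := min_le_right _ _
  have hπ := pi_gt_three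
  have hcosb : ∀ t ∈ Icc 0 ℓ, 7/8 ≤ cos (k * t) := by
    intro t ht
    have h := one_sub_sq_div_two_le_cos (x := k * t)
    have a1 : 0 ≤ k * t := mul_nonneg hk0.le ht.1
    have a2 : k * t ≤ 1/2 := by nlinarith [ht.1, ht.2]
    nlinarith
  have hcos : ∀ t ∈ Icc 0 ℓ, 1/2 < cos (k * t)^2 + (sin (k * t) / k)^2 := by
    intro t ht
    have := hcosb t ht
    nlinarith [sq_nonneg (sin (k * t) / k)]
  have hcl := hcosb ℓ ⟨hℓp.le, le_rfl⟩
  have hclp : 0 < cos (k * ℓ) := by linarith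
  set x := sin (k * ℓ) / k / cos (k * ℓ) with hx
  have hkl : 0 < k * ℓ := mul_pos hk0 hℓp
  have hkl2 : k * ℓ ≤ 1/2 := by nlinarith
  have hsp : 0 < sin (k * ℓ) := sin_pos_of_pos_of_lt_pi hkl (by linarith)
  have hxp : 0 < x := by positivity
  have hxle : x ≤ 8/7 * ℓ := by
    have := sin_lt hkl
    rw [hx, div_div, div_le_iff₀ (by positivity)]
    have : 7/8 * (k * ℓ) ≤ cos (k * ℓ) * (k * ℓ) := mul_le_mul_of_nonneg_right hcl hkl.le
    nlinarith
  set θ0 := arctan x with hθ0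
  have hθ0x : θ0 ≤ x := by
    have h0 : 0 < θ0 := arctan_pos.2 hxp
    have := lt_tan h0 (arctan_lt_pi_div_two x)
    rw [hθ0, tan_arctan] at this
    exact this.le
  have hθ0a : θ0 < α := by linarith
  have hθ0p : 0 < θ0 := arctan_pos.2 hxp
  have hcθ : 0 < cos θ0 := cos_arctan_pos x
  set r0 := cos (k * ℓ) / cos θ0 with hr0
  have hr0p : 0 < r0 := div_pos hclp hcθ
  have hr0c : cos (k * ℓ) = r0 * cos θ0 := by rw [hr0]; field_simp
  have hr0s : sin (k * ℓ) / k = r0 * sin θ0 := by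
    have : sin θ0 = x * cos θ0 := by
      rw [← tan_mul_cos hcθ.ne', hθ0, tan_arctan]
    rw [this, hr0, hx]; field_simp
  obtain ⟨l0, L1, L2⟩ := polar_row (cos (k * ℓ)) (sin (k * ℓ) / k) (-(k * sin (k * ℓ)))
    (cos (k * ℓ)) r0 θ0 hr0p (by field_simp; linear_combination sin_sq_add_cos_sq (k * ℓ)) hr0c hr0s
  obtain ⟨l1, M1, M2⟩ := polar_row (A 0 0) (A 0 1) (A 1 0) (A 1 1) r1 α hr1 hdet hA1 hA2
  obtain ⟨δ, hδ, hloc⟩ := local_lemma k ℓ ε hk0 hℓp hε hcos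
  have hℓ2π : ℓ < 2 * π := by linarith
  obtain ⟨u2, y1, z1, y2, z2, n1, n2, n3, n4, hu2, hu2o, ⟨t1, ht1, hu2n⟩, s1, s2, yb1, yb2, zb1, zb2,
    b1, b2, b3, b4, hdn, ya1, ya2, za1, za2, hint⟩ := seg_lemma g hg.continuous hsurj c0 ℓ (2 * π)
    r0 θ0 l0 r1 α l1 δ hℓ2π hr0p hr1 hθ0a hδ
  obtain ⟨q1, X, X', Y, Y', hq1, hq1b, hq1o, sX, sY, X0, X'0, Y0, Y'0, Xℓ, X'ℓ, Yℓ, Y'ℓ, hXY⟩ :=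
    hloc n1 n2 n3 n4 b1 b2 b3 b4 hdn
  rw [← hr0c, ← hr0s] at ya1 ya2
  rw [← L1, ← L2] at za1 za2
  rw [← hA1] at yb1
  rw [← hA2] at yb2
  rw [← M1] at zb1
  rw [← M2] at zb2
  have E1 : y1 ℓ = X ℓ := by rw [ya1, Xℓ, lb0]; ring
  have E2 : z1 ℓ = X' ℓ := by rw [za1, X'ℓ, lb1]; ring
  have E3 : y2 ℓ = Y ℓ := by rw [ya2, Yℓ, lb0]; ring
  have E4 : z2 ℓ = Y' ℓ := by rw [za2, Y'ℓ, lb1]; ring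
  have hu1 : ContDiff ℝ (⊤ : ℕ∞) (fun t => ginv (q1 t)) := by
    rw [contDiff_iff_contDiffAt]
    intro t
    exact ((hinv _ (hq1b t)).1).comp t hq1.contDiffAt
  have hu1o : ∀ t, t ≤ 0 ∨ ℓ ≤ t → ginv (q1 t) = c0 := fun t ht => by rw [hq1o t ht, hgi]
  have hφ : ContDiff ℝ (⊤ : ℕ∞) (fun t => (ginv (q1 t) - c0) + (u2 t - c0)) :=
    (hu1.sub contDiff_const).add (hu2.sub contDiff_const)
  obtain ⟨w, hw, hwp, hwe⟩ := per_ext _ hφ (2 * π) (by linarith) (by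
    rintro t (h | h)
    · rw [hu1o t (Or.inl h), hu2o t (Or.inl (by linarith))]; ring
    · rw [hu1o t (Or.inr (by linarith)), hu2o t (Or.inr h)]; ring)
  have hu : ContDiff ℝ (⊤ : ℕ∞) (fun t => c0 + w t) := contDiff_const.add hw
  have uL : ∀ t ∈ Icc 0 ℓ, g (c0 + w t) = q1 t := by
    intro t ht
    rw [hwe t ⟨ht.1, by linarith [ht.2]⟩, hu2o t (Or.inl ht.2)]
    rw [show c0 + (ginv (q1 t) - c0 + (c0 - c0)) = ginv (q1 t) by ring]
    exact (hinv _ (hq1b t)).2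
  have uR' : ∀ t ∈ Icc ℓ (2 * π), c0 + w t = u2 t := by
    intro t ht
    rw [hwe t ⟨by linarith [ht.1], ht.2⟩, hu1o t (Or.inr ht.1)]; ring
  have uR : ∀ t ∈ Icc ℓ (2 * π), g (c0 + w t) = g (u2 t) := fun t ht => by rw [uR' t ht]
  have hper : Function.Periodic (fun t => c0 + w t) (2 * π) := fun t => by simp [hwp t]
  have hqc : Continuous (fun t => g (c0 + w t)) := hg.continuous.comp hu.continuous
  obtain ⟨Q, hQ'⟩ := isCompact_Icc.exists_bound_of_continuousOn (s := Icc 0 (2 * π)) hqc.continuousOn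
  have hQ : ∀ t, |g (c0 + w t)| ≤ Q := by
    intro t
    obtain ⟨s, hs, hst⟩ := hwp.exists_mem_Ico₀ (by linarith) t
    rw [hst]; exact hQ' s ⟨hs.1, hs.2.le⟩
  obtain ⟨V1, Z1, S1, V10, Z10⟩ := sol_exists _ hqc Q hQ 0 1 0
  obtain ⟨V2, Z2, S2, V20, Z20⟩ := sol_exists _ hqc Q hQ 0 0 1
  have UL1 := sol_unique (a := 0) (b := ℓ) sX sY (by rw [X0, X'0, Y0, Y'0]; norm_num) S1 uL
    (by rw [V10, X0]) (by rw [Z10, X'0])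
  have UL2 := sol_unique (a := 0) (b := ℓ) sY sX (by rw [X0, X'0, Y0, Y'0]; norm_num) S2 uL
    (by rw [V20, Y0]) (by rw [Z20, Y'0])
  have mℓ : ℓ ∈ Icc 0 ℓ := ⟨hℓp.le, le_rfl⟩
  have Wℓ : y1 ℓ * z2 ℓ - z1 ℓ * y2 ℓ = 1 := by
    rw [wronsk_const' s1 s2 (2 * π) ℓ, yb1, yb2, zb1, zb2]; linarith
  have UR1 := sol_unique (a := ℓ) (b := 2 * π) s1 s2 (by rw [Wℓ]; exact one_ne_zero) S1 uR
    (by rw [(UL1 ℓ mℓ).1, E1]) (by rw [(UL1 ℓ mℓ).2, E2])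
  have UR2 := sol_unique (a := ℓ) (b := 2 * π) s2 s1 (by
      intro h; apply one_ne_zero (α := ℝ); linarith) S2 uR
    (by rw [(UL2 ℓ mℓ).1, E3]) (by rw [(UL2 ℓ mℓ).2, E4])
  have mb : 2 * π ∈ Icc ℓ (2 * π) := ⟨hℓ2π.le, le_rfl⟩
  obtain ⟨hNp, hθc, hθe⟩ := arg_lift S1 S2 V10 Z10 V20 Z20
  set θ : ℝ → ℝ := fun t => ∫ s in (0:ℝ)..t, 1 / (V1 s ^ 2 + V2 s ^ 2) with hθdef
  have F1 : V1 (2 * π) = A 0 0 := by rw [(UR1 _ mb).1, yb1]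
  have F2 : V2 (2 * π) = A 0 1 := by rw [(UR2 _ mb).1, yb2]
  have F3 : Z1 (2 * π) = A 1 0 := by rw [(UR1 _ mb).2, zb1]
  have F4 : Z2 (2 * π) = A 1 1 := by rw [(UR2 _ mb).2, zb2]
  have cV1 : Continuous V1 := continuous_iff_continuousAt.2 fun t => (S1 t).1.continuousAt
  have cV2 : Continuous V2 := continuous_iff_continuousAt.2 fun t => (S2 t).1.continuousAt
  have cI : Continuous (fun t => 1 / (V1 t ^ 2 + V2 t ^ 2)) :=
    continuous_const.div (by fun_prop) (fun t => (hNp t).ne')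
  have hsplit : θ (2 * π) = (∫ s in (0:ℝ)..ℓ, 1 / (V1 s ^ 2 + V2 s ^ 2)) +
      ∫ s in ℓ..(2 * π), 1 / (V1 s ^ 2 + V2 s ^ 2) :=
    (intervalIntegral.integral_add_adjacent_intervals (cI.intervalIntegrable _ _)
      (cI.intervalIntegrable _ _)).symm
  have hI1 : |∫ s in (0:ℝ)..ℓ, 1 / (V1 s ^ 2 + V2 s ^ 2)| ≤ 1 := by
    have := intervalIntegral.norm_integral_le_of_norm_le_const (a := 0) (b := ℓ) (C := 2)
      (f := fun s => 1 / (V1 s ^ 2 + V2 s ^ 2)) (by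
        intro s hs
        rw [uIoc_of_le hℓp.le] at hs
        have ms : s ∈ Icc 0 ℓ := ⟨hs.1.le, hs.2⟩
        have := hXY s ms
        rw [← (UL1 s ms).1, ← (UL2 s ms).1] at this
        rw [Real.norm_eq_abs, abs_of_pos (div_pos one_pos (hNp s)), div_le_iff₀ (hNp s)]
        linarith)
    rw [Real.norm_eq_abs, sub_zero, abs_of_pos hℓp] at this
    linarith
  have hI2 : ∫ s in ℓ..(2 * π), 1 / (V1 s ^ 2 + V2 s ^ 2) =
      ∫ s in ℓ..(2 * π), 1 / (y1 s ^ 2 + y2 s ^ 2) := by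
    apply intervalIntegral.integral_congr
    intro s hs
    rw [uIcc_of_le hℓ2π.le] at hs
    simp only [(UR1 s hs).1, (UR2 s hs).1]
  rw [← hI2] at hint
  have hθα : θ (2 * π) = α := by
    obtain ⟨ec, es⟩ := hθe (2 * π)
    rw [F1, F2, hA1, hA2] at ec es
    have hR : √((r1 * cos α) ^ 2 + (r1 * sin α) ^ 2) = r1 := by
      rw [show (r1 * cos α) ^ 2 + (r1 * sin α) ^ 2 = r1 ^ 2 by
        linear_combination r1 ^ 2 * sin_sq_add_cos_sq α, sqrt_sq hr1.le]
    rw [hR] at ec es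
    have ec' := mul_left_cancel₀ hr1.ne' ec
    have es' := mul_left_cancel₀ hr1.ne' es
    have h1 : cos (θ (2 * π) - α) = 1 := by
      rw [cos_sub]
      show cos (∫ s in (0:ℝ)..(2 * π), 1 / (V1 s ^ 2 + V2 s ^ 2)) * cos α +
        sin (∫ s in (0:ℝ)..(2 * π), 1 / (V1 s ^ 2 + V2 s ^ 2)) * sin α = 1
      rw [← ec', ← es']
      linear_combination sin_sq_add_cos_sq α
    rw [abs_le] at hI1 hint
    rw [cos_eq_one_iff_of_lt_of_lt (by rw [hsplit]; linarith [hI1.1, hint.1])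
      (by rw [hsplit]; linarith [hI1.2, hint.2])] at h1
    linarith
  refine ⟨fun t => c0 + w t, hu, hper, ?_, fun t => !![V1 t, V2 t; Z1 t, Z2 t], θ, ⟨?_, ?_⟩,
    ⟨hθc.continuousOn, by simp [hθdef], ?_⟩, ?_, hθα⟩
  · rintro ⟨c, hc⟩
    have e1 := congrFun hc t1
    have e2 := congrFun hc ℓ
    rw [uR' t1 ⟨ht1.1.le, ht1.2.le⟩] at e1
    rw [uR' ℓ ⟨le_rfl, hℓ2π.le⟩, hu2o ℓ (Or.inl le_rfl)] at e2
    exact hu2n (by rw [e1, e2])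
  · ext i j
    fin_cases i <;> fin_cases j <;> simp [V10, V20, Z10, Z20]
  · intro t i j
    fin_cases i <;> fin_cases j
    · simpa using (S1 t).1
    · simpa using (S2 t).1
    · simpa using (S1 t).2
    · simpa using (S2 t).2
  · intro t _
    exact hθe t
  · ext i j
    fin_cases i <;> fin_cases j <;> simp [F1, F2, F3, F4]
end

section
/- For every A ∈ SL(2,ℝ), every α > 0 for which the first row of A satisfies (A₁₁, A₁₂) = r·(cos α, sin α) for some r > 0, and every y₀ ∈ ℝ, there exist ε₁ ∈ (0, π) and a smooth function q : [0,2π] → ℝ such that: q(t) = y₀ for all t ∈ [0,ε₁] ∪ [2π−ε₁, 2π]; for every x ∈ (ε₁, 2π−ε₁) there is an integer k ≥ 1 with q^(k)(x) ≠ 0; Φ_q(2π) = A; and θ_q(2π) = α. -/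
open Real Set Matrix

noncomputable def pot (F : ℝ → ℝ) (t : ℝ) : ℝ :=
  deriv (deriv F) t / (2 * F t) - (deriv F t)^2 / (4 * (F t)^2) - 1 / (F t)^2

lemma exists_cs (y : ℝ) : ∃ c s : ℝ → ℝ, AnalyticOnNhd ℝ c univ ∧ AnalyticOnNhd ℝ s univ ∧
    (∀ t, HasDerivAt c (y * s t) t) ∧ (∀ t, HasDerivAt s (c t) t) ∧ c 0 = 1 ∧ s 0 = 0 ∧
    ∀ t, c t ^ 2 - y * s t ^ 2 = 1 := by
  rcases lt_trichotomy y 0 with h | h | h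
  · have hw : 0 < √(-y) := Real.sqrt_pos.2 (by linarith)
    have hw2 : √(-y) ^ 2 = -y := Real.sq_sqrt (by linarith)
    set w := √(-y)
    have hy : y = - w^2 := by linarith
    refine ⟨fun t => Real.cos (w * t), fun t => Real.sin (w * t) / w, ?_, ?_, ?_, ?_, by simp, by simp, ?_⟩
    · intro t _; fun_prop
    · intro t _; fun_prop (disch := exact hw.ne')
    · intro t
      have := (Real.hasDerivAt_cos (w*t)).comp t ((hasDerivAt_id t).const_mul w)
      refine this.congr_deriv ?_
      rw [hy]; simp; field_simp
    · intro t
      have := ((Real.hasDerivAt_sin (w*t)).comp t ((hasDerivAt_id t).const_mul w)).div_const w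
      refine this.congr_deriv ?_
      simp; field_simp
    · intro t
      have := Real.sin_sq_add_cos_sq (w*t)
      simp only [hy]; field_simp; linarith
  · subst h
    refine ⟨fun t => 1, fun t => t, ?_, ?_, ?_, ?_, by simp, by simp, by simp⟩
    · intro t _; fun_prop
    · intro t _; fun_prop
    · intro t; simpa using hasDerivAt_const t (1:ℝ)
    · intro t; exact hasDerivAt_id t
  · have hw : 0 < √(y) := Real.sqrt_pos.2 (by linarith)
    have hw2 : √(y) ^ 2 = y := Real.sq_sqrt (by linarith)
    set w := √(y)
    have hy : y = w^2 := by linarith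
    refine ⟨fun t => Real.cosh (w * t), fun t => Real.sinh (w * t) / w, ?_, ?_, ?_, ?_, by simp, by simp, ?_⟩
    · intro t _; simp only [Real.cosh_eq]; fun_prop (disch := norm_num)
    · intro t _; simp only [Real.sinh_eq]; fun_prop (disch := first | exact hw.ne' | norm_num)
    · intro t
      have := (Real.hasDerivAt_cosh (w*t)).comp t ((hasDerivAt_id t).const_mul w)
      refine this.congr_deriv ?_
      rw [hy]; simp; field_simp
    · intro t
      have := ((Real.hasDerivAt_sinh (w*t)).comp t ((hasDerivAt_id t).const_mul w)).div_const w
      refine this.congr_deriv ?_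
      simp; field_simp
    · intro t
      have := Real.cosh_sq (w*t)
      simp only [hy]; field_simp; linarith

lemma exists_cs' (y t0 : ℝ) : ∃ c s : ℝ → ℝ, (∀ t, AnalyticAt ℝ c t) ∧ (∀ t, AnalyticAt ℝ s t) ∧
    (∀ t, HasDerivAt c (y * s t) t) ∧ (∀ t, HasDerivAt s (c t) t) ∧ c t0 = 1 ∧ s t0 = 0 ∧
    ∀ t, c t ^ 2 - y * s t ^ 2 = 1 := by
  obtain ⟨c, s, hc, hs, hc', hs', hc0, hs0, hcs⟩ := exists_cs y
  refine ⟨fun t => c (t - t0), fun t => s (t - t0), ?_, ?_, ?_, ?_, by simp [hc0], by simp [hs0],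
    fun t => hcs _⟩
  · intro t
    exact (hc (t-t0) trivial).fun_comp (f := fun t => t - t0) (by fun_prop)
  · intro t
    exact (hs (t-t0) trivial).fun_comp (f := fun t => t - t0) (by fun_prop)
  · intro t; exact HasDerivAt.comp_sub_const t t0 (hc' _)
  · intro t; exact HasDerivAt.comp_sub_const t t0 (hs' _)

lemma exists_P (y t0 : ℝ) (A : Matrix (Fin 2) (Fin 2) ℝ) (hA : A.det = 1) :
    ∃ P : ℝ → ℝ, (∀ t, AnalyticAt ℝ P t) ∧ (∀ t, 0 < P t) ∧ (∀ t, pot P t = y) ∧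
      P t0 = A 0 0 ^ 2 + A 0 1 ^ 2 ∧ deriv P t0 = 2 * (A 0 0 * A 1 0 + A 0 1 * A 1 1) := by
  obtain ⟨c, s, hc, hs, hc', hs', hc0, hs0, hcs⟩ := exists_cs' y t0
  rw [Matrix.det_fin_two] at hA
  generalize A 0 0 = a at *
  generalize A 0 1 = b at *
  generalize A 1 0 = d at *
  generalize A 1 1 = e at *
  have hu : ∀ t, HasDerivAt (fun t => c t * a + s t * d) (y * s t * a + c t * d) t := fun t =>
    ((hc' t).mul_const a).add ((hs' t).mul_const d)
  have hv : ∀ t, HasDerivAt (fun t => c t * b + s t * e) (y * s t * b + c t * e) t := fun t =>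
    ((hc' t).mul_const b).add ((hs' t).mul_const e)
  have hu1 : ∀ t, HasDerivAt (fun t => y * s t * a + c t * d) (y * (c t * a + s t * d)) t := fun t =>
    (((hs' t).const_mul y |>.mul_const a).add ((hc' t).mul_const d)).congr_deriv (by ring)
  have hv1 : ∀ t, HasDerivAt (fun t => y * s t * b + c t * e) (y * (c t * b + s t * e)) t := fun t =>
    (((hs' t).const_mul y |>.mul_const b).add ((hc' t).mul_const e)).congr_deriv (by ring)
  have hW : ∀ t, (c t * a + s t * d) * (y * s t * b + c t * e)
      - (c t * b + s t * e) * (y * s t * a + c t * d) = 1 := fun t => by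
    linear_combination (a * e - b * d) * hcs t + hA
  have hua : ∀ t, AnalyticAt ℝ (fun t => c t * a + s t * d) t := by intro t; fun_prop
  have hva : ∀ t, AnalyticAt ℝ (fun t => c t * b + s t * e) t := by intro t; fun_prop
  obtain ⟨u, hud⟩ : ∃ u, u = fun t => c t * a + s t * d := ⟨_, rfl⟩
  obtain ⟨v, hvd⟩ : ∃ u, u = fun t => c t * b + s t * e := ⟨_, rfl⟩
  obtain ⟨u1, hu1d⟩ : ∃ u, u = fun t => y * s t * a + c t * d := ⟨_, rfl⟩
  obtain ⟨v1, hv1d⟩ : ∃ u, u = fun t => y * s t * b + c t * e := ⟨_, rfl⟩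
  have hu0 : u t0 = a := by simp [hud, hc0, hs0]
  have hv0 : v t0 = b := by simp [hvd, hc0, hs0]
  have hu10 : u1 t0 = d := by simp [hu1d, hc0, hs0]
  have hv10 : v1 t0 = e := by simp [hv1d, hc0, hs0]
  replace hu : ∀ t, HasDerivAt u (u1 t) t := by simpa only [hud, hu1d] using hu
  replace hv : ∀ t, HasDerivAt v (v1 t) t := by simpa only [hvd, hv1d] using hv
  replace hu1 : ∀ t, HasDerivAt u1 (y * u t) t := by simpa only [hud, hu1d] using hu1
  replace hv1 : ∀ t, HasDerivAt v1 (y * v t) t := by simpa only [hvd, hv1d] using hv1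
  replace hW : ∀ t, u t * v1 t - v t * u1 t = 1 := by simpa only [hud, hvd, hu1d, hv1d] using hW
  rw [← hud] at hua
  rw [← hvd] at hva
  clear hud hvd hu1d hv1d
  have hd : ∀ t, HasDerivAt (fun t => u t ^ 2 + v t ^ 2) (2 * (u t * u1 t + v t * v1 t)) t := fun t =>
    (((hu t).pow 2).add ((hv t).pow 2)).congr_deriv (by simp; ring)
  have hd2 : ∀ t, HasDerivAt (fun t => 2 * (u t * u1 t + v t * v1 t))
      (2 * (u1 t ^ 2 + v1 t ^ 2 + y * (u t ^ 2 + v t ^ 2))) t := fun t =>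
    ((((hu t).mul (hu1 t)).add ((hv t).mul (hv1 t))).const_mul 2).congr_deriv (by ring)
  have hd' : deriv (fun t => u t ^ 2 + v t ^ 2) = fun t => 2 * (u t * u1 t + v t * v1 t) :=
    funext fun t => (hd t).deriv
  have hpos : ∀ t, 0 < u t ^ 2 + v t ^ 2 := fun t => by
    by_contra h
    have h1 : u t = 0 := by nlinarith [sq_nonneg (u t), sq_nonneg (v t)]
    have h2 : v t = 0 := by nlinarith [sq_nonneg (u t), sq_nonneg (v t)]
    have := hW t
    rw [h1, h2] at this
    norm_num at this
  refine ⟨fun t => u t ^ 2 + v t ^ 2, fun t => by fun_prop, hpos, ?_, by simp [hu0, hv0], ?_⟩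
  · intro t
    simp only [pot, hd', (hd2 t).deriv]
    have := (hpos t).ne'
    field_simp
    linear_combination (4:ℝ) * (u t * v1 t - v t * u1 t + 1) * hW t
  · rw [hd', ← hu0, ← hv0, ← hu10, ← hv10]

lemma core (F : ℝ → ℝ) (hF : ContDiff ℝ (⊤ : ℕ∞) F) (hpos : ∀ t, 0 < F t)
    (A : Matrix (Fin 2) (Fin 2) ℝ) (hA : A.det = 1)
    (α : ℝ) (hrow : ∃ r : ℝ, 0 < r ∧ A 0 0 = r * Real.cos α ∧ A 0 1 = r * Real.sin α)
    (h0 : F 0 = 1) (h0' : deriv F 0 = 0) (h1 : F (2 * π) = A 0 0 ^ 2 + A 0 1 ^ 2)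
    (h1' : deriv F (2 * π) = 2 * (A 0 0 * A 1 0 + A 0 1 * A 1 1))
    (hint : ∫ t in (0:ℝ)..(2 * π), 1 / F t = α) :
    ∃ Φ : ℝ → Matrix (Fin 2) (Fin 2) ℝ, ∃ θ : ℝ → ℝ,
          IsFundMatrix (pot F) Φ ∧ IsArgLift Φ θ ∧ Φ (2 * π) = A ∧ θ (2 * π) = α ∧
          ∀ t, Φ t 0 0 ^ 2 + Φ t 0 1 ^ 2 = F t := by
  have hdF : ∀ t, HasDerivAt F (deriv F t) t := fun t =>
    (hF.differentiable (by simp) t).hasDerivAt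
  have hdF2 : ∀ t, HasDerivAt (deriv F) (deriv (deriv F) t) t := fun t =>
    (((contDiff_infty_iff_deriv.1 hF).2.differentiable (by simp)) t).hasDerivAt
  have hc : Continuous (fun t => 1 / F t) :=
    continuous_const.div hF.continuous fun t => (hpos t).ne'
  obtain ⟨θ, hθ⟩ : ∃ θ : ℝ → ℝ, θ = fun t => ∫ s in (0:ℝ)..t, 1 / F s := ⟨_, rfl⟩
  have hdθ : ∀ t, HasDerivAt θ (1 / F t) t := fun t => by
    rw [hθ]; exact hc.integral_hasStrictDerivAt 0 t |>.hasDerivAt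
  have hθ0 : θ 0 = 0 := by simp [hθ]
  have hθ1 : θ (2 * π) = α := by rw [hθ]; exact hint
  have hsq : ∀ t, √(F t) ^ 2 = F t := fun t => Real.sq_sqrt (hpos t).le
  have hsp : ∀ t, 0 < √(F t) := fun t => Real.sqrt_pos.2 (hpos t)
  obtain ⟨ρ, hρ⟩ : ∃ ρ : ℝ → ℝ, ρ = fun t => √(F t) := ⟨_, rfl⟩
  have hρs : ∀ t, √(F t) = ρ t := fun t => by rw [hρ]
  simp only [hρs] at hsq hsp
  have hdρ : ∀ t, HasDerivAt ρ (deriv F t / (2 * ρ t)) t := fun t => by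
    rw [hρ]; exact (hdF t).sqrt (hpos t).ne'
  have hdρ1 : ∀ t, HasDerivAt (fun t => deriv F t / (2 * ρ t))
      (deriv (deriv F) t / (2 * ρ t) - deriv F t ^ 2 / (4 * ρ t ^ 3)) t := fun t => by
    have := (hsp t).ne'
    refine ((hdF2 t).div ((hdρ t).const_mul 2) (by positivity)).congr_deriv ?_
    field_simp
    ring
  have hdi : ∀ t, HasDerivAt (fun t => 1 / ρ t) (- deriv F t / (2 * ρ t ^ 3)) t := fun t => by
    have := (hsp t).ne'
    refine ((hasDerivAt_const t (1:ℝ)).div (hdρ t) this).congr_deriv ?_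
    field_simp
    ring
  have hcos : ∀ t, HasDerivAt (fun t => Real.cos (θ t)) (-Real.sin (θ t) * (1 / F t)) t :=
    fun t => (hdθ t).cos
  have hsin : ∀ t, HasDerivAt (fun t => Real.sin (θ t)) (Real.cos (θ t) * (1 / F t)) t :=
    fun t => (hdθ t).sin
  have hA2 := hA
  rw [Matrix.det_fin_two] at hA2
  obtain ⟨r, hr, hr0, hr1⟩ := hrow
  have hρ1 : ρ (2 * π) = r := by
    rw [← hρs, h1, hr0, hr1]
    rw [show (r * Real.cos α) ^ 2 + (r * Real.sin α) ^ 2 = r ^ 2 by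
      linear_combination r ^ 2 * Real.sin_sq_add_cos_sq α]
    exact Real.sqrt_sq hr.le
  have hρ0 : ρ 0 = 1 := by rw [← hρs, h0]; simp
  refine ⟨fun t => !![ρ t * Real.cos (θ t), ρ t * Real.sin (θ t);
    deriv F t / (2 * ρ t) * Real.cos (θ t) - 1 / ρ t * Real.sin (θ t),
    deriv F t / (2 * ρ t) * Real.sin (θ t) + 1 / ρ t * Real.cos (θ t)], θ, ⟨?_, ?_⟩,
    ⟨?_, hθ0, ?_⟩, ?_, hθ1, ?_⟩
  · ext i j
    fin_cases i <;> fin_cases j <;> simp [hθ0, hρ0, h0']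
  · intro t i j
    have := (hsp t).ne'
    have hs := hsq t
    fin_cases i <;> fin_cases j <;> simp [Matrix.mul_apply, Fin.sum_univ_two]
    · refine ((hdρ t).mul (hcos t)).congr_deriv ?_
      rw [← hs]; field_simp; ring
    · refine ((hdρ t).mul (hsin t)).congr_deriv ?_
      rw [← hs]; field_simp
    · simp only [← one_div]
      refine (((hdρ1 t).mul (hcos t)).sub ((hdi t).mul (hsin t))).congr_deriv ?_
      rw [pot, ← hs]; field_simp; ring
    · simp only [← one_div]
      refine (((hdρ1 t).mul (hsin t)).add ((hdi t).mul (hcos t))).congr_deriv ?_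
      rw [pot, ← hs]; field_simp; ring
  · exact fun t _ => (hdθ t).continuousAt.continuousWithinAt
  · intro t _
    have : √((ρ t * Real.cos (θ t)) ^ 2 + (ρ t * Real.sin (θ t)) ^ 2) = ρ t := by
      rw [show (ρ t * Real.cos (θ t)) ^ 2 + (ρ t * Real.sin (θ t)) ^ 2 = ρ t ^ 2 by
        linear_combination ρ t ^ 2 * Real.sin_sq_add_cos_sq (θ t)]
      exact Real.sqrt_sq (hsp t).le
    simp [this]
  · have hr' := hr.ne'
    rw [hr0, hr1] at hA2 h1'
    have hsc := Real.sin_sq_add_cos_sq α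
    ext i j
    fin_cases i <;> fin_cases j <;> simp [hθ1, hρ1, hr0, hr1, h1'] <;> field_simp
    · linear_combination (Real.sin α) * hA2 + r * A 1 0 * hsc
    · linear_combination (-Real.cos α) * hA2 + r * A 1 1 * hsc
  · intro t
    simp
    linear_combination (F t) * Real.sin_sq_add_cos_sq (θ t) + hsq t * (Real.sin (θ t) ^ 2 + Real.cos (θ t) ^ 2)

lemma uniq (y : ℝ) (q p : ℝ → ℝ) (Φ Ψ : ℝ → Matrix (Fin 2) (Fin 2) ℝ)
    (hΦ : IsFundMatrix q Φ) (hΨ : IsFundMatrix p Ψ) (hq : ∀ t ∈ Icc 0 (2 * π), q t = y)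
    (hp : ∀ t ∈ Icc 0 (2 * π), p t = y) (t : ℝ) (ht : t ∈ Icc 0 (2 * π)) : Φ t = Ψ t := by
  obtain ⟨c, s, hc, hs, hc', hs', hc0, hs0, hcs⟩ := exists_cs' y 0
  have key : ∀ (q : ℝ → ℝ) (Φ : ℝ → Matrix (Fin 2) (Fin 2) ℝ), IsFundMatrix q Φ →
      (∀ t ∈ Icc 0 (2 * π), q t = y) → Φ t = !![c t, s t; y * s t, c t] := by
    intro q Φ hΦ hq
    have d0 : ∀ t j, HasDerivAt (fun s => Φ s 0 j) (Φ t 1 j) t := fun t j => by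
      simpa [Matrix.mul_apply, Fin.sum_univ_two] using hΦ.2 t 0 j
    have d1 : ∀ t j, HasDerivAt (fun s => Φ s 1 j) (q t * Φ t 0 j) t := fun t j => by
      simpa [Matrix.mul_apply, Fin.sum_univ_two] using hΦ.2 t 1 j
    have k1 : ∀ j, c t * Φ t 0 j - s t * Φ t 1 j = Φ 0 0 j := fun j => by
      have D : ∀ t, HasDerivAt (fun t => c t * Φ t 0 j - s t * Φ t 1 j)
          ((y - q t) * (s t * Φ t 0 j)) t := fun t =>
        (((hc' t).mul (d0 t j)).sub ((hs' t).mul (d1 t j))).congr_deriv (by ring)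
      have := constant_of_has_deriv_right_zero (a := 0) (b := 2 * π)
        (fun t _ => (D t).continuousAt.continuousWithinAt)
        (fun t ht => ((D t).congr_deriv
          (by rw [hq t ⟨ht.1, ht.2.le⟩]; ring : _ = (0:ℝ))).hasDerivWithinAt) t ht
      simpa [hc0, hs0] using this
    have k2 : ∀ j, c t * Φ t 1 j - y * s t * Φ t 0 j = Φ 0 1 j := fun j => by
      have D : ∀ t, HasDerivAt (fun t => c t * Φ t 1 j - y * s t * Φ t 0 j)
          ((q t - y) * (c t * Φ t 0 j)) t := fun t =>
        (((hc' t).mul (d1 t j)).sub (((hs' t).const_mul y).mul (d0 t j))).congr_deriv (by ring)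
      have := constant_of_has_deriv_right_zero (a := 0) (b := 2 * π)
        (fun t _ => (D t).continuousAt.continuousWithinAt)
        (fun t ht => ((D t).congr_deriv
          (by rw [hq t ⟨ht.1, ht.2.le⟩]; ring : _ = (0:ℝ))).hasDerivWithinAt) t ht
      simpa [hc0, hs0] using this
    have m0 : ∀ j, Φ t 0 j = c t * Φ 0 0 j + s t * Φ 0 1 j := fun j => by
      linear_combination (- Φ t 0 j) * hcs t + c t * k1 j + s t * k2 j
    have m1 : ∀ j, Φ t 1 j = y * s t * Φ 0 0 j + c t * Φ 0 1 j := fun j => by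
      linear_combination (- Φ t 1 j) * hcs t + y * s t * k1 j + c t * k2 j
    ext i j
    fin_cases i <;> fin_cases j <;> simp [m0, m1, hΦ.1]
  rw [key q Φ hΦ hq, key p Ψ hΨ hp]

lemma nonflat (q : ℝ → ℝ) (a b y : ℝ) (ha : ∀ x ∈ Ioo a b, AnalyticAt ℝ q x)
    (hc : Continuous q) (hab : a < b) (hqa : q a = y)
    (h : ¬ ∀ x ∈ Ioo a b, ∃ k : ℕ, 1 ≤ k ∧ iteratedDeriv k q x ≠ 0) :
    ∀ x ∈ Icc a b, q x = y := by
  push Not at h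
  obtain ⟨x, hx, hk⟩ := h
  have h1 : analyticOrderAt (fun t => q t - q x) x = ⊤ := by
    rw [ENat.eq_top_iff_forall_ge]
    intro m
    have hax := ha x hx
    rw [natCast_le_analyticOrderAt_iff_iteratedDeriv_eq_zero (by fun_prop)]
    intro i _
    rcases Nat.eq_zero_or_pos i with rfl | hi
    · simp
    · obtain ⟨i, rfl⟩ := Nat.exists_eq_succ_of_ne_zero hi.ne'
      rw [Nat.succ_eq_add_one, iteratedDeriv_succ']
      have : deriv (fun t => q t - q x) = deriv q := by ext; simp
      rw [this, ← iteratedDeriv_succ']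
      exact hk _ hi
  rw [analyticOrderAt_eq_top] at h1
  have h2 : EqOn q (fun _ => q x) (Ioo a b) :=
    AnalyticOnNhd.eqOn_of_preconnected_of_eventuallyEq (fun z hz => ha z hz)
      (fun z _ => analyticAt_const) isPreconnected_Ioo hx (by
        filter_upwards [h1] with z hz using sub_eq_zero.1 hz)
  have h3 : EqOn q (fun _ => q x) (Icc a b) := by
    rw [← closure_Ioo hab.ne]
    exact h2.closure hc continuous_const
  intro z hz
  rw [h3 hz, ← hqa, h3 (left_mem_Icc.2 hab.le)]

noncomputable def gbase (P Q : ℝ → ℝ) (ε n t : ℝ) : ℝ :=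
  expNegInvGlue (2 * π - ε - t) /
      (expNegInvGlue (2 * π - ε - t) + n * expNegInvGlue (t - ε)) * (1 / P t) +
    expNegInvGlue (t - ε) /
      (expNegInvGlue (t - ε) + n * expNegInvGlue (2 * π - ε - t)) * (1 / Q t)

lemma den_pos (ε n t : ℝ) (hε : ε < π) (hn : 0 < n) :
    0 < expNegInvGlue (2 * π - ε - t) + n * expNegInvGlue (t - ε) ∧
    0 < expNegInvGlue (t - ε) + n * expNegInvGlue (2 * π - ε - t) := by
  have a := expNegInvGlue.nonneg (2 * π - ε - t)
  have b := expNegInvGlue.nonneg (t - ε)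
  rcases le_or_gt t ε with h | h
  · have := expNegInvGlue.pos_of_pos (x := 2 * π - ε - t) (by linarith)
    constructor <;> positivity
  · have := expNegInvGlue.pos_of_pos (x := t - ε) (by linarith)
    constructor <;> positivity

lemma gbase_contDiff (P Q : ℝ → ℝ) (ε n : ℝ) (hε : ε < π) (hn : 0 < n)
    (hP : ContDiff ℝ (⊤ : ℕ∞) P) (hQ : ContDiff ℝ (⊤ : ℕ∞) Q) (hPp : ∀ t, 0 < P t) (hQp : ∀ t, 0 < Q t) :
    ContDiff ℝ (⊤ : ℕ∞) (gbase P Q ε n) := by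
  have h0 : ContDiff ℝ (⊤ : ℕ∞) (fun t => expNegInvGlue (t - ε)) :=
    expNegInvGlue.contDiff.comp (contDiff_id.sub contDiff_const)
  have h1 : ContDiff ℝ (⊤ : ℕ∞) (fun t => expNegInvGlue (2 * π - ε - t)) :=
    expNegInvGlue.contDiff.comp (contDiff_const.sub contDiff_id)
  exact ((h1.div (h1.add (contDiff_const.mul h0)) fun t => (den_pos ε n t hε hn).1.ne').mul
    (contDiff_const.div hP fun t => (hPp t).ne')).add
    ((h0.div (h0.add (contDiff_const.mul h1)) fun t => (den_pos ε n t hε hn).2.ne').mul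
    (contDiff_const.div hQ fun t => (hQp t).ne'))

lemma analytic_glue (x : ℝ) (hx : 0 < x) : AnalyticAt ℝ expNegInvGlue x := by
  have : AnalyticAt ℝ (fun x : ℝ => Real.exp (-x⁻¹)) x := by
    fun_prop (disch := exact hx.ne')
  refine this.congr ?_
  filter_upwards [lt_mem_nhds hx] with z hz
  simp [expNegInvGlue, not_le.2 hz]

lemma small_int (P Q : ℝ → ℝ) (hP : ContDiff ℝ (⊤ : ℕ∞) P) (hQ : ContDiff ℝ (⊤ : ℕ∞) Q)
    (hPp : ∀ t, 0 < P t) (hQp : ∀ t, 0 < Q t) (α : ℝ) (hα : 0 < α) :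
    ∃ ε n : ℝ, 0 < ε ∧ ε < π ∧ 0 < n ∧ ∫ t in (0:ℝ)..(2 * π), gbase P Q ε n t < α := by
  have hεk : ∀ k : ℕ, 0 < 1 / ((k:ℝ) + 1) ∧ 1 / ((k:ℝ) + 1) < π := fun k => by
    refine ⟨by positivity, ?_⟩
    have : 1 / ((k:ℝ) + 1) ≤ 1 := by
      rw [div_le_one (by positivity)]; linarith [Nat.cast_nonneg (α := ℝ) k]
    linarith [Real.pi_gt_three]
  have hcP : Continuous fun t => 1 / P t :=
    continuous_const.div hP.continuous fun t => (hPp t).ne'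
  have hcQ : Continuous fun t => 1 / Q t :=
    continuous_const.div hQ.continuous fun t => (hQp t).ne'
  have key : Filter.Tendsto (fun k : ℕ => ∫ t in (0:ℝ)..(2 * π),
      gbase P Q (1 / ((k:ℝ) + 1)) ((k:ℝ) + 1) t) Filter.atTop
      (nhds (∫ t in (0:ℝ)..(2 * π), (0:ℝ))) := by
    refine intervalIntegral.tendsto_integral_filter_of_dominated_convergence
      (fun t => 1 / P t + 1 / Q t) ?_ ?_ ?_ ?_
    · refine Filter.Eventually.of_forall fun k => ?_
      exact (gbase_contDiff P Q _ _ (hεk k).2 (by positivity) hP hQ hPp hQp).continuous.aestronglyMeasurable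
    · refine Filter.Eventually.of_forall fun k => Filter.Eventually.of_forall fun t _ => ?_
      obtain ⟨d1, d2⟩ := den_pos _ ((k:ℝ) + 1) t (hεk k).2 (by positivity)
      have a := expNegInvGlue.nonneg (2 * π - 1 / ((k:ℝ) + 1) - t)
      have b := expNegInvGlue.nonneg (t - 1 / ((k:ℝ) + 1))
      have p := hPp t
      have q := hQp t
      have hk : 0 < (k:ℝ) + 1 := by positivity
      unfold gbase
      generalize 1 / ((k:ℝ) + 1) = ε at *
      generalize (k:ℝ) + 1 = n at *
      rw [Real.norm_eq_abs, abs_of_nonneg (by positivity)]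
      refine add_le_add (mul_le_of_le_one_left (by positivity) ?_)
        (mul_le_of_le_one_left (by positivity) ?_)
      · rw [div_le_one d1]; nlinarith
      · rw [div_le_one d2]; nlinarith
    · exact (hcP.add hcQ).intervalIntegrable _ _
    · have hne : ∀ᵐ t : ℝ, t ≠ 2 * π := by
        simp [MeasureTheory.ae_iff]
      filter_upwards [hne] with t ht ht2
      rw [uIoc_of_le (by positivity)] at ht2
      have ht3 : t < 2 * π := lt_of_le_of_ne ht2.2 ht
      have hε := tendsto_one_div_add_atTop_nhds_zero_nat (𝕜 := ℝ)
      have hn : Filter.Tendsto (fun k : ℕ => (k:ℝ) + 1) Filter.atTop Filter.atTop :=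
        Filter.tendsto_atTop_add_const_right _ _ tendsto_natCast_atTop_atTop
      have hce : Continuous expNegInvGlue := (expNegInvGlue.contDiff (n := 0)).continuous
      have h0 : Filter.Tendsto (fun k : ℕ => expNegInvGlue (t - 1 / ((k:ℝ) + 1))) Filter.atTop
          (nhds (expNegInvGlue (t - 0))) :=
        (hce.tendsto _).comp (hε.const_sub t)
      have h1 : Filter.Tendsto (fun k : ℕ => expNegInvGlue (2 * π - 1 / ((k:ℝ) + 1) - t)) Filter.atTop
          (nhds (expNegInvGlue (2 * π - 0 - t))) :=
        (hce.tendsto _).comp ((hε.const_sub _).sub_const t)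
      have p0 : 0 < expNegInvGlue (t - 0) := expNegInvGlue.pos_of_pos (by linarith [ht2.1])
      have p1 : 0 < expNegInvGlue (2 * π - 0 - t) := expNegInvGlue.pos_of_pos (by linarith)
      have r1 := h1.div_atTop (h1.add_atTop (hn.atTop_mul_pos p0 h0))
      have r0 := h0.div_atTop (h0.add_atTop (hn.atTop_mul_pos p1 h1))
      have := (r1.mul_const (1 / P t)).add (r0.mul_const (1 / Q t))
      simpa [gbase] using this
  simp only [intervalIntegral.integral_zero] at key
  obtain ⟨k, hk⟩ := (key.eventually (gt_mem_nhds hα)).exists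
  exact ⟨_, _, (hεk k).1, (hεk k).2, by positivity, hk⟩

lemma glue (P Q : ℝ → ℝ) (hPa : ∀ t, AnalyticAt ℝ P t) (hQa : ∀ t, AnalyticAt ℝ Q t)
    (hPp : ∀ t, 0 < P t) (hQp : ∀ t, 0 < Q t) (α : ℝ) (hα : 0 < α) :
    ∃ ε : ℝ, 0 < ε ∧ ε < π ∧ ∃ F : ℝ → ℝ → ℝ,
      (∀ k, ContDiff ℝ (⊤ : ℕ∞) (F k) ∧ (∀ t, 0 < F k t) ∧ (∀ t ≤ ε, F k t = P t) ∧
        (∀ t, 2 * π - ε ≤ t → F k t = Q t) ∧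
        (∀ x ∈ Ioo ε (2 * π - ε), AnalyticAt ℝ (F k) x) ∧
        ∫ t in (0:ℝ)..(2 * π), 1 / F k t = α) ∧
      ∃ t ∈ Icc 0 (2 * π), F 0 t ≠ F 1 t := by
  have hP : ContDiff ℝ (⊤ : ℕ∞) P := contDiff_iff_contDiffAt.2 fun t => (hPa t).contDiffAt
  have hQ : ContDiff ℝ (⊤ : ℕ∞) Q := contDiff_iff_contDiffAt.2 fun t => (hQa t).contDiffAt
  obtain ⟨ε, n, hε0, hε, hn, hI⟩ := small_int P Q hP hQ hPp hQp α hα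
  have hB := gbase_contDiff P Q ε n hε hn hP hQ hPp hQp
  have c0 : ContDiff ℝ (⊤ : ℕ∞) (fun t => expNegInvGlue (t - ε)) :=
    expNegInvGlue.contDiff.comp (contDiff_id.sub contDiff_const)
  have c1 : ContDiff ℝ (⊤ : ℕ∞) (fun t => expNegInvGlue (2 * π - ε - t)) :=
    expNegInvGlue.contDiff.comp (contDiff_const.sub contDiff_id)
  have n0 := fun t => expNegInvGlue.nonneg (t - ε)
  have n1 := fun t => expNegInvGlue.nonneg (2 * π - ε - t)
  obtain ⟨b, hb⟩ : ∃ b : ℝ → ℝ → ℝ, b = fun k t => expNegInvGlue (t - ε) *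
    expNegInvGlue (2 * π - ε - t) * Real.exp (k * t) := ⟨_, rfl⟩
  have hbc : ∀ k, ContDiff ℝ (⊤ : ℕ∞) (b k) := fun k => by
    rw [hb]
    exact (c0.mul c1).mul (Real.contDiff_exp.comp (contDiff_const.mul contDiff_id))
  have hbn : ∀ k t, 0 ≤ b k t := fun k t => by
    rw [hb]
    exact mul_nonneg (mul_nonneg (n0 t) (n1 t)) (Real.exp_pos _).le
  have hbp : ∀ k, ∀ t ∈ Ioo ε (2 * π - ε), 0 < b k t := fun k t ht => by
    rw [hb]
    exact mul_pos (mul_pos (expNegInvGlue.pos_of_pos (by linarith [ht.1]))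
      (expNegInvGlue.pos_of_pos (by linarith [ht.2]))) (Real.exp_pos _)
  have hπ : π ∈ Ioo ε (2 * π - ε) := ⟨hε, by linarith⟩
  have hJ : ∀ k, 0 < ∫ t in (0:ℝ)..(2 * π), b k t := fun k =>
    intervalIntegral.integral_pos (by positivity) (hbc k).continuous.continuousOn
      (fun t _ => hbn k t) ⟨π, ⟨by positivity, by linarith [Real.pi_pos]⟩, hbp k π hπ⟩
  obtain ⟨m, hm⟩ : ∃ m : ℝ → ℝ, m = fun k => (α - ∫ t in (0:ℝ)..(2 * π), gbase P Q ε n t) /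
    ∫ t in (0:ℝ)..(2 * π), b k t := ⟨_, rfl⟩
  have hmp : ∀ k, 0 < m k := fun k => by
    rw [hm]; exact div_pos (by linarith) (hJ k)
  have gl : ∀ t ≤ ε, gbase P Q ε n t = 1 / P t := fun t ht => by
    have h0 : expNegInvGlue (t - ε) = 0 := expNegInvGlue.zero_of_nonpos (by linarith)
    have h1 := expNegInvGlue.pos_of_pos (x := 2 * π - ε - t) (by linarith)
    rw [gbase, h0]; field_simp; simp
  have gr : ∀ t, 2 * π - ε ≤ t → gbase P Q ε n t = 1 / Q t := fun t ht => by
    have h0 : expNegInvGlue (2 * π - ε - t) = 0 := expNegInvGlue.zero_of_nonpos (by linarith)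
    have h1 := expNegInvGlue.pos_of_pos (x := t - ε) (by linarith)
    rw [gbase, h0]; field_simp; simp; ring
  have gp : ∀ t, 0 ≤ gbase P Q ε n t := fun t => by
    obtain ⟨d1, d2⟩ := den_pos ε n t hε hn
    have := n0 t
    have := n1 t
    have := hPp t
    have := hQp t
    unfold gbase
    positivity
  have bl : ∀ k, ∀ t ≤ ε, b k t = 0 := fun k t ht => by
    simp [hb, expNegInvGlue.zero_of_nonpos (x := t - ε) (by linarith)]
  have br : ∀ k t, 2 * π - ε ≤ t → b k t = 0 := fun k t ht => by
    simp [hb, expNegInvGlue.zero_of_nonpos (x := 2 * π - ε - t) (by linarith)]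
  have Gp : ∀ k t, 0 < gbase P Q ε n t + m k * b k t := fun k t => by
    rcases le_or_gt t ε with h | h
    · rw [gl t h, bl k t h]; have := hPp t; simpa using this
    rcases le_or_gt (2 * π - ε) t with h' | h'
    · rw [gr t h', br k t h']; have := hQp t; simpa using this
    · have := mul_pos (hmp k) (hbp k t ⟨h, h'⟩)
      linarith [gp t]
  refine ⟨ε, hε0, hε, fun k t => 1 / (gbase P Q ε n t + m k * b k t), fun k => ⟨?_, ?_, ?_, ?_, ?_, ?_⟩, ?_⟩
  · exact contDiff_const.div (hB.add (contDiff_const.mul (hbc k))) fun t => (Gp k t).ne'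
  · intro t; exact one_div_pos.2 (Gp k t)
  · intro t ht; simp [gl t ht, bl k t ht]
  · intro t ht; simp [gr t ht, br k t ht]
  · intro t ht
    have a0 : AnalyticAt ℝ (fun t => expNegInvGlue (t - ε)) t :=
      (analytic_glue (t - ε) (by linarith [ht.1])).fun_comp (f := fun t => t - ε) (by fun_prop)
    have a1 : AnalyticAt ℝ (fun t => expNegInvGlue (2 * π - ε - t)) t :=
      (analytic_glue (2 * π - ε - t) (by linarith [ht.2])).fun_comp
        (f := fun t => 2 * π - ε - t) (by fun_prop)
    obtain ⟨d1, d2⟩ := den_pos ε n t hε hn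
    have hpa := hPa t
    have hqa := hQa t
    have ag : AnalyticAt ℝ (gbase P Q ε n) t :=
      ((a1.div (a1.add (analyticAt_const.mul a0)) d1.ne').mul
        (analyticAt_const.div hpa (hPp t).ne')).add
      ((a0.div (a0.add (analyticAt_const.mul a1)) d2.ne').mul
        (analyticAt_const.div hqa (hQp t).ne'))
    have ab : AnalyticAt ℝ (b k) t := by
      rw [hb]; fun_prop
    exact analyticAt_const.div (ag.add (analyticAt_const.mul ab)) (Gp k t).ne'
  · simp only [one_div_one_div]
    rw [intervalIntegral.integral_add (hB.continuous.intervalIntegrable _ _)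
      (((hbc k).continuous.intervalIntegrable _ _).const_mul (m k)),
      intervalIntegral.integral_const_mul, hm]
    have := (hJ k).ne'
    field_simp
    ring
  · by_contra hcon
    push Not at hcon
    have key : ∀ t ∈ Ioo ε (2 * π - ε), m 0 = m 1 * Real.exp t := fun t ht => by
      have h := hcon t ⟨by linarith [ht.1], by linarith [ht.2]⟩
      have h2 := (by simpa only [one_div, _root_.inv_inj] using h : gbase P Q ε n t + m 0 * b 0 t = gbase P Q ε n t + m 1 * b 1 t)
      have p0 := expNegInvGlue.pos_of_pos (x := t - ε) (by linarith [ht.1])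
      have p1 := expNegInvGlue.pos_of_pos (x := 2 * π - ε - t) (by linarith [ht.2])
      simp only [hb, zero_mul, one_mul, Real.exp_zero] at h2
      have h3 : (expNegInvGlue (t - ε) * expNegInvGlue (2 * π - ε - t)) * (m 0 - m 1 * Real.exp t) = 0 := by
        linarith
      rcases mul_eq_zero.1 h3 with h4 | h4
      · exact absurd h4 (mul_pos p0 p1).ne'
      · linarith
    have k1 := key π hπ
    have k2 := key ((ε + π) / 2) ⟨by linarith, by linarith⟩
    have k3 : Real.exp π = Real.exp ((ε + π) / 2) :=
      mul_left_cancel₀ (hmp 1).ne' (by rw [← k1, ← k2])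
    have := Real.exp_injective k3
    linarith

lemma pot_congr (F P : ℝ → ℝ) (t : ℝ) (h : F =ᶠ[nhds t] P) : pot F t = pot P t := by
  have h1 : deriv F =ᶠ[nhds t] deriv P := h.deriv
  rw [pot, pot, h.eq_of_nhds, h1.eq_of_nhds, h1.deriv_eq]

/-- intermediate claim in Proposition 3.6. Every element of `G₀` —
encoded by `A ∈ SL(2,ℝ)` and a compatible winding `α > 0` — is the lifted monodromy of a
smooth potential `q` which is constant equal to a prescribed value `y₀` near the
endpoints of `[0,2π]` and nowhere flat in between. -/
theorem stmt_14 (A : Matrix (Fin 2) (Fin 2) ℝ) (hA : A.det = 1)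
    (α : ℝ) (hα : 0 < α)
    (hrow : ∃ r : ℝ, 0 < r ∧ A 0 0 = r * Real.cos α ∧ A 0 1 = r * Real.sin α)
    (y₀ : ℝ) :
    ∃ ε₁ : ℝ, 0 < ε₁ ∧ ε₁ < π ∧
      ∃ q : ℝ → ℝ, ContDiff ℝ (⊤ : ℕ∞) q ∧
        (∀ t ∈ Icc (0:ℝ) ε₁ ∪ Icc (2 * π - ε₁) (2 * π), q t = y₀) ∧
        (∀ x ∈ Ioo ε₁ (2 * π - ε₁), ∃ k : ℕ, 1 ≤ k ∧ iteratedDeriv k q x ≠ 0) ∧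
        ∃ Φ : ℝ → Matrix (Fin 2) (Fin 2) ℝ, ∃ θ : ℝ → ℝ,
          IsFundMatrix q Φ ∧ IsArgLift Φ θ ∧ Φ (2 * π) = A ∧ θ (2 * π) = α := by
  obtain ⟨P, hPa, hPp, hPq, hP0, hP0'⟩ := exists_P y₀ 0 1 (by simp)
  obtain ⟨Q, hQa, hQp, hQq, hQ0, hQ0'⟩ := exists_P y₀ (2 * π) A hA
  obtain ⟨ε, hε0, hε, F, hF, t0, ht0, hne⟩ := glue P Q hPa hQa hPp hQp α hα
  have hpi := Real.pi_pos
  have hqs : ∀ k, ContDiff ℝ (⊤ : ℕ∞) (pot (F k)) := fun k => by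
    obtain ⟨f1, f2, -⟩ := hF k
    have g1 := (contDiff_infty_iff_deriv.1 f1).2
    have g2 := (contDiff_infty_iff_deriv.1 g1).2
    exact ((g2.div (contDiff_const.mul f1) fun t => by have := f2 t; positivity).sub
      ((g1.pow 2).div (contDiff_const.mul (f1.pow 2)) fun t => by have := f2 t; positivity)).sub
      (contDiff_const.div (f1.pow 2) fun t => by have := f2 t; positivity)
  have el : ∀ k, ∀ t < ε, F k =ᶠ[nhds t] P := fun k t ht => by
    filter_upwards [gt_mem_nhds ht] with z hz using (hF k).2.2.1 z hz.le
  have er : ∀ k, ∀ t > 2 * π - ε, F k =ᶠ[nhds t] Q := fun k t ht => by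
    filter_upwards [lt_mem_nhds ht] with z hz using (hF k).2.2.2.1 z hz.le
  have ql : ∀ k, ∀ t ≤ ε, pot (F k) t = y₀ := fun k t ht => by
    have : EqOn (pot (F k)) (fun _ => y₀) (closure (Iio ε)) :=
      EqOn.closure (fun z hz => by rw [pot_congr _ _ z (el k z hz), hPq])
        (hqs k).continuous continuous_const
    rw [closure_Iio] at this
    exact this ht
  have qr : ∀ k, ∀ t ≥ 2 * π - ε, pot (F k) t = y₀ := fun k t ht => by
    have : EqOn (pot (F k)) (fun _ => y₀) (closure (Ioi (2 * π - ε))) :=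
      EqOn.closure (fun z hz => by rw [pot_congr _ _ z (er k z hz), hQq])
        (hqs k).continuous continuous_const
    rw [closure_Ioi] at this
    exact this ht
  have hcore := fun k => core (F k) (hF k).1 (hF k).2.1 A hA α hrow
    (by rw [(el k 0 hε0).eq_of_nhds, hP0]; simp)
    (by rw [(el k 0 hε0).deriv_eq, hP0']; simp)
    (by rw [(er k (2 * π) (by linarith)).eq_of_nhds, hQ0])
    (by rw [(er k (2 * π) (by linarith)).deriv_eq, hQ0'])
    (hF k).2.2.2.2.2
  have hqa : ∀ k, ∀ x ∈ Ioo ε (2 * π - ε), AnalyticAt ℝ (pot (F k)) x := fun k x hx => by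
    have f1 := (hF k).2.2.2.2.1 x hx
    have f2 := (hF k).2.1 x
    have g1 := f1.deriv
    have g2 := g1.deriv
    exact ((g2.div (analyticAt_const.mul f1) (mul_pos two_pos f2).ne').sub
      ((g1.pow 2).div (analyticAt_const.mul (f1.pow 2)) (by simp [f2.ne']))).sub
      (analyticAt_const.div (f1.pow 2) (by simp [f2.ne']))
  have hex : ∃ k, ∀ x ∈ Ioo ε (2 * π - ε), ∃ j : ℕ, 1 ≤ j ∧ iteratedDeriv j (pot (F k)) x ≠ 0 := by
    by_contra hcon
    rw [not_exists] at hcon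
    have hy : ∀ k, ∀ t ∈ Icc 0 (2 * π), pot (F k) t = y₀ := fun k t ht => by
      rcases le_or_gt t ε with h | h
      · exact ql k t h
      rcases le_or_gt (2 * π - ε) t with h' | h'
      · exact qr k t h'
      · exact nonflat (pot (F k)) ε (2 * π - ε) y₀ (hqa k) (hqs k).continuous (by linarith)
          (ql k ε le_rfl) (hcon k) t ⟨h.le, h'.le⟩
    obtain ⟨Φ, _, hΦ, _, _, _, hΦF⟩ := hcore 0
    obtain ⟨Ψ, _, hΨ, _, _, _, hΨF⟩ := hcore 1
    apply hne
    rw [← hΦF, ← hΨF, uniq y₀ _ _ Φ Ψ hΦ hΨ (hy 0) (hy 1) t0 ht0]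
  obtain ⟨k, hk⟩ := hex
  obtain ⟨Φ, θ, h1, h2, h3, h4, -⟩ := hcore k
  refine ⟨ε, hε0, hε, pot (F k), hqs k, ?_, hk, Φ, θ, h1, h2, h3, h4⟩
  rintro t (ht | ht)
  · exact ql k t ht.2
  · exact qr k t ht.1
end
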